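/- arXiv:1406.0969 — 3 statements merged into one kernel-verified Lean document; each statement's English description precedes it below -/
import Mathlib

section
/- Let 0 < ν ≤ 1/2. Then there exists n₀ such that for all n ≥ n₀ the Hankel determinant Δ_n is nonzero (so the polynomial P_n exists), and the rescaled zeros of P_n equidistribute according to the density ψ: for every bounded continuous function f : ℂ → ℝ, lim_{n→∞} (1/n) ∑_z f(z/(iπn)) = ∫_{−1}^1 f(x) ψ(x) dx, where the sum is over the n roots z of P_n in ℂ counted with multiplicity. -/
open MeasureTheory Filter Real

/-- The limiting moments `m_j = 2^j Γ((1+ν+j)/2)/Γ((1+ν−j)/2)` of the Bessel weight `J_ν`. -/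
noncomputable def besselMoment (ν : ℝ) (j : ℕ) : ℝ :=
  2 ^ j * Real.Gamma ((1 + ν + j) / 2) / Real.Gamma ((1 + ν - j) / 2)

/-- The Hankel determinant `Δ_n = det [m_{i+j}]_{i,j=0}^{n-1}`. -/
noncomputable def hankelDet (ν : ℝ) (n : ℕ) : ℝ :=
  Matrix.det (Matrix.of fun i j : Fin n => besselMoment ν (i + j))

/-- `P` is the monic polynomial of degree `n` orthogonal with respect to the Bessel
weight `J_ν` in the regularized sense of Asheim–Huybrechs: its coefficients `c_k`
satisfy `∑_{k=0}^n c_k m_{j+k} = 0` for `j = 0, …, n-1`. -/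
def IsBesselOP (ν : ℝ) (n : ℕ) (P : Polynomial ℂ) : Prop :=
  P.Monic ∧ P.natDegree = n ∧
    ∀ j < n, ∑ k ∈ Finset.range (n + 1), P.coeff k * (besselMoment ν (j + k) : ℂ) = 0

/-- The equilibrium density `ψ(x) = (1/π) log((1+√(1-x²))/|x|)`. -/
noncomputable def psiDens (x : ℝ) : ℝ :=
  (1 / π) * Real.log ((1 + Real.sqrt (1 - x ^ 2)) / |x|)


/-! ### A Beta integral -/

lemma beta_cosh (j : ℕ) (a : ℝ) (h1 : -(j + 1 : ℝ) < a) (h2 : a < j + 1) :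
    Integrable (fun τ : ℝ => Real.exp (a * τ) / Real.cosh τ ^ (j + 1)) ∧
    ∫ τ : ℝ, Real.exp (a * τ) / Real.cosh τ ^ (j + 1)
      = 2 ^ j * Real.Gamma ((1 + a + j) / 2) * Real.Gamma ((1 - a + j) / 2) / (j.factorial : ℝ) := by
  set s : ℝ := (1 + a + j) / 2 with hs
  set t : ℝ := (1 - a + j) / 2 with ht
  have hs0 : 0 < s := by rw [hs]; linarith
  have ht0 : 0 < t := by rw [ht]; linarith
  set f : ℝ → ℝ := fun τ => Real.sigmoid (2 * τ) with hf
  have himg : f '' Set.univ = Set.Ioo 0 1 := by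
    rw [Set.image_univ, ← Real.range_sigmoid]
    ext x; constructor
    · rintro ⟨y, rfl⟩; exact ⟨2 * y, rfl⟩
    · rintro ⟨y, rfl⟩; exact ⟨y / 2, by simp [hf, mul_div_cancel₀]⟩
  have hder : ∀ x ∈ Set.univ, HasDerivWithinAt f
      (2 * (Real.sigmoid (2 * x) * (1 - Real.sigmoid (2 * x)))) Set.univ x := by
    intro x _
    have := (Real.hasDerivAt_sigmoid (2 * x)).comp x ((hasDerivAt_id x).const_mul 2)
    refine (this.congr_deriv ?_).hasDerivWithinAt
    simp; ring
  have hinj : Set.InjOn f Set.univ := by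
    intro x _ y _ hxy
    have := Real.sigmoid_injective hxy
    simpa using this
  set g : ℝ → ℝ := fun u => u ^ (s - 1) * (1 - u) ^ (t - 1) with hg
  have hpt : ∀ x : ℝ, |2 * (Real.sigmoid (2 * x) * (1 - Real.sigmoid (2 * x)))| • g (f x)
      = 2 * (1 / 2 ^ (j + 1)) * (Real.exp (a * x) / Real.cosh x ^ (j + 1)) := by
    intro x
    have hc : 0 < Real.cosh x := Real.cosh_pos x
    have hsig : Real.sigmoid (2 * x) = Real.exp x / (2 * Real.cosh x) := by
      rw [Real.sigmoid_def, Real.cosh_eq]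
      have e1 : Real.exp (-(2 * x)) = Real.exp (-x) / Real.exp x := by
        rw [← Real.exp_sub]; ring_nf
      rw [e1]
      have := Real.exp_pos x
      have := Real.exp_pos (-x)
      field_simp
    have hsig' : 1 - Real.sigmoid (2 * x) = Real.exp (-x) / (2 * Real.cosh x) := by
      rw [hsig]
      rw [eq_div_iff (by positivity), sub_mul, div_mul_cancel₀ _ (by positivity), Real.cosh_eq]
      ring
    have p1 := Real.sigmoid_pos (2 * x)
    have p2 : 0 < 1 - Real.sigmoid (2 * x) := by linarith [Real.sigmoid_lt_one (2 * x)]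
    rw [abs_of_pos (by positivity), smul_eq_mul]
    simp only [hg, hf]
    have e : 2 * (Real.sigmoid (2 * x) * (1 - Real.sigmoid (2 * x))) *
        (Real.sigmoid (2 * x) ^ (s - 1) * (1 - Real.sigmoid (2 * x)) ^ (t - 1))
        = 2 * (Real.sigmoid (2 * x) ^ s * (1 - Real.sigmoid (2 * x)) ^ t) := by
      rw [Real.rpow_sub_one p1.ne', Real.rpow_sub_one p2.ne']
      field_simp
    rw [e, hsig', hsig, Real.div_rpow (Real.exp_pos _).le (by positivity),
      Real.div_rpow (Real.exp_pos _).le (by positivity), ← Real.exp_mul, ← Real.exp_mul,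
      div_mul_div_comm, ← Real.exp_add, ← Real.rpow_add (by positivity)]
    have e2 : s + t = ((j + 1 : ℕ) : ℝ) := by rw [hs, ht]; push_cast; ring
    have e3 : x * s + -x * t = a * x := by rw [hs, ht]; ring
    rw [e2, e3, Real.rpow_natCast, mul_pow]
    field_simp
  have hconv := Complex.betaIntegral_convergent (u := s) (v := t) (by simpa) (by simpa)
  have hgint : IntegrableOn (fun x : ℝ => (g x : ℂ)) (Set.Ioo 0 1) := by
    rw [intervalIntegrable_iff_integrableOn_Ioo_of_le zero_le_one] at hconv
    refine hconv.congr_fun ?_ measurableSet_Ioo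
    intro x hx
    simp only [hg]
    push_cast
    rw [Complex.ofReal_cpow hx.1.le, Complex.ofReal_cpow (by linarith [hx.2])]
    push_cast; rfl
  have hgint' : IntegrableOn g (Set.Ioo 0 1) := by
    have := hgint.re
    change Integrable _ _
    simpa using this
  have hval : ∫ x in Set.Ioo (0:ℝ) 1, g x = Real.Gamma s * Real.Gamma t / Real.Gamma (s + t) := by
    have h := ProbabilityTheory.beta_eq_betaIntegralReal s t hs0 ht0
    rw [ProbabilityTheory.beta] at h
    rw [h, Complex.betaIntegral, intervalIntegral.integral_of_le zero_le_one,
      integral_Ioc_eq_integral_Ioo]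
    have : ∫ (x : ℝ) in Set.Ioo 0 1, (x : ℂ) ^ ((s : ℂ) - 1) * (1 - (x : ℂ)) ^ ((t : ℂ) - 1)
        = ∫ (x : ℝ) in Set.Ioo 0 1, (g x : ℂ) := by
      refine setIntegral_congr_fun measurableSet_Ioo ?_
      intro x hx
      simp only [hg]
      push_cast
      rw [Complex.ofReal_cpow hx.1.le, Complex.ofReal_cpow (by linarith [hx.2])]
      push_cast; rfl
    rw [this, integral_complex_ofReal, Complex.ofReal_re]
  have I1 := (integrableOn_image_iff_integrableOn_abs_deriv_smul MeasurableSet.univ hder hinj g)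
  have I2 := integral_image_eq_integral_abs_deriv_smul MeasurableSet.univ hder hinj g
  rw [himg] at I1 I2
  simp only [hpt] at I1 I2
  rw [hval] at I2
  have I1' := I1.1 hgint'
  rw [integrableOn_univ] at I1'
  constructor
  · have := I1'.const_mul ((2 : ℝ) ^ j)
    refine this.congr (ae_of_all _ fun x => ?_)
    simp only
    rw [pow_succ 2 j]
    field_simp
  · rw [setIntegral_univ, integral_const_mul] at I2
    have e2 : s + t = (j : ℝ) + 1 := by rw [hs, ht]; ring
    rw [e2, Real.Gamma_nat_eq_factorial] at I2
    rw [pow_succ 2 j] at I2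
    field_simp at I2 ⊢
    linarith


/-! ### The base weight and its (Meixner–Pollaczek) orthogonal polynomials -/

open Polynomial in
/-- Monic orthogonal polynomials for `1/(π cosh y)`. -/
noncomputable def mp : ℕ → Polynomial ℝ
  | 0 => 1
  | 1 => Polynomial.X
  | (n + 2) => Polynomial.X * mp (n + 1) - Polynomial.C ((π / 2 * ((n : ℝ) + 1)) ^ 2) * mp n

/-- The base weight. -/
noncomputable def wBase (y : ℝ) : ℝ := 1 / (π * Real.cosh y)

lemma wBase_pos (y : ℝ) : 0 < wBase y := by
  have := Real.cosh_pos y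
  unfold wBase; positivity

lemma wBase_cont : Continuous wBase := by
  unfold wBase
  refine Continuous.div continuous_const (continuous_const.mul Real.continuous_cosh) fun y => ?_
  have := Real.cosh_pos y
  positivity

/-- The base measure. -/
noncomputable def muBase : Measure ℝ := volume.withDensity fun y => ENNReal.ofReal (wBase y)

lemma muBase_integrable {f : ℝ → ℝ} : Integrable f muBase ↔ Integrable (fun y => f y * wBase y) := by
  unfold muBase
  rw [integrable_withDensity_iff_integrable_smul' (by have := wBase_cont; fun_prop) (by simp)]
  refine integrable_congr (ae_of_all _ fun y => ?_)
  simp [ENNReal.toReal_ofReal (wBase_pos y).le, mul_comm]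

lemma muBase_integral {f : ℝ → ℝ} : ∫ y, f y ∂muBase = ∫ y, f y * wBase y := by
  unfold muBase
  rw [integral_withDensity_eq_integral_toReal_smul (by have := wBase_cont; fun_prop) (by simp)]
  refine integral_congr_ae (ae_of_all _ fun y => ?_)
  simp [ENNReal.toReal_ofReal (wBase_pos y).le, mul_comm]

lemma muBase_mgf (θ : ℝ) (h1 : -1 < θ) (h2 : θ < 1) :
    Integrable (fun y => Real.exp (θ * y)) muBase ∧
      ∫ y, Real.exp (θ * y) ∂muBase = 1 / Real.cos (π / 2 * θ) := by
  rw [muBase_integrable, muBase_integral]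
  obtain ⟨hi, hv⟩ := beta_cosh 0 θ (by simpa using h1) (by simpa using h2)
  have e : (fun y => Real.exp (θ * y) * wBase y) =
      fun y => (1 / π) * (Real.exp (θ * y) / Real.cosh y ^ (0 + 1)) := by
    ext y
    have := Real.cosh_pos y
    unfold wBase; field_simp; simp
  rw [e]
  refine ⟨hi.const_mul _, ?_⟩
  rw [integral_const_mul, hv]
  have := Real.Gamma_mul_Gamma_one_sub ((1 + θ) / 2)
  have e1 : 1 - (1 + θ) / 2 = (1 - θ) / 2 := by ring
  have e2 : Real.sin (π * ((1 + θ) / 2)) = Real.cos (π / 2 * θ) := by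
    rw [← Real.cos_pi_div_two_sub, ← Real.cos_neg]; ring_nf
  rw [e1, e2] at this
  simp only [pow_zero, one_mul, Nat.cast_zero, add_zero, Nat.factorial_zero, Nat.cast_one, div_one]
  rw [this]
  field_simp

lemma muBase_interior (θ : ℝ) (h1 : -1 < θ) (h2 : θ < 1) :
    θ ∈ interior (ProbabilityTheory.integrableExpSet (fun y : ℝ => y) muBase) := by
  rw [mem_interior]
  refine ⟨Set.Ioo (-1) 1, fun t ht => (muBase_mgf t ht.1 ht.2).1, isOpen_Ioo, h1, h2⟩

lemma muBase_poly_int (q : Polynomial ℝ) (θ : ℝ) (h1 : -1 < θ) (h2 : θ < 1) :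
    Integrable (fun y => q.eval y * Real.exp (θ * y)) muBase := by
  induction q using Polynomial.induction_on' with
  | add p q hp hq =>
    simp only [Polynomial.eval_add, add_mul]
    exact hp.add hq
  | monomial n a =>
    have := ProbabilityTheory.integrable_pow_mul_exp_of_mem_interior_integrableExpSet
      (muBase_interior θ h1 h2) n
    simp only [Polynomial.eval_monomial, mul_assoc]
    exact this.const_mul a

lemma muBase_poly_deriv (q : Polynomial ℝ) (θ : ℝ) (h1 : -1 < θ) (h2 : θ < 1) :
    HasDerivAt (fun t => ∫ y, q.eval y * Real.exp (t * y) ∂muBase)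
      (∫ y, (Polynomial.X * q).eval y * Real.exp (θ * y) ∂muBase) θ := by
  induction q using Polynomial.induction_on' with
  | add p q hp hq =>
    have := hp.add hq
    rw [← integral_add (muBase_poly_int _ θ h1 h2) (muBase_poly_int _ θ h1 h2)] at this
    refine (this.congr_of_eventuallyEq ?_).congr_deriv ?_
    · filter_upwards [isOpen_Ioo.mem_nhds (⟨h1, h2⟩ : θ ∈ Set.Ioo (-1 : ℝ) 1)] with t ht
      rw [Pi.add_apply, ← integral_add (muBase_poly_int _ t ht.1 ht.2)
        (muBase_poly_int _ t ht.1 ht.2)]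
      simp only [Polynomial.eval_add, add_mul]
    · simp only [Polynomial.eval_add, add_mul, mul_add]
  | monomial n a =>
    have := (ProbabilityTheory.hasDerivAt_integral_pow_mul_exp_real
      (muBase_interior θ h1 h2) n).const_mul a
    simp only [Polynomial.eval_monomial, Polynomial.eval_mul, Polynomial.eval_X, mul_assoc]
    simp only [integral_const_mul]
    refine this.congr_deriv ?_
    rw [← integral_const_mul]
    congr 1; ext y; ring

lemma mp_gen (n : ℕ) : ∀ θ : ℝ, -1 < θ → θ < 1 →
    ∫ y, (mp n).eval y * Real.exp (θ * y) ∂muBase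
      = (n.factorial : ℝ) * (π / 2) ^ n * Real.tan (π / 2 * θ) ^ n / Real.cos (π / 2 * θ) := by
  have hcos : ∀ θ : ℝ, -1 < θ → θ < 1 → 0 < Real.cos (π / 2 * θ) := by
    intro θ h1 h2
    apply Real.cos_pos_of_mem_Ioo
    constructor <;> nlinarith [Real.pi_pos]
  have hderiv : ∀ (n : ℕ) (θ : ℝ), -1 < θ → θ < 1 →
      HasDerivAt (fun θ => (n.factorial : ℝ) * (π / 2) ^ n * Real.tan (π / 2 * θ) ^ n
        / Real.cos (π / 2 * θ))
      (((n+1).factorial : ℝ) * (π / 2) ^ (n+1) * Real.tan (π / 2 * θ) ^ (n+1) / Real.cos (π / 2 * θ)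
        + (π/2 * n)^2 * (((n-1).factorial : ℝ) * (π / 2) ^ (n-1) * Real.tan (π / 2 * θ) ^ (n-1)
        / Real.cos (π / 2 * θ))) θ := by
    intro n θ h1 h2
    have hc := hcos θ h1 h2
    have hl : HasDerivAt (fun θ : ℝ => π / 2 * θ) (π / 2) θ := by
      simpa using (hasDerivAt_id θ).const_mul (π / 2)
    have ht := ((Real.hasDerivAt_tan hc.ne').comp θ hl).pow n
    have hcd := (Real.hasDerivAt_cos (π / 2 * θ)).comp θ hl
    have := ((ht.const_mul ((n.factorial : ℝ) * (π / 2) ^ n)).div hcd hc.ne')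
    refine this.congr_deriv ?_
    have hs : Real.sin (π / 2 * θ) = Real.tan (π / 2 * θ) * Real.cos (π / 2 * θ) :=
      (Real.tan_mul_cos hc.ne').symm
    have hsq : 1 / Real.cos (π / 2 * θ) ^ 2 = 1 + Real.tan (π / 2 * θ) ^ 2 := by
      rw [Real.tan_eq_sin_div_cos, div_pow, eq_comm, eq_div_iff (by positivity), add_mul,
        div_mul_cancel₀ _ (by positivity)]
      linarith [Real.sin_sq_add_cos_sq (π / 2 * θ)]
    simp only [Function.comp_def, Pi.pow_apply]
    rw [hs, hsq]
    generalize Real.tan (π / 2 * θ) = T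
    generalize Real.cos (π / 2 * θ) = D at hc ⊢
    rcases n with _ | n
    · simp; field_simp
    · simp only [Nat.add_sub_cancel, Nat.factorial_succ, pow_succ]
      push_cast
      field_simp
      ring
  induction n using Nat.strong_induction_on with
  | _ n ih =>
    match n with
    | 0 =>
      intro θ h1 h2
      simp only [mp, Polynomial.eval_one, one_mul]
      rw [(muBase_mgf θ h1 h2).2]; simp
    | 1 =>
      intro θ h1 h2
      have ih0 := ih 0 (by norm_num)
      have hd := muBase_poly_deriv (mp 0) θ h1 h2
      have hd2 := hderiv 0 θ h1 h2
      have := hd.unique (hd2.congr_of_eventuallyEq (by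
        filter_upwards [isOpen_Ioo.mem_nhds (⟨h1, h2⟩ : θ ∈ Set.Ioo (-1 : ℝ) 1)] with t ht
        exact ih0 t ht.1 ht.2))
      simp only [mp, mul_one] at this ⊢
      rw [this]; simp
    | (n + 2) =>
      intro θ h1 h2
      have ih0 := ih n (by omega) θ h1 h2
      have ih1 := ih (n + 1) (by omega)
      have hd := muBase_poly_deriv (mp (n + 1)) θ h1 h2
      have hd2 := hderiv (n + 1) θ h1 h2
      have := hd.unique (hd2.congr_of_eventuallyEq (by
        filter_upwards [isOpen_Ioo.mem_nhds (⟨h1, h2⟩ : θ ∈ Set.Ioo (-1 : ℝ) 1)] with t ht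
        exact ih1 t ht.1 ht.2))
      have e : ∫ y, (mp (n + 2)).eval y * Real.exp (θ * y) ∂muBase
          = (∫ y, (Polynomial.X * mp (n + 1)).eval y * Real.exp (θ * y) ∂muBase)
          - (π / 2 * ((n : ℝ) + 1)) ^ 2 * ∫ y, (mp n).eval y * Real.exp (θ * y) ∂muBase := by
        rw [← integral_const_mul, ← integral_sub (muBase_poly_int _ θ h1 h2)
          ((muBase_poly_int _ θ h1 h2).const_mul _)]
        congr 1; ext y
        simp only [mp, Polynomial.eval_sub, Polynomial.eval_mul, Polynomial.eval_C]
        ring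
      rw [e, this, ih0]
      simp only [Nat.add_sub_cancel]
      push_cast
      ring

lemma poly_wBase_int (q : Polynomial ℝ) : Integrable (fun y => q.eval y * wBase y) := by
  have := muBase_poly_int q 0 (by norm_num) (by norm_num)
  rw [muBase_integrable] at this
  simpa using this

lemma mp_integral (n : ℕ) : ∫ y, (mp n).eval y * wBase y = if n = 0 then 1 else 0 := by
  have := mp_gen n 0 (by norm_num) (by norm_num)
  rw [muBase_integral] at this
  simp only [zero_mul, Real.exp_zero, mul_one, mul_zero, Real.tan_zero, Real.cos_zero] at this
  rw [this]
  rcases n with _ | n <;> simp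

lemma mp_rec (n : ℕ) : Polynomial.X * mp n =
    mp (n + 1) + Polynomial.C ((π / 2 * (n : ℝ)) ^ 2) * mp (n - 1) := by
  rcases n with _ | n
  · simp [mp]
  · simp only [mp, Nat.add_sub_cancel]; push_cast; ring

lemma mp_monic_natDegree (n : ℕ) : (mp n).Monic ∧ (mp n).natDegree = n := by
  induction n using Nat.strong_induction_on with
  | _ n ih =>
    match n with
    | 0 => simp [mp]
    | 1 => simp [mp, Polynomial.monic_X]
    | (n + 2) =>
      obtain ⟨m1, d1⟩ := ih (n + 1) (by omega)
      obtain ⟨m0, d0⟩ := ih n (by omega)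
      have hX : (Polynomial.X * mp (n + 1)).Monic := Polynomial.monic_X.mul m1
      have hXd : (Polynomial.X * mp (n + 1)).natDegree = n + 2 := by
        rw [Polynomial.natDegree_X_mul m1.ne_zero, d1]
      have hlt : (Polynomial.C ((π / 2 * ((n : ℝ) + 1)) ^ 2) * mp n).degree
          < (Polynomial.X * mp (n + 1)).degree := by
        rw [Polynomial.degree_eq_natDegree hX.ne_zero, hXd]
        refine lt_of_le_of_lt Polynomial.degree_le_natDegree ?_
        refine lt_of_le_of_lt (Nat.cast_le.2 (Polynomial.natDegree_C_mul_le _ _)) ?_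
        rw [d0]
        exact_mod_cast (by omega : n < n + 2)
      refine ⟨hX.sub_of_left hlt, ?_⟩
      rw [mp, Polynomial.natDegree_sub_eq_left_of_natDegree_lt, hXd]
      rw [hXd]
      refine lt_of_le_of_lt (Polynomial.natDegree_C_mul_le _ _) ?_
      omega

/-- Orthogonality against powers. -/
lemma mp_orth_pow (k : ℕ) : ∀ n, k < n → ∫ y, (Polynomial.X ^ k * mp n).eval y * wBase y = 0 := by
  induction k with
  | zero =>
    intro n hn
    simp only [pow_zero, one_mul]
    rw [mp_integral, if_neg (by omega)]
  | succ k ih =>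
    intro n hn
    have e : Polynomial.X ^ (k + 1) * mp n = Polynomial.X ^ k * mp (n + 1)
        + Polynomial.C ((π / 2 * (n : ℝ)) ^ 2) * (Polynomial.X ^ k * mp (n - 1)) := by
      rw [pow_succ, mul_assoc, mp_rec]; ring
    rw [e]
    simp only [Polynomial.eval_add, add_mul]
    rw [integral_add (poly_wBase_int _) (poly_wBase_int _), ih _ (by omega)]
    have := ih (n - 1) (by omega)
    simp only [Polynomial.eval_mul (p := Polynomial.C _), Polynomial.eval_C, mul_assoc]
    rw [integral_const_mul]
    rw [this]; simp

lemma mp_orth_lt (q : Polynomial ℝ) (n : ℕ) (h : q.natDegree < n) :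
    ∫ y, (q * mp n).eval y * wBase y = 0 := by
  have e : ∀ y : ℝ, (q * mp n).eval y * wBase y
      = ∑ k ∈ Finset.range (q.natDegree + 1), q.coeff k *
        ((Polynomial.X ^ k * mp n).eval y * wBase y) := by
    intro y
    rw [Polynomial.eval_mul, Polynomial.eval_eq_sum_range, Finset.sum_mul, Finset.sum_mul]
    refine Finset.sum_congr rfl fun k _ => ?_
    simp; ring
  simp only [e]
  rw [integral_finsetSum _ fun k _ => (poly_wBase_int _).const_mul _]
  refine Finset.sum_eq_zero fun k hk => ?_
  rw [integral_const_mul, mp_orth_pow k n (by simp at hk; omega), mul_zero]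

/-- The squared norms. -/
noncomputable def hn (n : ℕ) : ℝ := ∏ j ∈ Finset.range n, (π / 2 * ((j : ℝ) + 1)) ^ 2

lemma hn_pos (n : ℕ) : 0 < hn n := by
  unfold hn
  refine Finset.prod_pos fun j _ => by positivity

lemma hn_succ (n : ℕ) : hn (n + 1) = hn n * (π / 2 * ((n : ℝ) + 1)) ^ 2 := by
  unfold hn; rw [Finset.prod_range_succ]

lemma mp_norm (n : ℕ) : ∫ y, (mp n * mp n).eval y * wBase y = hn n := by
  induction n with
  | zero => simpa [mp, hn] using mp_integral 0
  | succ n ih =>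
    -- ⟨M_{n+1}, M_{n+1}⟩ = ⟨X M_n, M_{n+1}⟩ = ⟨M_n, X M_{n+1}⟩
    have e1 : mp (n + 1) * mp (n + 1) = mp n * mp (n + 2)
        + Polynomial.C ((π / 2 * ((n + 1 : ℕ) : ℝ)) ^ 2) * (mp n * mp n)
        - Polynomial.C ((π / 2 * (n : ℝ)) ^ 2) * (mp (n - 1) * mp (n + 1)) := by
      have h1 := mp_rec n
      have h2 := mp_rec (n + 1)
      have h3 : mp (n + 1) = Polynomial.X * mp n - Polynomial.C ((π / 2 * (n : ℝ)) ^ 2) * mp (n - 1) := by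
        rw [h1]; ring
      simp only [Nat.add_sub_cancel] at h2
      calc mp (n + 1) * mp (n + 1) = (Polynomial.X * mp n - Polynomial.C ((π / 2 * (n : ℝ)) ^ 2) * mp (n - 1)) * mp (n + 1) := by
            rw [← h3]
        _ = mp n * (Polynomial.X * mp (n + 1)) - Polynomial.C ((π / 2 * (n : ℝ)) ^ 2) * (mp (n - 1) * mp (n + 1)) := by ring
        _ = _ := by rw [h2]; ring
    have d := fun m => (mp_monic_natDegree m).2
    have i1 := mp_orth_lt (mp n) (n + 2) (by rw [d]; omega)
    have i2 := mp_orth_lt (mp (n - 1)) (n + 1) (by rw [d]; omega)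
    have e : ∀ y, (mp (n + 1) * mp (n + 1)).eval y * wBase y = (mp n * mp (n + 2)).eval y * wBase y
        + (π / 2 * ((n + 1 : ℕ) : ℝ)) ^ 2 * ((mp n * mp n).eval y * wBase y)
        - (π / 2 * (n : ℝ)) ^ 2 * ((mp (n - 1) * mp (n + 1)).eval y * wBase y) := by
      intro y
      rw [e1]
      simp only [Polynomial.eval_add, Polynomial.eval_sub, Polynomial.eval_mul, Polynomial.eval_C]
      ring
    simp only [e]
    rw [integral_sub, integral_add, integral_const_mul, integral_const_mul, i1, i2, ih, hn_succ]
    · push_cast; ring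
    · exact poly_wBase_int _
    · exact (poly_wBase_int _).const_mul _
    · exact (poly_wBase_int _).add ((poly_wBase_int _).const_mul _)
    · exact (poly_wBase_int _).const_mul _

lemma mp_orth (j k : ℕ) : ∫ y, (mp j).eval y * (mp k).eval y * wBase y = if j = k then hn j else 0 := by
  have d := fun m => (mp_monic_natDegree m).2
  split_ifs with h
  · subst h
    simpa using mp_norm j
  · rcases lt_or_gt_of_ne h with h | h
    · simpa using mp_orth_lt (mp j) k (by rwa [d])
    · have := mp_orth_lt (mp k) j (by rwa [d])
      simpa [mul_comm ((mp k).eval _)] using this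


/-! ### The Macdonald weight -/

/-- `2 K_ν(y)` -/
noncomputable def kW (ν y : ℝ) : ℝ := ∫ τ : ℝ, Real.exp (ν * τ) * Real.exp (-(y * Real.cosh τ))

/-- The even extension (with a harmless value at `0`). -/
noncomputable def kAbs (ν y : ℝ) : ℝ := if y = 0 then 1 else kW ν |y|

lemma exp_cosh_bound {y c : ℝ} (hy : 0 < y) (hc : 1 ≤ c) :
    Real.exp (-(y * c)) ≤ 2 * (1 + y) ^ 2 * Real.exp (-y) / y ^ 2 * (1 / c ^ 2) := by
  have hx : 0 ≤ y * (c - 1) := mul_nonneg hy.le (by linarith)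
  have h1 := Real.quadratic_le_exp_of_nonneg hx
  have h2 : (y * c) ^ 2 ≤ 2 * (1 + y) ^ 2 * Real.exp (y * (c - 1)) := by
    have h3 : y * c ≤ (1 + y) * (1 + y * (c - 1)) := by nlinarith
    have h4 : (y * c) ^ 2 ≤ ((1 + y) * (1 + y * (c - 1))) ^ 2 := by
      apply pow_le_pow_left₀ (by positivity) h3
    have h5 : (1 + y * (c - 1)) ^ 2 ≤ 2 * Real.exp (y * (c - 1)) := by nlinarith
    calc (y * c) ^ 2 ≤ ((1 + y) * (1 + y * (c - 1))) ^ 2 := h4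
      _ = (1 + y) ^ 2 * (1 + y * (c - 1)) ^ 2 := by ring
      _ ≤ (1 + y) ^ 2 * (2 * Real.exp (y * (c - 1))) := by gcongr
      _ = _ := by ring
  have e : Real.exp (-(y * c)) * Real.exp (y * (c - 1)) = Real.exp (-y) := by
    rw [← Real.exp_add]; ring_nf
  have hc0 : 0 < c := by linarith
  have hee := Real.exp_pos (y * (c - 1))
  have hee' := Real.exp_pos (-(y * c))
  rw [← e]
  have : 2 * (1 + y) ^ 2 * (Real.exp (-(y * c)) * Real.exp (y * (c - 1))) / y ^ 2 * (1 / c ^ 2)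
      = Real.exp (-(y * c)) * ((2 * (1 + y) ^ 2 * Real.exp (y * (c - 1))) / (y * c) ^ 2) := by
    field_simp
  rw [this]
  apply le_mul_of_one_le_right hee'.le
  rw [le_div_iff₀ (by positivity)]
  linarith

lemma kW_pt (ν y : ℝ) (hy : 0 < y) (τ : ℝ) :
    Real.exp (ν * τ) * Real.exp (-(y * Real.cosh τ)) ≤
      2 * (1 + y) ^ 2 * Real.exp (-y) / y ^ 2 * (Real.exp (ν * τ) / Real.cosh τ ^ (1 + 1)) := by
  have := exp_cosh_bound hy (Real.one_le_cosh τ)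
  calc _ ≤ Real.exp (ν * τ) * (2 * (1 + y) ^ 2 * Real.exp (-y) / y ^ 2 * (1 / Real.cosh τ ^ 2)) :=
        mul_le_mul_of_nonneg_left this (Real.exp_pos _).le
    _ = _ := by ring

lemma kW_integrable (ν y : ℝ) (h0 : 0 < ν) (h1 : ν < 1) (hy : 0 < y) :
    Integrable (fun τ : ℝ => Real.exp (ν * τ) * Real.exp (-(y * Real.cosh τ))) := by
  refine Integrable.mono' ((beta_cosh 1 ν (by push_cast; linarith) (by push_cast; linarith)).1.const_mul
      (2 * (1 + y) ^ 2 * Real.exp (-y) / y ^ 2))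
    (by apply Continuous.aestronglyMeasurable; have := Real.continuous_cosh; fun_prop)
    (ae_of_all _ fun τ => ?_)
  rw [Real.norm_of_nonneg (by positivity)]
  exact kW_pt ν y hy τ

lemma kW_upper (ν : ℝ) (h0 : 0 < ν) (h1 : ν < 1) :
    ∃ C : ℝ, 0 < C ∧ ∀ y, 0 < y → y ^ 2 * kW ν y ≤ C * (1 + y ^ 2) * Real.exp (-y) := by
  have hb := beta_cosh 1 ν (by push_cast; linarith) (by push_cast; linarith)
  set B := ∫ τ : ℝ, Real.exp (ν * τ) / Real.cosh τ ^ (1 + 1) with hB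
  have hB0 : 0 ≤ B := integral_nonneg fun τ => by
    have := Real.cosh_pos τ
    simp only [Pi.zero_apply]; positivity
  refine ⟨4 * B + 1, by positivity, fun y hy => ?_⟩
  have h : kW ν y ≤ 2 * (1 + y) ^ 2 * Real.exp (-y) / y ^ 2 * B := by
    rw [hB, ← integral_const_mul]
    exact integral_mono (kW_integrable ν y h0 h1 hy) (hb.1.const_mul _) (kW_pt ν y hy)
  calc y ^ 2 * kW ν y ≤ y ^ 2 * (2 * (1 + y) ^ 2 * Real.exp (-y) / y ^ 2 * B) := by gcongr
    _ = 2 * (1 + y) ^ 2 * (Real.exp (-y) * B) := by field_simp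
    _ ≤ 4 * (1 + y ^ 2) * (Real.exp (-y) * B) := by
        gcongr ?_ * _
        nlinarith [sq_nonneg (1 - y)]
    _ = 4 * B * (1 + y ^ 2) * Real.exp (-y) := by ring
    _ ≤ _ := by gcongr; linarith

lemma kW_lower (ν : ℝ) (h0 : 0 < ν) (h1 : ν < 1) (y : ℝ) (hy : 0 < y) :
    Real.exp (-y) ≤ 2 * Real.exp 1 * (1 + y ^ 2) * kW ν y := by
  set δ : ℝ := 1 / (1 + y) with hδ
  have hδ0 : 0 < δ := by positivity
  have hδ1 : δ ≤ 1 := by rw [hδ, div_le_one (by positivity)]; linarith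
  have hintg := kW_integrable ν y h0 h1 hy
  have hpt : ∀ τ ∈ Set.Icc 0 δ, Real.exp (-y - 1) ≤ Real.exp (ν * τ) * Real.exp (-(y * Real.cosh τ)) := by
    intro τ hτ
    rw [← Real.exp_add]
    apply Real.exp_le_exp.2
    have ha : 0 ≤ ν * τ := mul_nonneg h0.le hτ.1
    have hτ1 : τ ≤ 1 := hτ.2.trans hδ1
    have hc : Real.cosh τ ≤ 1 + τ ^ 2 := by
      have e1 := Real.cosh_le_exp_half_sq τ
      have e2 := Real.abs_exp_sub_one_sub_id_le (x := τ ^ 2 / 2)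
        (by rw [abs_of_nonneg (by positivity)]; nlinarith [hτ.1])
      have e3 := (abs_le.1 e2).2
      nlinarith [hτ.1, sq_nonneg τ, mul_nonneg hτ.1 hτ.1, mul_le_mul hτ1 hτ1 hτ.1 zero_le_one,
        mul_nonneg (sq_nonneg τ) (by nlinarith [hτ.1] : 0 ≤ 1 - τ ^ 2)]
    have hyt : y * τ ^ 2 ≤ 1 := by
      have : τ ^ 2 ≤ δ ^ 2 := pow_le_pow_left₀ hτ.1 hτ.2 2
      have h3 : y * δ ^ 2 ≤ 1 := by
        rw [hδ, div_pow, one_pow, mul_one_div, div_le_one (by positivity)]; nlinarith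
      nlinarith
    nlinarith
  have hk : δ * Real.exp (-y - 1) ≤ kW ν y := by
    calc δ * Real.exp (-y - 1) = ∫ τ in Set.Icc 0 δ, Real.exp (-y - 1) := by
          simp [hδ0.le]
      _ ≤ ∫ τ in Set.Icc 0 δ, Real.exp (ν * τ) * Real.exp (-(y * Real.cosh τ)) :=
          setIntegral_mono_on (by simp) hintg.integrableOn measurableSet_Icc hpt
      _ ≤ kW ν y := setIntegral_le_integral hintg (ae_of_all _ fun τ => by
          simp only [Pi.zero_apply]; positivity)
  have e : Real.exp (-y) = Real.exp 1 * (1 + y) * (δ * Real.exp (-y - 1)) := by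
    rw [Real.exp_sub, hδ]; field_simp
  calc Real.exp (-y) = Real.exp 1 * (1 + y) * (δ * Real.exp (-y - 1)) := e
    _ ≤ Real.exp 1 * (1 + y) * kW ν y := by gcongr
    _ ≤ Real.exp 1 * (2 * (1 + y ^ 2)) * kW ν y := by
        have : 0 ≤ kW ν y := le_trans (by positivity) hk
        gcongr
        nlinarith [sq_nonneg (y - 1)]
    _ = _ := by ring

lemma wBase_le_exp (y : ℝ) : wBase y ≤ Real.exp (-|y|) := by
  unfold wBase
  rw [← Real.cosh_abs, Real.exp_neg, one_div]
  apply inv_anti₀ (Real.exp_pos _)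
  rw [Real.cosh_eq]
  have := Real.exp_pos |y|
  have := Real.exp_pos (-|y|)
  nlinarith [Real.pi_gt_three]

lemma exp_le_wBase (y : ℝ) : Real.exp (-|y|) ≤ π * wBase y := by
  unfold wBase
  have hc := Real.cosh_pos y
  rw [mul_one_div, mul_comm π, div_mul_cancel_right₀ Real.pi_ne_zero, Real.exp_neg]
  apply inv_anti₀ hc
  rw [← Real.cosh_abs, Real.cosh_eq]
  have : Real.exp (-|y|) ≤ Real.exp |y| := Real.exp_le_exp.2 (by linarith [abs_nonneg y])
  linarith

lemma kW_pos (ν : ℝ) (h0 : 0 < ν) (h1 : ν < 1) (y : ℝ) (hy : 0 < y) : 0 < kW ν y := by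
  have := kW_lower ν h0 h1 y hy
  by_contra h
  push Not at h
  have h2 : 2 * Real.exp 1 * (1 + y ^ 2) * kW ν y ≤ 0 :=
    mul_nonpos_of_nonneg_of_nonpos (by positivity) h
  linarith [Real.exp_pos (-y)]

lemma kAbs_pos (ν : ℝ) (h0 : 0 < ν) (h1 : ν < 1) (y : ℝ) : 0 < kAbs ν y := by
  unfold kAbs
  split_ifs with h
  · exact one_pos
  · exact kW_pos ν h0 h1 _ (abs_pos.2 h)

lemma kAbs_upper (ν : ℝ) (h0 : 0 < ν) (h1 : ν < 1) :
    ∃ C : ℝ, 0 < C ∧ ∀ y, y ^ 2 * kAbs ν y ≤ C * (1 + y ^ 2) * wBase y := by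
  obtain ⟨C, hC, h⟩ := kW_upper ν h0 h1
  refine ⟨C * π, by positivity, fun y => ?_⟩
  by_cases hy : y = 0
  · subst hy; simp; have := wBase_pos 0; positivity
  · have h2 := h |y| (abs_pos.2 hy)
    simp only [kAbs, if_neg hy]
    rw [sq_abs] at h2
    calc _ ≤ _ := h2
      _ ≤ C * (1 + y ^ 2) * (π * wBase y) := by gcongr; exact exp_le_wBase y
      _ = _ := by ring

lemma kAbs_lower (ν : ℝ) (h0 : 0 < ν) (h1 : ν < 1) (y : ℝ) :
    wBase y ≤ 2 * Real.exp 1 * (1 + y ^ 2) * kAbs ν y := by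
  by_cases hy : y = 0
  · subst hy
    have h := wBase_le_exp 0
    simp only [kAbs, if_true]
    have := Real.add_one_le_exp 1
    simp at h ⊢
    linarith
  · have h2 := kW_lower ν h0 h1 |y| (abs_pos.2 hy)
    simp only [kAbs, if_neg hy]
    rw [sq_abs] at h2
    exact (wBase_le_exp y).trans h2

lemma kW_moment (ν : ℝ) (h0 : 0 < ν) (h1 : ν < 1) (j : ℕ) :
    IntegrableOn (fun y => y ^ j * kW ν y) (Set.Ioi 0) ∧
    ∫ y in Set.Ioi 0, y ^ j * kW ν y
      = 2 ^ j * Real.Gamma ((1 + ν + j) / 2) * Real.Gamma ((1 - ν + j) / 2) := by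
  obtain ⟨hbi, hbv⟩ := beta_cosh j ν (by have : (0:ℝ) ≤ j := by positivity
                                         linarith) (by have : (0:ℝ) ≤ j := by positivity
                                                       linarith)
  set F : ℝ → ℝ → ℝ := fun y τ => y ^ j * (Real.exp (ν * τ) * Real.exp (-(y * Real.cosh τ))) with hF
  have hcont : Continuous (Function.uncurry F) := by
    have := Real.continuous_cosh
    simp only [hF, Function.uncurry_def]
    fun_prop
  have hy1 : ∀ c : ℝ, 0 < c → IntegrableOn (fun y : ℝ => y ^ j * Real.exp (-(y * c))) (Set.Ioi 0) ∧
      ∫ y in Set.Ioi 0, y ^ j * Real.exp (-(y * c)) = j.factorial / c ^ (j + 1) := by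
    intro c hc
    have a1 := integrableOn_rpow_mul_exp_neg_mul_rpow (p := 1) (s := j) (b := c)
      (by have : (0:ℝ) ≤ j := by positivity
          linarith) one_pos hc
    have a2 := Real.integral_rpow_mul_exp_neg_mul_Ioi (a := j + 1) (r := c) (by positivity) hc
    constructor
    · refine a1.congr_fun (fun y hy => ?_) measurableSet_Ioi
      simp only [Real.rpow_natCast, Real.rpow_one]
      ring_nf
    · rw [Real.Gamma_nat_eq_factorial] at a2
      have e : (1 / c) ^ ((j : ℝ) + 1) = 1 / c ^ (j + 1) := by
        rw [show ((j : ℝ) + 1) = ((j + 1 : ℕ) : ℝ) by push_cast; ring, Real.rpow_natCast]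
        rw [one_div_pow]
      rw [e] at a2
      rw [div_eq_mul_one_div, mul_comm _ (1 / c ^ (j + 1)), ← a2]
      refine setIntegral_congr_fun measurableSet_Ioi (fun y hy => ?_)
      simp only [add_sub_cancel_right, Real.rpow_natCast]
      ring_nf
  have hinner : ∀ τ, ∫ y in Set.Ioi 0, F y τ = j.factorial * (Real.exp (ν * τ) / Real.cosh τ ^ (j + 1)) := by
    intro τ
    have := (hy1 (Real.cosh τ) (Real.cosh_pos τ)).2
    have e : ∀ y, F y τ = Real.exp (ν * τ) * (y ^ j * Real.exp (-(y * Real.cosh τ))) := by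
      intro y; simp only [hF]; ring
    simp only [e]
    rw [integral_const_mul, this]; ring
  have hprod : Integrable (Function.uncurry F) ((volume.restrict (Set.Ioi (0:ℝ))).prod volume) := by
    rw [integrable_prod_iff' hcont.aestronglyMeasurable]
    constructor
    · refine ae_of_all _ fun τ => ?_
      have := (hy1 (Real.cosh τ) (Real.cosh_pos τ)).1.const_mul (Real.exp (ν * τ))
      refine this.congr (ae_of_all _ fun y => ?_)
      simp only [hF, Function.uncurry]; ring
    · refine (hbi.const_mul (j.factorial : ℝ)).congr (ae_of_all _ fun τ => ?_)
      simp only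
      rw [← hinner τ]
      refine setIntegral_congr_fun measurableSet_Ioi (fun y hy => ?_)
      have : (0:ℝ) < y := hy
      simp only [hF, Function.uncurry]
      rw [Real.norm_of_nonneg (by positivity)]
  have hFy : ∀ y, ∫ τ, F y τ = y ^ j * kW ν y := by
    intro y; simp only [hF, kW]; rw [integral_const_mul]
  constructor
  · have := hprod.integral_prod_left
    simp only [Function.uncurry] at this
    simp only [hFy] at this
    exact this
  · have := integral_integral_swap hprod
    simp only [hFy, hinner] at this
    rw [this, integral_const_mul, hbv]
    field_simp

lemma integrable_split {E : Type*} [NormedAddCommGroup E] [NormedSpace ℝ E] {f : ℝ → E}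
    (hp : IntegrableOn f (Set.Ioi 0))
    (hm : IntegrableOn (fun y => f (-y)) (Set.Ioi 0)) :
    Integrable f ∧ ∫ y, f y = (∫ y in Set.Ioi 0, f y) + ∫ y in Set.Ioi 0, f (-y) := by
  have hI : IntegrableOn f (Set.Iic 0) := by
    rw [integrableOn_Iic_iff_integrableOn_Iio]
    have := hm.comp_neg
    simpa using this
  constructor
  · rw [← integrableOn_univ, ← Set.Iic_union_Ioi (a := (0:ℝ))]
    exact hI.union hp
  · rw [integral_comp_neg_Ioi, neg_zero, add_comm, intervalIntegral.integral_Iic_add_Ioi hI hp]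

lemma kAbs_pow_int (ν : ℝ) (h0 : 0 < ν) (h1 : ν < 1) (j : ℕ) :
    Integrable (fun y => y ^ j * kAbs ν y) := by
  have h := (kW_moment ν h0 h1 j).1
  refine (integrable_split ?_ ?_).1
  · refine h.congr_fun (fun y hy => ?_) measurableSet_Ioi
    have hy' : (0:ℝ) < y := hy
    simp only [kAbs, if_neg hy'.ne', abs_of_pos hy']
  · refine (h.const_mul ((-1) ^ j)).congr (ae_restrict_of_forall_mem measurableSet_Ioi fun y hy => ?_)
    have hy' : (0:ℝ) < y := hy
    simp only [kAbs, if_neg (neg_ne_zero.2 hy'.ne'), abs_neg, abs_of_pos hy']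
    rw [neg_pow y]; ring

/-- The complex weight. -/
noncomputable def wC (ν y : ℝ) : ℂ :=
  ((Real.cos (π / 2 * ν) : ℂ) - Complex.I * Real.sin (π / 2 * ν) * (if 0 < y then 1 else -1))
    * (kAbs ν y : ℂ)

lemma wC_moment (ν : ℝ) (h0 : 0 < ν) (h1 : ν < 1) (j : ℕ) :
    ∫ y : ℝ, (Complex.I * (y : ℂ)) ^ j * wC ν y = 2 * π * (besselMoment ν j : ℂ) := by
  obtain ⟨hi, hv⟩ := kW_moment ν h0 h1 j
  set κ : ℝ := 2 ^ j * Real.Gamma ((1 + ν + j) / 2) * Real.Gamma ((1 - ν + j) / 2) with hκ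
  set c := Real.cos (π / 2 * ν)
  set s := Real.sin (π / 2 * ν)
  have hp : ∀ y ∈ Set.Ioi (0:ℝ), (Complex.I * (y : ℂ)) ^ j * wC ν y
      = Complex.I ^ j * (c - Complex.I * s) * ((y ^ j * kW ν y : ℝ) : ℂ) := by
    intro y hy
    have hy' : (0:ℝ) < y := hy
    simp only [wC, kAbs, if_neg hy'.ne', abs_of_pos hy', if_pos hy']
    simp only [Complex.ofReal_mul, Complex.ofReal_pow]
    change _ * ((((c : ℝ) : ℂ) - Complex.I * ((s : ℝ) : ℂ) * 1) * _) = _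
    ring
  have hm : ∀ y ∈ Set.Ioi (0:ℝ), (Complex.I * ((-y : ℝ) : ℂ)) ^ j * wC ν (-y)
      = (-Complex.I) ^ j * (c + Complex.I * s) * ((y ^ j * kW ν y : ℝ) : ℂ) := by
    intro y hy
    have hy' : (0:ℝ) < y := hy
    have hn : ¬ (0 < -y) := by linarith
    simp only [wC, kAbs, if_neg (neg_ne_zero.2 hy'.ne'), abs_neg, abs_of_pos hy', if_neg hn]
    simp only [Complex.ofReal_mul, Complex.ofReal_pow, Complex.ofReal_neg]
    change _ * ((((c : ℝ) : ℂ) - Complex.I * ((s : ℝ) : ℂ) * (-1)) * _) = _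
    ring
  have hic : IntegrableOn (fun y : ℝ => ((y ^ j * kW ν y : ℝ) : ℂ)) (Set.Ioi 0) := hi.ofReal
  have := (integrable_split (f := fun y : ℝ => (Complex.I * (y : ℂ)) ^ j * wC ν y)
    ((hic.const_mul _).congr (ae_restrict_of_forall_mem measurableSet_Ioi fun y hy => (hp y hy).symm))
    ((hic.const_mul _).congr (ae_restrict_of_forall_mem measurableSet_Ioi fun y hy => (hm y hy).symm))).2
  rw [this, setIntegral_congr_fun measurableSet_Ioi hp, setIntegral_congr_fun measurableSet_Ioi hm,
    integral_const_mul, integral_const_mul, integral_complex_ofReal, hv]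
  have hG := Real.Gamma_mul_Gamma_one_sub ((1 + ν - j) / 2)
  have e1 : 1 - (1 + ν - j) / 2 = (1 - ν + j) / 2 := by ring
  set C := Real.cos (π / 2 * (j - ν)) with hC
  have e2 : Real.sin (π * ((1 + ν - j) / 2)) = C := by
    rw [← Real.cos_pi_div_two_sub, hC]; ring_nf
  rw [e1, e2] at hG
  have hg1 : 0 < Real.Gamma ((1 - ν + j) / 2) := Real.Gamma_pos_of_pos (by
    have : (0:ℝ) ≤ j := by positivity
    linarith)
  have hg2 : Real.Gamma ((1 + ν - j) / 2) ≠ 0 := by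
    apply Real.Gamma_ne_zero
    intro m hm
    have h2 : ν = ((j : ℤ) - 1 - 2 * m : ℤ) := by push_cast; linarith
    have a1 : (0:ℤ) < (j : ℤ) - 1 - 2 * m := by
      rw [h2] at h0; exact_mod_cast h0
    have a2 : (j : ℤ) - 1 - 2 * m < 1 := by
      rw [h2] at h1; exact_mod_cast h1
    omega
  have hC0 : C ≠ 0 := by
    intro h
    rw [h, div_zero] at hG
    exact (mul_ne_zero hg2 hg1.ne') hG
  have key : κ * C = π * besselMoment ν j := by
    rw [besselMoment, hκ]
    field_simp at hG ⊢
    rw [← hG]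
  have hcs : Complex.I ^ j * (c - Complex.I * s) + (-Complex.I) ^ j * (c + Complex.I * s) = 2 * C := by
    have f1 : Complex.I ^ j = Complex.exp ((π / 2 * j : ℝ) * Complex.I) := by
      calc Complex.I ^ j = (Complex.exp (π / 2 * Complex.I)) ^ j := by rw [Complex.exp_pi_div_two_mul_I]
        _ = _ := by rw [← Complex.exp_nat_mul]; push_cast; ring_nf
    have f2 : (-Complex.I) ^ j = Complex.exp (-(π / 2 * j : ℝ) * Complex.I) := by
      calc (-Complex.I) ^ j = (Complex.exp (-π / 2 * Complex.I)) ^ j := by rw [Complex.exp_neg_pi_div_two_mul_I]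
        _ = _ := by rw [← Complex.exp_nat_mul]; push_cast; ring_nf
    have f3 : (c - Complex.I * s : ℂ) = Complex.exp (-(π / 2 * ν : ℝ) * Complex.I) := by
      rw [Complex.exp_mul_I, Complex.cos_neg, Complex.sin_neg, ← Complex.ofReal_cos, ← Complex.ofReal_sin]
      ring
    have f4 : (c + Complex.I * s : ℂ) = Complex.exp ((π / 2 * ν : ℝ) * Complex.I) := by
      rw [Complex.exp_mul_I, ← Complex.ofReal_cos, ← Complex.ofReal_sin]
      ring
    rw [f1, f2, f3, f4, ← Complex.exp_add, ← Complex.exp_add, hC, Complex.ofReal_cos, Complex.two_cos]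
    push_cast; ring_nf
  have key' : (κ : ℂ) * C = π * (besselMoment ν j : ℂ) := by exact_mod_cast key
  rw [← add_mul, hcs]
  linear_combination 2 * key'


/-! ### Weighted norms of complex polynomials -/

/-- Admissible weights: positive with finite moments. -/
def Adm (W : ℝ → ℝ) : Prop := (∀ y, 0 < W y) ∧ ∀ j : ℕ, Integrable (fun y => y ^ j * W y)

/-- Squared weighted norm. -/
noncomputable def nrm (W : ℝ → ℝ) (p : Polynomial ℂ) : ℝ := ∫ y : ℝ, ‖p.eval (y : ℂ)‖ ^ 2 * W y

/-- Conjugate polynomial. -/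
noncomputable def cj (p : Polynomial ℂ) : Polynomial ℂ := p.map (starRingEnd ℂ)

lemma cj_eval (p : Polynomial ℂ) (y : ℝ) :
    (cj p).eval (y : ℂ) = (starRingEnd ℂ) (p.eval (y : ℂ)) := by
  unfold cj
  conv_lhs => rw [← Complex.conj_ofReal y]
  rw [Polynomial.eval_map, Polynomial.eval₂_at_apply]

lemma cj_natDegree (p : Polynomial ℂ) : (cj p).natDegree = p.natDegree := by
  unfold cj; exact Polynomial.natDegree_map _

lemma cj_monic {p : Polynomial ℂ} (h : p.Monic) : (cj p).Monic := h.map _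

lemma adm_poly {W : ℝ → ℝ} (h : Adm W) (q : Polynomial ℂ) :
    Integrable (fun y : ℝ => q.eval (y : ℂ) * (W y : ℂ)) := by
  induction q using Polynomial.induction_on' with
  | add p q hp hq =>
    simp only [Polynomial.eval_add, add_mul]
    exact hp.add hq
  | monomial n a =>
    have := ((h.2 n).ofReal (𝕜 := ℂ)).const_mul a
    refine this.congr (ae_of_all _ fun y => ?_)
    simp [mul_assoc]

lemma normsq_eq (p : Polynomial ℂ) (y : ℝ) :
    ((‖p.eval (y : ℂ)‖ ^ 2 : ℝ) : ℂ) = (p * cj p).eval (y : ℂ) := by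
  rw [Polynomial.eval_mul, cj_eval, Complex.mul_conj, Complex.normSq_eq_norm_sq]

lemma adm_sq {W : ℝ → ℝ} (h : Adm W) (p : Polynomial ℂ) :
    Integrable (fun y : ℝ => ‖p.eval (y : ℂ)‖ ^ 2 * W y) := by
  have := (adm_poly h (p * cj p)).re
  refine this.congr (ae_of_all _ fun y => ?_)
  simp only [← normsq_eq]
  rw [← Complex.ofReal_mul]; exact Complex.ofReal_re _

lemma nrm_nonneg {W : ℝ → ℝ} (h : Adm W) (p : Polynomial ℂ) : 0 ≤ nrm W p :=
  integral_nonneg fun y => mul_nonneg (by positivity) (h.1 y).le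

lemma nrm_pos {W : ℝ → ℝ} (h : Adm W) {p : Polynomial ℂ} (hp : p ≠ 0) : 0 < nrm W p := by
  unfold nrm
  rw [integral_pos_iff_support_of_nonneg (fun y => mul_nonneg (by positivity) (h.1 y).le) (adm_sq h p)]
  have hfin : {y : ℝ | p.eval (y : ℂ) = 0}.Finite := by
    have := (Polynomial.finite_setOfPred_isRoot hp).preimage (f := fun y : ℝ => (y : ℂ))
      (Complex.ofReal_injective.injOn)
    exact this
  have : Function.support (fun y : ℝ => ‖p.eval (y : ℂ)‖ ^ 2 * W y) = {y : ℝ | p.eval (y : ℂ) = 0}ᶜ := by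
    ext y
    simp [(h.1 y).ne']
  rw [this]
  have h0 : volume {y : ℝ | p.eval (y : ℂ) = 0} = 0 := hfin.measure_zero _
  rw [measure_compl hfin.measurableSet (by simp [h0]), h0]
  simp

lemma nrm_eq_zero {W : ℝ → ℝ} (h : Adm W) {p : Polynomial ℂ} (hp : nrm W p = 0) : p = 0 := by
  by_contra h0
  exact (nrm_pos h h0).ne' hp

lemma nrm_add_le {W : ℝ → ℝ} (h : Adm W) (p q : Polynomial ℂ) :
    nrm W (p + q) ≤ 2 * nrm W p + 2 * nrm W q := by
  unfold nrm
  rw [← integral_const_mul, ← integral_const_mul,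
    ← integral_add ((adm_sq h p).const_mul _) ((adm_sq h q).const_mul _)]
  refine integral_mono (adm_sq h _) (((adm_sq h p).const_mul _).add ((adm_sq h q).const_mul _)) fun y => ?_
  simp only [Polynomial.eval_add]
  have h1 := norm_add_le (p.eval (y : ℂ)) (q.eval (y : ℂ))
  have h2 : ‖p.eval (y : ℂ) + q.eval (y : ℂ)‖ ^ 2 ≤ 2 * ‖p.eval (y : ℂ)‖ ^ 2 + 2 * ‖q.eval (y : ℂ)‖ ^ 2 := by
    nlinarith [norm_nonneg (p.eval (y : ℂ) + q.eval (y : ℂ)), norm_nonneg (p.eval (y : ℂ)),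
      norm_nonneg (q.eval (y : ℂ)), sq_nonneg (‖p.eval (y : ℂ)‖ - ‖q.eval (y : ℂ)‖)]
  nlinarith [h.1 y]

lemma adm_wBase : Adm wBase := by
  refine ⟨wBase_pos, fun j => ?_⟩
  have := poly_wBase_int (Polynomial.X ^ j)
  simpa using this

lemma adm_kAbs (ν : ℝ) (h0 : 0 < ν) (h1 : ν < 1) : Adm (kAbs ν) :=
  ⟨kAbs_pos ν h0 h1, kAbs_pow_int ν h0 h1⟩

/-- Complexified base polynomials. -/
noncomputable def mc (k : ℕ) : Polynomial ℂ := (mp k).map Complex.ofRealHom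

lemma mc_eval (k : ℕ) (y : ℝ) : (mc k).eval (y : ℂ) = (((mp k).eval y : ℝ) : ℂ) := by
  unfold mc
  have := Polynomial.eval₂_at_apply (p := mp k) Complex.ofRealHom y
  rw [Polynomial.eval_map]; exact this

lemma mc_monic (k : ℕ) : (mc k).Monic := (mp_monic_natDegree k).1.map _

lemma mc_natDegree (k : ℕ) : (mc k).natDegree = k := by
  unfold mc; rw [Polynomial.natDegree_map]; exact (mp_monic_natDegree k).2

lemma mc_zero : mc 0 = 1 := by simp [mc, mp]
lemma mc_one : mc 1 = Polynomial.X := by simp [mc, mp]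

lemma mc_rec (n : ℕ) : Polynomial.X * mc n =
    mc (n + 1) + Polynomial.C (((π / 2 * (n : ℝ)) ^ 2 : ℝ) : ℂ) * mc (n - 1) := by
  have := congrArg (Polynomial.map Complex.ofRealHom) (mp_rec n)
  rw [Polynomial.map_mul, Polynomial.map_X, Polynomial.map_add, Polynomial.map_mul, Polynomial.map_C] at this
  exact this

lemma mc_step (n : ℕ) : mc (n + 2) = Polynomial.X * mc (n + 1)
    - Polynomial.C (((π / 2 * ((n : ℝ) + 1)) ^ 2 : ℝ) : ℂ) * mc n := by
  have := mc_rec (n + 1)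
  rw [this]; simp

lemma nrm_sum (m : ℕ) (c : ℕ → ℂ) (e : ℕ → ℕ) (he : Function.Injective e) :
    nrm wBase (∑ k ∈ Finset.range m, Polynomial.C (c k) * mc (e k))
      = ∑ k ∈ Finset.range m, ‖c k‖ ^ 2 * hn (e k) := by
  unfold nrm
  have hpt : ∀ y : ℝ, ‖(∑ k ∈ Finset.range m, Polynomial.C (c k) * mc (e k)).eval (y : ℂ)‖ ^ 2 * wBase y
      = ∑ j ∈ Finset.range m, ∑ k ∈ Finset.range m, (c j * (starRingEnd ℂ) (c k)).re *
        ((mp (e j)).eval y * (mp (e k)).eval y * wBase y) := by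
    intro y
    have h1 : (((‖(∑ k ∈ Finset.range m, Polynomial.C (c k) * mc (e k)).eval (y : ℂ)‖ ^ 2 : ℝ)) : ℂ)
        = ∑ j ∈ Finset.range m, ∑ k ∈ Finset.range m, (c j * (starRingEnd ℂ) (c k)) *
        (((mp (e j)).eval y * (mp (e k)).eval y : ℝ) : ℂ) := by
      rw [← Complex.normSq_eq_norm_sq, ← Complex.mul_conj]
      simp only [Polynomial.eval_finsetSum, Polynomial.eval_mul, Polynomial.eval_C, mc_eval, map_sum, map_mul,
        Complex.conj_ofReal, Finset.sum_mul_sum]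
      refine Finset.sum_congr rfl fun j _ => Finset.sum_congr rfl fun k _ => ?_
      push_cast; ring
    have h2 := congrArg Complex.re h1
    rw [Complex.ofReal_re] at h2
    rw [h2, Complex.re_sum, Finset.sum_mul]
    refine Finset.sum_congr rfl fun j _ => ?_
    rw [Complex.re_sum, Finset.sum_mul]
    refine Finset.sum_congr rfl fun k _ => ?_
    rw [Complex.re_mul_ofReal]; ring
  simp_rw [hpt]
  have hintg : ∀ j k : ℕ, Integrable fun y => (mp j).eval y * (mp k).eval y * wBase y := by
    intro j k
    simpa using poly_wBase_int (mp j * mp k)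
  rw [integral_finsetSum _ fun j _ => integrable_finsetSum _ fun k _ => (hintg _ _).const_mul _]
  refine Finset.sum_congr rfl fun j hj => ?_
  rw [integral_finsetSum _ fun k _ => (hintg _ _).const_mul _]
  simp_rw [integral_const_mul, mp_orth]
  rw [Finset.sum_eq_single j]
  · simp only [if_true]
    rw [Complex.mul_conj, Complex.ofReal_re, Complex.normSq_eq_norm_sq]
  · intro k _ hk
    rw [if_neg fun h => hk (he h).symm, mul_zero]
  · intro h; exact absurd hj h

lemma mc_expand (n : ℕ) : ∀ p : Polynomial ℂ, p.natDegree ≤ n →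
    ∃ c : ℕ → ℂ, p = ∑ k ∈ Finset.range (n + 1), Polynomial.C (c k) * mc k := by
  induction n with
  | zero =>
    intro p hp
    refine ⟨fun _ => p.coeff 0, ?_⟩
    simp only [zero_add, Finset.sum_range_one, mc_zero, mul_one]
    exact Polynomial.eq_C_of_natDegree_le_zero hp
  | succ n ih =>
    intro p hp
    obtain ⟨c, hc⟩ := ih (p - Polynomial.C (p.coeff (n + 1)) * mc (n + 1)) (by
      rw [Polynomial.natDegree_le_iff_coeff_eq_zero]
      intro N hN
      rw [Polynomial.coeff_sub, Polynomial.coeff_C_mul]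
      rcases Nat.lt_or_ge (n + 1) N with h | h
      · rw [Polynomial.coeff_eq_zero_of_natDegree_lt (p := p) (by omega),
          Polynomial.coeff_eq_zero_of_natDegree_lt (p := mc (n + 1)) (by rw [mc_natDegree]; omega)]; simp
      · have : N = n + 1 := by omega
        subst this
        have h1 := (mc_monic (n + 1)).coeff_natDegree
        rw [mc_natDegree] at h1
        rw [h1]; simp)
    refine ⟨fun k => if k = n + 1 then p.coeff (n + 1) else c k, ?_⟩
    rw [Finset.sum_range_succ]
    simp only [if_true]
    have : ∑ k ∈ Finset.range (n + 1), Polynomial.C (if k = n + 1 then p.coeff (n + 1) else c k) * mc k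
        = ∑ k ∈ Finset.range (n + 1), Polynomial.C (c k) * mc k := by
      refine Finset.sum_congr rfl fun k hk => ?_
      rw [if_neg (by have := Finset.mem_range.1 hk; omega)]
    rw [this, ← hc]; ring

lemma nrm_X_mul (n : ℕ) (p : Polynomial ℂ) (hp : p.natDegree ≤ n) :
    nrm wBase (Polynomial.X * p) ≤ 4 * (π / 2 * ((n : ℝ) + 1)) ^ 2 * nrm wBase p := by
  obtain ⟨c, hc⟩ := mc_expand n p hp
  have e : Polynomial.X * p = (∑ k ∈ Finset.range (n + 1), Polynomial.C (c k) * mc (k + 1))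
      + ∑ k ∈ Finset.range n, Polynomial.C (c (k + 1) * (((π / 2 * ((k : ℝ) + 1)) ^ 2 : ℝ) : ℂ)) * mc k := by
    have h1 : Polynomial.X * p = ∑ k ∈ Finset.range (n + 1),
        (Polynomial.C (c k) * mc (k + 1) +
          Polynomial.C (c k * (((π / 2 * (k : ℝ)) ^ 2 : ℝ) : ℂ)) * mc (k - 1)) := by
      rw [hc, Finset.mul_sum]
      refine Finset.sum_congr rfl fun k _ => ?_
      calc _ = Polynomial.C (c k) * (Polynomial.X * mc k) := by ring
        _ = _ := by rw [mc_rec, Polynomial.C_mul]; ring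
    rw [h1, Finset.sum_add_distrib]
    congr 1
    rw [Finset.sum_range_succ']
    simp
  have hN : nrm wBase p = ∑ k ∈ Finset.range (n + 1), ‖c k‖ ^ 2 * hn k := by
    rw [hc]; exact nrm_sum _ c (fun k => k) (fun _ _ h => h)
  have hA : nrm wBase (∑ k ∈ Finset.range (n + 1), Polynomial.C (c k) * mc (k + 1))
      ≤ (π / 2 * ((n : ℝ) + 1)) ^ 2 * nrm wBase p := by
    rw [nrm_sum (n + 1) c (fun k => k + 1) (fun _ _ h => by simpa using h), hN, Finset.mul_sum]
    refine Finset.sum_le_sum fun k hk => ?_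
    have hk' : (k : ℝ) ≤ n := by
      have := Finset.mem_range.1 hk
      exact_mod_cast (by omega : k ≤ n)
    rw [hn_succ]
    have := hn_pos k
    have h2 : (π / 2 * ((k : ℝ) + 1)) ^ 2 ≤ (π / 2 * ((n : ℝ) + 1)) ^ 2 := by gcongr
    calc ‖c k‖ ^ 2 * (hn k * (π / 2 * ((k : ℝ) + 1)) ^ 2)
        = (π / 2 * ((k : ℝ) + 1)) ^ 2 * (‖c k‖ ^ 2 * hn k) := by ring
      _ ≤ _ := by gcongr
  have hB : nrm wBase (∑ k ∈ Finset.range n,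
      Polynomial.C (c (k + 1) * (((π / 2 * ((k : ℝ) + 1)) ^ 2 : ℝ) : ℂ)) * mc k)
      ≤ (π / 2 * ((n : ℝ) + 1)) ^ 2 * nrm wBase p := by
    rw [nrm_sum n (fun k => c (k + 1) * (((π / 2 * ((k : ℝ) + 1)) ^ 2 : ℝ) : ℂ)) (fun k => k) (fun _ _ h => h),
      hN, Finset.sum_range_succ', mul_add, Finset.mul_sum]
    have h0 : 0 ≤ (π / 2 * ((n : ℝ) + 1)) ^ 2 * (‖c 0‖ ^ 2 * hn 0) := by
      have := hn_pos 0
      positivity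
    refine le_trans (Finset.sum_le_sum fun k hk => ?_) (le_add_of_nonneg_right h0)
    have hk' : (k : ℝ) ≤ n := by
      have := Finset.mem_range.1 hk
      exact_mod_cast (by omega : k ≤ n)
    rw [hn_succ, norm_mul, Complex.norm_real, Real.norm_of_nonneg (by positivity)]
    have := hn_pos k
    have h2 : (π / 2 * ((k : ℝ) + 1)) ^ 2 ≤ (π / 2 * ((n : ℝ) + 1)) ^ 2 := by gcongr
    calc (‖c (k + 1)‖ * (π / 2 * ((k : ℝ) + 1)) ^ 2) ^ 2 * hn k
        = (π / 2 * ((k : ℝ) + 1)) ^ 2 * (‖c (k + 1)‖ ^ 2 * (hn k * (π / 2 * ((k : ℝ) + 1)) ^ 2)) := by ring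
      _ ≤ _ := by gcongr
  rw [e]
  have := nrm_add_le adm_wBase (∑ k ∈ Finset.range (n + 1), Polynomial.C (c k) * mc (k + 1))
    (∑ k ∈ Finset.range n, Polynomial.C (c (k + 1) * (((π / 2 * ((k : ℝ) + 1)) ^ 2 : ℝ) : ℂ)) * mc k)
  linarith

lemma X_eval_sq (p : Polynomial ℂ) (y : ℝ) :
    ‖(Polynomial.X * p).eval (y : ℂ)‖ ^ 2 = y ^ 2 * ‖p.eval (y : ℂ)‖ ^ 2 := by
  rw [Polynomial.eval_mul, Polynomial.eval_X, norm_mul, mul_pow, Complex.norm_real, Real.norm_eq_abs, sq_abs]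

lemma nrm_base_le (ν : ℝ) (h0 : 0 < ν) (h1 : ν < 1) : ∃ C : ℝ, 0 < C ∧
    ∀ (n : ℕ) (p : Polynomial ℂ), p.natDegree ≤ n →
      nrm wBase p ≤ C * ((n : ℝ) + 1) ^ 2 * nrm (kAbs ν) p := by
  refine ⟨4 * Real.exp 1 * (1 + 2 * π ^ 2), by positivity, fun n p hp => ?_⟩
  have hK := adm_kAbs ν h0 h1
  set T : ℝ := 2 * π ^ 2 * ((n : ℝ) + 1) ^ 2 with hT
  have hT0 : 0 < T := by positivity
  have hpt : ∀ y : ℝ, ‖p.eval (y : ℂ)‖ ^ 2 * wBase y ≤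
      2 * Real.exp 1 * (1 + T) * (‖p.eval (y : ℂ)‖ ^ 2 * kAbs ν y)
        + 1 / T * (‖(Polynomial.X * p).eval (y : ℂ)‖ ^ 2 * wBase y) := by
    intro y
    rw [X_eval_sq]
    have hw := wBase_pos y
    have hk := hK.1 y
    rcases le_or_gt (y ^ 2) T with h | h
    · have h3 := kAbs_lower ν h0 h1 y
      calc ‖p.eval (y : ℂ)‖ ^ 2 * wBase y
          ≤ ‖p.eval (y : ℂ)‖ ^ 2 * (2 * Real.exp 1 * (1 + y ^ 2) * kAbs ν y) := by gcongr
        _ ≤ ‖p.eval (y : ℂ)‖ ^ 2 * (2 * Real.exp 1 * (1 + T) * kAbs ν y) := by gcongr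
        _ = 2 * Real.exp 1 * (1 + T) * (‖p.eval (y : ℂ)‖ ^ 2 * kAbs ν y) := by ring
        _ ≤ _ := le_add_of_nonneg_right (by positivity)
    · have h3 : 1 ≤ y ^ 2 / T := by rw [le_div_iff₀ hT0]; linarith
      calc ‖p.eval (y : ℂ)‖ ^ 2 * wBase y ≤ y ^ 2 / T * (‖p.eval (y : ℂ)‖ ^ 2 * wBase y) :=
            le_mul_of_one_le_left (by positivity) h3
        _ = 1 / T * (y ^ 2 * ‖p.eval (y : ℂ)‖ ^ 2 * wBase y) := by ring
        _ ≤ _ := le_add_of_nonneg_left (by positivity)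
  have hI : nrm wBase p ≤ 2 * Real.exp 1 * (1 + T) * nrm (kAbs ν) p
      + 1 / T * nrm wBase (Polynomial.X * p) := by
    unfold nrm
    rw [← integral_const_mul, ← integral_const_mul,
      ← integral_add ((adm_sq hK p).const_mul _) ((adm_sq adm_wBase _).const_mul _)]
    exact integral_mono (adm_sq adm_wBase _)
      (((adm_sq hK p).const_mul _).add ((adm_sq adm_wBase _).const_mul _)) hpt
  have hX := nrm_X_mul n p hp
  have h4 : 1 / T * nrm wBase (Polynomial.X * p) ≤ 1 / 2 * nrm wBase p := by
    calc 1 / T * nrm wBase (Polynomial.X * p)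
        ≤ 1 / T * (4 * (π / 2 * ((n : ℝ) + 1)) ^ 2 * nrm wBase p) := by gcongr
      _ = 1 / 2 * nrm wBase p := by rw [hT]; field_simp; ring
  have h5 : nrm wBase p ≤ 4 * Real.exp 1 * (1 + T) * nrm (kAbs ν) p := by linarith
  refine h5.trans ?_
  have := nrm_nonneg hK p
  have h6 : 1 + T ≤ (1 + 2 * π ^ 2) * ((n : ℝ) + 1) ^ 2 := by
    rw [hT]
    have : (0:ℝ) ≤ n := by positivity
    nlinarith
  calc 4 * Real.exp 1 * (1 + T) * nrm (kAbs ν) p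
      ≤ 4 * Real.exp 1 * ((1 + 2 * π ^ 2) * ((n : ℝ) + 1) ^ 2) * nrm (kAbs ν) p := by gcongr
    _ = _ := by ring

lemma nrm_K_le (ν : ℝ) (h0 : 0 < ν) (h1 : ν < 1) : ∃ C : ℝ, 0 < C ∧
    ∀ p : Polynomial ℂ, nrm (kAbs ν) (Polynomial.X * p)
      ≤ C * (nrm wBase p + nrm wBase (Polynomial.X * p)) := by
  obtain ⟨C, hC, h⟩ := kAbs_upper ν h0 h1
  refine ⟨C, hC, fun p => ?_⟩
  have hK := adm_kAbs ν h0 h1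
  unfold nrm
  rw [← integral_add (adm_sq adm_wBase _) (adm_sq adm_wBase _), ← integral_const_mul]
  refine integral_mono (adm_sq hK _) (((adm_sq adm_wBase _).add (adm_sq adm_wBase _)).const_mul _) fun y => ?_
  simp only
  rw [X_eval_sq]
  calc y ^ 2 * ‖p.eval (y : ℂ)‖ ^ 2 * kAbs ν y = ‖p.eval (y : ℂ)‖ ^ 2 * (y ^ 2 * kAbs ν y) := by ring
    _ ≤ ‖p.eval (y : ℂ)‖ ^ 2 * (C * (1 + y ^ 2) * wBase y) := mul_le_mul_of_nonneg_left (h y) (by positivity)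
    _ = _ := by ring


/-! ### Orthogonality with respect to the complex weight -/

/-- sign function -/
noncomputable def sg (y : ℝ) : ℝ := if 0 < y then 1 else -1

lemma sg_meas : Measurable sg := Measurable.ite measurableSet_Ioi measurable_const measurable_const

lemma sg_abs (y : ℝ) : |sg y| = 1 := by unfold sg; split_ifs <;> simp

lemma sg_mul_self (y : ℝ) : sg y * y = |y| := by
  unfold sg; split_ifs with h
  · rw [one_mul, abs_of_pos h]
  · rw [abs_of_nonpos (not_lt.1 h)]; ring

/-- `cos (πν/2)` -/
noncomputable def cν (ν : ℝ) : ℝ := Real.cos (π / 2 * ν)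
/-- `sin (πν/2)` -/
noncomputable def sν (ν : ℝ) : ℝ := Real.sin (π / 2 * ν)

lemma cν_pos (ν : ℝ) (h0 : 0 < ν) (h1 : ν < 1) : 0 < cν ν := by
  apply Real.cos_pos_of_mem_Ioo
  constructor <;> nlinarith [Real.pi_pos]

lemma sν_nonneg (ν : ℝ) (h0 : 0 < ν) (h1 : ν < 1) : 0 ≤ sν ν := by
  apply Real.sin_nonneg_of_nonneg_of_le_pi <;> nlinarith [Real.pi_pos]

lemma wC_eq (ν y : ℝ) : wC ν y = ((cν ν : ℂ) - Complex.I * ((sν ν * sg y : ℝ) : ℂ)) * (kAbs ν y : ℂ) := by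
  unfold wC sg cν sν
  rw [Complex.ofReal_mul, mul_assoc]
  split_ifs <;> norm_num

lemma sg_norm (ν y : ℝ) : ‖(cν ν : ℂ) - Complex.I * ((sν ν * sg y : ℝ) : ℂ)‖ = 1 := by
  have h : Complex.normSq ((cν ν : ℂ) - Complex.I * ((sν ν * sg y : ℝ) : ℂ)) = 1 := by
    rw [Complex.normSq_apply]
    simp only [Complex.sub_re, Complex.sub_im, Complex.ofReal_re, Complex.ofReal_im, Complex.mul_re,
      Complex.mul_im, Complex.I_re, Complex.I_im]
    have h1 := Real.cos_sq_add_sin_sq (π / 2 * ν)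
    have h2 : sg y ^ 2 = 1 := by rw [← sq_abs, sg_abs]; norm_num
    have : cν ν ^ 2 + sν ν ^ 2 * sg y ^ 2 = 1 := by rw [h2, mul_one]; exact h1
    linarith
  have := Complex.normSq_eq_norm_sq ((cν ν : ℂ) - Complex.I * ((sν ν * sg y : ℝ) : ℂ))
  rw [h] at this
  have h3 := norm_nonneg ((cν ν : ℂ) - Complex.I * ((sν ν * sg y : ℝ) : ℂ))
  nlinarith

lemma wC_norm (ν : ℝ) (h0 : 0 < ν) (h1 : ν < 1) (y : ℝ) : ‖wC ν y‖ = kAbs ν y := by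
  rw [wC_eq, norm_mul, sg_norm, one_mul, Complex.norm_real, Real.norm_of_nonneg (kAbs_pos ν h0 h1 y).le]

lemma wC_int (ν : ℝ) (h0 : 0 < ν) (h1 : ν < 1) (q : Polynomial ℂ) :
    Integrable (fun y : ℝ => q.eval (y : ℂ) * wC ν y) := by
  have h := adm_poly (adm_kAbs ν h0 h1) q
  have hm : AEStronglyMeasurable (fun y : ℝ => (cν ν : ℂ) - Complex.I * ((sν ν * sg y : ℝ) : ℂ)) := by
    have := sg_meas
    apply Measurable.aestronglyMeasurable
    fun_prop
  have := h.bdd_mul (c := 1) hm (ae_of_all _ fun y => (sg_norm ν y).le)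
  refine this.congr (ae_of_all _ fun y => ?_)
  simp only [wC_eq]; ring

lemma sg_int {f : ℝ → ℝ} (hf : Integrable f) : Integrable (fun y => sg y * f y) :=
  hf.bdd_mul (c := 1) sg_meas.aestronglyMeasurable (ae_of_all _ fun y => by
    rw [Real.norm_eq_abs, sg_abs])

lemma wC_real (ν : ℝ) (g : ℝ → ℝ) (hg : Integrable (fun y => g y * kAbs ν y)) :
    ∫ y : ℝ, (g y : ℂ) * wC ν y = ((cν ν * ∫ y, g y * kAbs ν y : ℝ) : ℂ)
      - Complex.I * ((sν ν * ∫ y, sg y * (g y * kAbs ν y) : ℝ) : ℂ) := by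
  have e : ∀ y, (g y : ℂ) * wC ν y = (cν ν : ℂ) * ((g y * kAbs ν y : ℝ) : ℂ)
      - (Complex.I * (sν ν : ℂ)) * ((sg y * (g y * kAbs ν y) : ℝ) : ℂ) := by
    intro y; rw [wC_eq]; push_cast; ring
  simp_rw [e]
  rw [integral_sub (hg.ofReal.const_mul _) ((sg_int hg).ofReal.const_mul _), integral_const_mul,
    integral_const_mul, integral_complex_ofReal, integral_complex_ofReal]
  push_cast; ring

/-- Orthogonality on the line. -/
def IsOrth (ν : ℝ) (n : ℕ) (p : Polynomial ℂ) : Prop :=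
  p.Monic ∧ p.natDegree = n ∧
    ∀ q : Polynomial ℂ, q.degree < n → ∫ y : ℝ, (q * p).eval (y : ℂ) * wC ν y = 0

lemma IsOrth_of_pow (ν : ℝ) (h0 : 0 < ν) (h1 : ν < 1) (n : ℕ) (p : Polynomial ℂ)
    (h : ∀ j < n, ∫ y : ℝ, (Polynomial.X ^ j * p).eval (y : ℂ) * wC ν y = 0)
    (q : Polynomial ℂ) (hq : q.degree < n) : ∫ y : ℝ, (q * p).eval (y : ℂ) * wC ν y = 0 := by
  by_cases hq0 : q = 0
  · subst hq0; simp
  have e : ∀ y : ℝ, (q * p).eval (y : ℂ) * wC ν y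
      = ∑ k ∈ Finset.range n, q.coeff k * ((Polynomial.X ^ k * p).eval (y : ℂ) * wC ν y) := by
    intro y
    conv_lhs => rw [Polynomial.as_sum_range' q n 
      ((Polynomial.natDegree_lt_iff_degree_lt hq0).2 hq)]
    rw [Finset.sum_mul, Polynomial.eval_finsetSum, Finset.sum_mul]
    refine Finset.sum_congr rfl fun k _ => ?_
    simp [Polynomial.eval_monomial]; ring
  simp_rw [e]
  rw [integral_finsetSum _ fun k _ => (wC_int ν h0 h1 _).const_mul _]
  refine Finset.sum_eq_zero fun k hk => ?_
  rw [integral_const_mul, h k (Finset.mem_range.1 hk), mul_zero]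

lemma moment_sum (ν : ℝ) (h0 : 0 < ν) (h1 : ν < 1) (P : Polynomial ℂ) (n j : ℕ) (hP : P.natDegree < n) :
    ∫ y : ℝ, (Complex.I * y) ^ j * P.eval (Complex.I * y) * wC ν y
      = 2 * π * ∑ k ∈ Finset.range n, P.coeff k * (besselMoment ν (j + k) : ℂ) := by
  have e : ∀ y : ℝ, (Complex.I * y) ^ j * P.eval (Complex.I * y) * wC ν y
      = ∑ k ∈ Finset.range n, P.coeff k * ((Complex.I * y) ^ (j + k) * wC ν y) := by
    intro y
    rw [Polynomial.eval_eq_sum_range' hP, Finset.mul_sum, Finset.sum_mul]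
    refine Finset.sum_congr rfl fun k _ => ?_
    rw [pow_add]; ring
  have hi : ∀ k : ℕ, Integrable fun y : ℝ => (Complex.I * y) ^ k * wC ν y := by
    intro k
    have := wC_int ν h0 h1 ((Polynomial.C Complex.I * Polynomial.X) ^ k)
    simpa using this
  simp_rw [e]
  rw [integral_finsetSum _ fun k _ => (hi _).const_mul _, Finset.mul_sum]
  refine Finset.sum_congr rfl fun k hk => ?_
  rw [integral_const_mul, wC_moment ν h0 h1]; ring

lemma isOrth_of_bessel (ν : ℝ) (h0 : 0 < ν) (h1 : ν < 1) (n : ℕ) (P : Polynomial ℂ)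
    (hP : IsBesselOP ν n P) : IsOrth ν n (P.scaleRoots (-Complex.I)) := by
  obtain ⟨hm, hd, ho⟩ := hP
  refine ⟨(Polynomial.monic_scaleRoots_iff _).2 hm, by rw [Polynomial.natDegree_scaleRoots, hd],
    IsOrth_of_pow ν h0 h1 n _ fun j hj => ?_⟩
  have e : ∀ y : ℝ, (Polynomial.X ^ j * P.scaleRoots (-Complex.I)).eval (y : ℂ) * wC ν y
      = ((-Complex.I) ^ j * (-Complex.I) ^ n) *
        ((Complex.I * y) ^ j * P.eval (Complex.I * y) * wC ν y) := by
    intro y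
    have h2 := Polynomial.scaleRoots_eval₂_mul (p := P) (RingHom.id ℂ) (Complex.I * y) (-Complex.I)
    have h3 : -Complex.I * (Complex.I * y) = y := by
      rw [← mul_assoc, neg_mul, Complex.I_mul_I]; ring
    simp only [RingHom.id_apply, h3, hd, Polynomial.eval₂_id] at h2
    rw [Polynomial.eval_mul, h2, Polynomial.eval_pow, Polynomial.eval_X]
    have h4 : (-Complex.I) ^ j * (Complex.I * y) ^ j = (y : ℂ) ^ j := by
      rw [← mul_pow, h3]
    rw [← h4]; ring
  simp_rw [e]
  rw [integral_const_mul, moment_sum ν h0 h1 P (n + 1) j (by omega), ho j hj]; simp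

lemma nrm_wC (ν : ℝ) (h0 : 0 < ν) (h1 : ν < 1) (p : Polynomial ℂ) :
    (∫ y : ℝ, (cj p * p).eval (y : ℂ) * wC ν y).re = cν ν * nrm (kAbs ν) p := by
  have e : ∀ y : ℝ, (cj p * p).eval (y : ℂ) * wC ν y = ((‖p.eval (y : ℂ)‖ ^ 2 : ℝ) : ℂ) * wC ν y := by
    intro y; rw [normsq_eq, mul_comm p]
  simp_rw [e]
  rw [wC_real ν _ (adm_sq (adm_kAbs ν h0 h1) p)]
  simp [nrm]

lemma hankel_ne (ν : ℝ) (h0 : 0 < ν) (h1 : ν < 1) (n : ℕ) : hankelDet ν n ≠ 0 := by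
  intro hdet
  unfold hankelDet at hdet
  obtain ⟨v, hv0, hv⟩ := Matrix.exists_mulVec_eq_zero_iff.2 hdet
  set V : ℕ → ℝ := fun k => if h : k < n then v ⟨k, h⟩ else 0 with hV
  set Q : Polynomial ℂ := ∑ k ∈ Finset.range n, Polynomial.monomial k ((V k : ℝ) : ℂ) with hQ
  have hQc : ∀ k, Q.coeff k = if k < n then ((V k : ℝ) : ℂ) else 0 := by
    intro k
    rw [hQ, Polynomial.finsetSum_coeff]
    simp [Polynomial.coeff_monomial]
  have hdeg : Q.natDegree < n + 1 := by
    rw [Nat.lt_succ_iff, Polynomial.natDegree_le_iff_coeff_eq_zero]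
    intro N hN
    rw [hQc, if_neg (by omega)]
  have horth : ∀ j < n, ∫ y : ℝ, (Complex.I * y) ^ j * Q.eval (Complex.I * y) * wC ν y = 0 := by
    intro j hj
    rw [moment_sum ν h0 h1 Q (n + 1) j hdeg]
    have h3 := congrFun hv ⟨j, hj⟩
    simp only [Matrix.mulVec, dotProduct, Matrix.of_apply, Pi.zero_apply] at h3
    rw [Finset.sum_range_succ, hQc n, if_neg (by omega), zero_mul, add_zero]
    have h4 : ∑ k ∈ Finset.range n, Q.coeff k * (besselMoment ν (j + k) : ℂ)
        = ((∑ k : Fin n, besselMoment ν (j + k) * v k : ℝ) : ℂ) := by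
      rw [Complex.ofReal_sum, Finset.sum_range]
      refine Finset.sum_congr rfl fun k _ => ?_
      rw [hQc, if_pos k.2, hV]
      simp [mul_comm]
    rw [h4, h3]; simp
  set q : Polynomial ℂ := Q.comp (Polynomial.C Complex.I * Polynomial.X) with hq
  have hqe : ∀ y : ℂ, q.eval y = Q.eval (Complex.I * y) := by
    intro y; rw [hq]; simp
  have hqc : ∀ k, q.coeff k = Complex.I ^ k * Q.coeff k := by
    intro k
    rw [hq, Polynomial.comp_C_mul_X_coeff]; ring
  have hpow : ∀ j < n, ∫ y : ℝ, (Polynomial.X ^ j * q).eval (y : ℂ) * wC ν y = 0 := by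
    intro j hj
    have e : ∀ y : ℝ, (Polynomial.X ^ j * q).eval (y : ℂ) * wC ν y
        = (-Complex.I) ^ j * ((Complex.I * y) ^ j * Q.eval (Complex.I * y) * wC ν y) := by
      intro y
      have h3 : -Complex.I * (Complex.I * y) = y := by
        rw [← mul_assoc, neg_mul, Complex.I_mul_I]; ring
      have h4 : (-Complex.I) ^ j * (Complex.I * y) ^ j = (y : ℂ) ^ j := by
        rw [← mul_pow, h3]
      rw [Polynomial.eval_mul, Polynomial.eval_pow, Polynomial.eval_X, hqe, ← h4]; ring
    simp_rw [e]
    rw [integral_const_mul, horth j hj, mul_zero]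
  have hz := IsOrth_of_pow ν h0 h1 n q hpow (cj q) (by
    rw [Polynomial.degree_lt_iff_coeff_zero]
    intro m hm
    rw [cj, Polynomial.coeff_map, hqc, hQc, if_neg (by omega)]; simp)
  have h5 := nrm_wC ν h0 h1 q
  rw [hz] at h5
  have h6 : nrm (kAbs ν) q = 0 := by
    have := (cν_pos ν h0 h1).ne'
    simp at h5
    tauto
  have h7 := nrm_eq_zero (adm_kAbs ν h0 h1) h6
  apply hv0
  funext k
  have h8 := hqc k
  rw [h7, hQc, if_pos k.2] at h8
  simp [hV] at h8
  exact h8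

lemma orth_nrm_le (ν : ℝ) (h0 : 0 < ν) (h1 : ν < 1) (n : ℕ) (p T : Polynomial ℂ) (hp : IsOrth ν n p)
    (hT : T.Monic) (hTd : T.natDegree = n) :
    nrm (kAbs ν) p ≤ 1 / cν ν ^ 2 * nrm (kAbs ν) T := by
  have hK := adm_kAbs ν h0 h1
  have hc := cν_pos ν h0 h1
  obtain ⟨hm, hd, ho⟩ := hp
  have hdeg : (cj p - cj T).degree < n := by
    have h3 : p.degree = n := by rw [Polynomial.degree_eq_natDegree hm.ne_zero, hd]
    have h4 : (cj p).degree = n := by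
      rw [Polynomial.degree_eq_natDegree (cj_monic hm).ne_zero, cj_natDegree, hd]
    have h5 : (cj T).degree = n := by
      rw [Polynomial.degree_eq_natDegree (cj_monic hT).ne_zero, cj_natDegree, hTd]
    have := Polynomial.degree_sub_lt_left (h4.trans h5.symm) (cj_monic hm).ne_zero
      ((cj_monic hm).leadingCoeff.trans (cj_monic hT).leadingCoeff.symm)
    rwa [h4] at this
  have h3 := ho _ hdeg
  simp only [sub_mul, Polynomial.eval_sub] at h3
  rw [integral_sub (wC_int ν h0 h1 _) (wC_int ν h0 h1 _), sub_eq_zero] at h3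
  have h4 := nrm_wC ν h0 h1 p
  rw [h3] at h4
  have h5 : cν ν * nrm (kAbs ν) p ≤ cν ν / 2 * nrm (kAbs ν) p + 1 / (2 * cν ν) * nrm (kAbs ν) T := by
    rw [← h4]
    refine (Complex.re_le_norm _).trans ((norm_integral_le_integral_norm _).trans ?_)
    unfold nrm
    rw [← integral_const_mul, ← integral_const_mul,
      ← integral_add ((adm_sq hK p).const_mul _) ((adm_sq hK T).const_mul _)]
    refine integral_mono (wC_int ν h0 h1 _).norm
      (((adm_sq hK p).const_mul _).add ((adm_sq hK T).const_mul _)) fun y => ?_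
    simp only
    rw [norm_mul, wC_norm ν h0 h1, Polynomial.eval_mul, norm_mul, cj_eval, RCLike.norm_conj]
    have hk := hK.1 y
    set a := ‖p.eval (y : ℂ)‖
    set b := ‖T.eval (y : ℂ)‖
    have : b * a ≤ cν ν / 2 * a ^ 2 + 1 / (2 * cν ν) * b ^ 2 := by
      rw [← sub_nonneg]
      have : cν ν / 2 * a ^ 2 + 1 / (2 * cν ν) * b ^ 2 - b * a = 1 / (2 * cν ν) * (cν ν * a - b) ^ 2 := by
        field_simp; ring
      rw [this]; positivity
    nlinarith
  have h6 : cν ν / 2 * nrm (kAbs ν) p ≤ 1 / (2 * cν ν) * nrm (kAbs ν) T := by linarith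
  have h7 : nrm (kAbs ν) p = 2 / cν ν * (cν ν / 2 * nrm (kAbs ν) p) := by field_simp
  rw [h7]
  calc _ ≤ 2 / cν ν * (1 / (2 * cν ν) * nrm (kAbs ν) T) := by gcongr
    _ = _ := by field_simp

lemma orth_nrm_hn (ν : ℝ) (h0 : 0 < ν) (h1 : ν < 1) : ∃ C : ℝ, 0 < C ∧ ∀ (n : ℕ) (p : Polynomial ℂ),
    1 ≤ n → IsOrth ν n p → nrm wBase p ≤ C * ((n : ℝ) + 1) ^ 2 * hn n := by
  obtain ⟨C1, hC1, h2⟩ := nrm_base_le ν h0 h1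
  obtain ⟨C2, hC2, h3⟩ := nrm_K_le ν h0 h1
  have hc := cν_pos ν h0 h1
  refine ⟨C1 * (1 / cν ν ^ 2 * (C2 * 5)), by positivity, fun n p hn1 hp => ?_⟩
  obtain ⟨m, rfl⟩ : ∃ m, n = m + 1 := ⟨n - 1, by omega⟩
  have e1 := h2 (m + 1) p hp.2.1.le
  have e2 := orth_nrm_le ν h0 h1 (m + 1) p (Polynomial.X * mc m) hp
    (Polynomial.monic_X.mul (mc_monic m)) (by
      rw [Polynomial.natDegree_X_mul (mc_monic m).ne_zero, mc_natDegree])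
  have e3 := h3 (mc m)
  have e4 := nrm_X_mul m (mc m) (mc_natDegree m).le
  have e5 : nrm wBase (mc m) = hn m := by
    have := nrm_sum 1 (fun _ => 1) (fun k => m + k) (fun _ _ h => by simpa using h)
    simpa using this
  rw [e5] at e3 e4
  have hm := hn_pos m
  have e6 : hn (m + 1) = hn m * (π / 2 * ((m : ℝ) + 1)) ^ 2 := hn_succ m
  have e7 : hn m ≤ hn (m + 1) := by
    rw [e6]
    apply le_mul_of_one_le_right hm.le
    have : 1 ≤ π / 2 * ((m : ℝ) + 1) := by
      have : (0:ℝ) ≤ m := by positivity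
      nlinarith [Real.pi_gt_three]
    exact one_le_pow₀ this
  have e8 : nrm (kAbs ν) (Polynomial.X * mc m) ≤ C2 * (5 * hn (m + 1)) := by
    refine e3.trans ?_
    gcongr
    linarith
  calc nrm wBase p ≤ _ := e1
    _ ≤ C1 * (((m + 1 : ℕ) : ℝ) + 1) ^ 2 * (1 / cν ν ^ 2 * (C2 * (5 * hn (m + 1)))) := by
        gcongr
        exact e2.trans (by gcongr)
    _ = _ := by ring


/-! ### Location of zeros and comparison outside -/

lemma nrm_pow_le (n : ℕ) (hn1 : 1 ≤ n) (q : Polynomial ℂ) (hq : q.natDegree + 1 ≤ n) (j : ℕ) (hj : j ≤ n) :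
    nrm wBase (Polynomial.X ^ j * q) ≤ ((2 * π * n) ^ 2) ^ j * nrm wBase q := by
  induction j with
  | zero => simp
  | succ j ih =>
    have h1 := ih (by omega)
    have hd : (Polynomial.X ^ j * q).natDegree ≤ 2 * n - 1 := by
      refine Polynomial.natDegree_mul_le.trans ?_
      rw [Polynomial.natDegree_X_pow]; omega
    have h2 := nrm_X_mul (2 * n - 1) (Polynomial.X ^ j * q) hd
    have e : (((2 * n - 1 : ℕ) : ℝ) + 1) = 2 * n := by
      rw [Nat.cast_sub (by omega)]; push_cast; ring
    rw [e] at h2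
    rw [pow_succ', mul_assoc]
    calc _ ≤ _ := h2
      _ ≤ 4 * (π / 2 * (2 * n)) ^ 2 * (((2 * π * n) ^ 2) ^ j * nrm wBase q) := by gcongr
      _ = _ := by rw [pow_succ]; ring

lemma sq_le_four_pow (n : ℕ) : (n : ℝ) ^ 2 ≤ 4 ^ n := by
  have h : n ≤ 2 ^ n := Nat.lt_two_pow_self.le
  have h2 : (n : ℝ) ≤ 2 ^ n := by exact_mod_cast h
  calc (n : ℝ) ^ 2 ≤ (2 ^ n) ^ 2 := by gcongr
    _ = 4 ^ n := by rw [← pow_mul, mul_comm, pow_mul]; norm_num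

lemma nrm_K_X (ν : ℝ) (h0 : 0 < ν) (h1 : ν < 1) : ∃ C : ℝ, 0 < C ∧ ∀ (n : ℕ) (q : Polynomial ℂ),
    q.natDegree + 1 ≤ n → nrm (kAbs ν) (Polynomial.X * q) ≤ (C * n) ^ 2 * nrm (kAbs ν) q := by
  obtain ⟨C1, hC1, h2⟩ := nrm_base_le ν h0 h1
  obtain ⟨C2, hC2, h3⟩ := nrm_K_le ν h0 h1
  have hK := adm_kAbs ν h0 h1
  set B : ℝ := (2 * π) ^ 2 * (4 + 8 * C1 * C2) with hB
  have hB0 : 0 < B := by positivity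
  refine ⟨Real.sqrt B, Real.sqrt_pos.2 hB0, fun n q hq => ?_⟩
  obtain ⟨m, rfl⟩ : ∃ m, n = m + 1 := ⟨n - 1, by omega⟩
  rw [mul_pow, Real.sq_sqrt hB0.le]
  set A : ℝ := 2 * π * ((m + 1 : ℕ) : ℝ) with hA
  have hA1 : 1 ≤ A := by
    have : (0:ℝ) ≤ m := by positivity
    rw [hA]; push_cast
    nlinarith [Real.pi_gt_three]
  have hA0 : 0 < A := by linarith
  have hQ := nrm_nonneg hK q
  have hQ0 := nrm_nonneg adm_wBase q
  -- bound of the top moment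
  have htop : nrm (kAbs ν) (Polynomial.X ^ (m + 1) * q)
      ≤ 2 * C1 * C2 * ((m + 1 : ℕ) : ℝ) ^ 2 * (A ^ 2) ^ (m + 1) * nrm (kAbs ν) q := by
    have e1 := h3 (Polynomial.X ^ m * q)
    rw [← mul_assoc, ← pow_succ'] at e1
    have e2 := nrm_pow_le (m + 1) (by omega) q hq m (by omega)
    have e3 := nrm_pow_le (m + 1) (by omega) q hq (m + 1) le_rfl
    have e4 := h2 m q (by omega)
    rw [← hA] at e2 e3
    have e5 : (A ^ 2) ^ m ≤ (A ^ 2) ^ (m + 1) := by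
      apply pow_le_pow_right₀ _ (by omega)
      exact one_le_pow₀ hA1
    calc _ ≤ _ := e1
      _ ≤ C2 * ((A ^ 2) ^ (m + 1) * nrm wBase q + (A ^ 2) ^ (m + 1) * nrm wBase q) := by
          gcongr
          exact e2.trans (by gcongr)
      _ = 2 * C2 * (A ^ 2) ^ (m + 1) * nrm wBase q := by ring
      _ ≤ 2 * C2 * (A ^ 2) ^ (m + 1) * (C1 * ((m : ℝ) + 1) ^ 2 * nrm (kAbs ν) q) := by gcongr
      _ = _ := by push_cast; ring
  have hpt : ∀ y : ℝ, ‖(Polynomial.X * q).eval (y : ℂ)‖ ^ 2 * kAbs ν y ≤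
      4 * A ^ 2 * (‖q.eval (y : ℂ)‖ ^ 2 * kAbs ν y)
        + 1 / (4 * A ^ 2) ^ m * (‖(Polynomial.X ^ (m + 1) * q).eval (y : ℂ)‖ ^ 2 * kAbs ν y) := by
    intro y
    have hk := hK.1 y
    have e : ‖(Polynomial.X ^ (m + 1) * q).eval (y : ℂ)‖ ^ 2
        = (y ^ 2) ^ m * (y ^ 2 * ‖q.eval (y : ℂ)‖ ^ 2) := by
      rw [Polynomial.eval_mul, Polynomial.eval_pow, Polynomial.eval_X, norm_mul, norm_pow, mul_pow,
        Complex.norm_real, Real.norm_eq_abs, ← pow_mul, mul_comm (m + 1) 2, pow_mul, sq_abs, pow_succ]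
      ring
    rw [X_eval_sq, e]
    rcases le_or_gt (y ^ 2) (4 * A ^ 2) with h | h
    · calc y ^ 2 * ‖q.eval (y : ℂ)‖ ^ 2 * kAbs ν y ≤ 4 * A ^ 2 * ‖q.eval (y : ℂ)‖ ^ 2 * kAbs ν y := by gcongr
        _ = 4 * A ^ 2 * (‖q.eval (y : ℂ)‖ ^ 2 * kAbs ν y) := by ring
        _ ≤ _ := le_add_of_nonneg_right (by positivity)
    · have h5 : 1 ≤ (y ^ 2) ^ m / (4 * A ^ 2) ^ m := by
        rw [le_div_iff₀ (by positivity), one_mul]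
        gcongr
      calc y ^ 2 * ‖q.eval (y : ℂ)‖ ^ 2 * kAbs ν y
          ≤ (y ^ 2) ^ m / (4 * A ^ 2) ^ m * (y ^ 2 * ‖q.eval (y : ℂ)‖ ^ 2 * kAbs ν y) :=
            le_mul_of_one_le_left (by positivity) h5
        _ = 1 / (4 * A ^ 2) ^ m * ((y ^ 2) ^ m * (y ^ 2 * ‖q.eval (y : ℂ)‖ ^ 2) * kAbs ν y) := by ring
        _ ≤ _ := le_add_of_nonneg_left (by positivity)
  have hI : nrm (kAbs ν) (Polynomial.X * q) ≤ 4 * A ^ 2 * nrm (kAbs ν) q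
      + 1 / (4 * A ^ 2) ^ m * nrm (kAbs ν) (Polynomial.X ^ (m + 1) * q) := by
    unfold nrm
    rw [← integral_const_mul, ← integral_const_mul,
      ← integral_add ((adm_sq hK _).const_mul _) ((adm_sq hK _).const_mul _)]
    exact integral_mono (adm_sq hK _)
      (((adm_sq hK _).const_mul _).add ((adm_sq hK _).const_mul _)) hpt
  have h4 := sq_le_four_pow (m + 1)
  calc _ ≤ _ := hI
    _ ≤ 4 * A ^ 2 * nrm (kAbs ν) q + 1 / (4 * A ^ 2) ^ m *
        (2 * C1 * C2 * 4 ^ (m + 1) * (A ^ 2) ^ (m + 1) * nrm (kAbs ν) q) := by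
        gcongr
        refine htop.trans ?_
        gcongr
    _ = _ := by
        rw [hB, mul_pow 4 (A ^ 2) m, pow_succ, pow_succ]
        field_simp
        rw [hA]; ring

lemma orth_zero (ν : ℝ) (h0 : 0 < ν) (h1 : ν < 1) : ∃ R : ℝ, 0 < R ∧ ∀ (n : ℕ) (p : Polynomial ℂ),
    IsOrth ν n p → ∀ z : ℂ, p.IsRoot z → z.im ≤ 0 ∧ ‖z‖ ≤ R * n := by
  obtain ⟨C, hC, hX⟩ := nrm_K_X ν h0 h1
  have hc := cν_pos ν h0 h1
  have hs := sν_nonneg ν h0 h1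
  have hK := adm_kAbs ν h0 h1
  refine ⟨C / cν ν, by positivity, fun n p hp z hz => ?_⟩
  obtain ⟨hm, hd, ho⟩ := hp
  obtain ⟨q, hq⟩ := Polynomial.dvd_iff_isRoot.2 hz
  have hqm : q.Monic := Polynomial.Monic.of_mul_monic_left (Polynomial.monic_X_sub_C z) (by rwa [← hq])
  have hqd : q.natDegree + 1 = n := by
    rw [← hd, hq, (Polynomial.monic_X_sub_C z).natDegree_mul hqm, Polynomial.natDegree_X_sub_C]; ring
  have hn1 : 1 ≤ n := by omega
  have h2 := ho (cj q) (by
    rw [Polynomial.degree_eq_natDegree (cj_monic hqm).ne_zero, cj_natDegree]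
    exact_mod_cast (by omega))
  set Q := nrm (kAbs ν) q with hQ
  have hQ0 : 0 < Q := nrm_pos hK hqm.ne_zero
  have i0 := adm_sq hK q
  have i2 := adm_sq hK (Polynomial.X * q)
  have i1 : Integrable (fun y : ℝ => y * ‖q.eval (y : ℂ)‖ ^ 2 * kAbs ν y) := by
    have := (adm_poly hK (Polynomial.X * (q * cj q))).re
    refine this.congr (ae_of_all _ fun y => ?_)
    simp only
    rw [Polynomial.eval_mul (p := Polynomial.X), Polynomial.eval_X, ← normsq_eq]
    rw [← Complex.ofReal_mul, ← Complex.ofReal_mul]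
    exact Complex.ofReal_re _
  set S := ∫ y : ℝ, sg y * (‖q.eval (y : ℂ)‖ ^ 2 * kAbs ν y) with hS
  set B := ∫ y : ℝ, y * ‖q.eval (y : ℂ)‖ ^ 2 * kAbs ν y with hB
  set A := ∫ y : ℝ, sg y * (y * ‖q.eval (y : ℂ)‖ ^ 2 * kAbs ν y) with hA
  have hApt : ∀ y : ℝ, sg y * (y * ‖q.eval (y : ℂ)‖ ^ 2 * kAbs ν y) = |y| * (‖q.eval (y : ℂ)‖ ^ 2 * kAbs ν y) := by
    intro y; rw [← sg_mul_self]; ring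
  have hSQ : |S| ≤ Q := by
    rw [hS, hQ, ← Real.norm_eq_abs]
    refine (norm_integral_le_integral_norm _).trans (le_of_eq ?_)
    refine integral_congr_ae (ae_of_all _ fun y => ?_)
    have := hK.1 y
    simp only [norm_mul, Real.norm_eq_abs, sg_abs, one_mul]
    rw [abs_of_nonneg (by positivity), abs_of_pos this]
  have hBA : |B| ≤ A := by
    rw [hB, hA, ← Real.norm_eq_abs]
    refine (norm_integral_le_integral_norm _).trans (le_of_eq ?_)
    refine integral_congr_ae (ae_of_all _ fun y => ?_)
    have := hK.1 y
    simp only [hApt]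
    rw [norm_mul, norm_mul, Real.norm_eq_abs, Real.norm_of_nonneg (by positivity), Real.norm_of_nonneg this.le]
    ring
  have hn0 : (0:ℝ) < n := by exact_mod_cast hn1
  have hAQ : A ≤ C * n * Q := by
    have h3 := hX n q hqd.le
    have h4 : A ≤ C * n / 2 * Q + 1 / (2 * (C * n)) * nrm (kAbs ν) (Polynomial.X * q) := by
      rw [hA, hQ]
      unfold nrm
      rw [← integral_const_mul, ← integral_const_mul,
        ← integral_add (i0.const_mul _) (i2.const_mul _)]
      refine integral_mono (sg_int i1) ((i0.const_mul _).add (i2.const_mul _)) fun y => ?_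
      simp only
      rw [hApt, X_eval_sq]
      have := hK.1 y
      have h5 : |y| ≤ C * n / 2 + 1 / (2 * (C * n)) * y ^ 2 := by
        rw [← sub_nonneg]
        have : C * n / 2 + 1 / (2 * (C * n)) * y ^ 2 - |y| = 1 / (2 * (C * n)) * (C * n - |y|) ^ 2 := by
          rw [← sq_abs y]
          field_simp; ring
        rw [this]; positivity
      calc |y| * (‖q.eval (y : ℂ)‖ ^ 2 * kAbs ν y)
          ≤ (C * n / 2 + 1 / (2 * (C * n)) * y ^ 2) * (‖q.eval (y : ℂ)‖ ^ 2 * kAbs ν y) := by gcongr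
        _ = _ := by ring
    refine h4.trans ?_
    calc _ ≤ C * n / 2 * Q + 1 / (2 * (C * n)) * ((C * n) ^ 2 * Q) := by gcongr
      _ = _ := by field_simp; ring
  have hcomb : (((cν ν * B : ℝ) : ℂ) - Complex.I * ((sν ν * A : ℝ) : ℂ))
      = z * (((cν ν * Q : ℝ) : ℂ) - Complex.I * ((sν ν * S : ℝ) : ℂ)) := by
    have w1 := wC_real ν (fun y => y * ‖q.eval (y : ℂ)‖ ^ 2) i1
    have w0 := wC_real ν (fun y => ‖q.eval (y : ℂ)‖ ^ 2) i0
    rw [← hB, ← hA] at w1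
    rw [← hS] at w0
    change _ = ((cν ν * Q : ℝ) : ℂ) - _ at w0
    rw [← w1, ← w0, ← integral_const_mul, ← sub_eq_zero, ← integral_sub]
    · rw [← h2]
      refine integral_congr_ae (ae_of_all _ fun y => ?_)
      simp only
      rw [hq, Complex.ofReal_mul, normsq_eq]
      simp only [Polynomial.eval_mul, Polynomial.eval_sub, Polynomial.eval_X, Polynomial.eval_C]
      ring
    · refine (wC_int ν h0 h1 (Polynomial.X * (q * cj q))).congr (ae_of_all _ fun y => ?_)
      simp only
      rw [Complex.ofReal_mul, normsq_eq, Polynomial.eval_mul, Polynomial.eval_X]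
    · refine ((wC_int ν h0 h1 (q * cj q)).const_mul z).congr (ae_of_all _ fun y => ?_)
      simp only
      rw [normsq_eq]
  constructor
  · have r1 := congrArg Complex.re hcomb
    have r2 := congrArg Complex.im hcomb
    simp only [Complex.sub_re, Complex.sub_im, Complex.ofReal_re, Complex.ofReal_im, Complex.mul_re,
      Complex.mul_im, Complex.I_re, Complex.I_im] at r1 r2
    have e : z.im * ((cν ν * Q) ^ 2 + (sν ν * S) ^ 2) = -(cν ν * sν ν * (A * Q - B * S)) := by
      linear_combination (-(sν ν * S)) * r1 - (cν ν * Q) * r2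
    have h6 : B * S ≤ A * Q := by
      calc B * S ≤ |B * S| := le_abs_self _
        _ = |B| * |S| := abs_mul _ _
        _ ≤ A * Q := by gcongr; exact (abs_nonneg _).trans hBA
    have h7 : 0 ≤ cν ν * sν ν * (A * Q - B * S) := by
      have := sub_nonneg.2 h6
      positivity
    have h8 : 0 < (cν ν * Q) ^ 2 + (sν ν * S) ^ 2 := by positivity
    by_contra h
    push Not at h
    have := mul_pos h h8
    linarith
  · have n1 : ‖(((cν ν * B : ℝ) : ℂ) - Complex.I * ((sν ν * A : ℝ) : ℂ))‖ ≤ A := by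
      have hA0 : 0 ≤ A := (abs_nonneg _).trans hBA
      have h5 : Complex.normSq (((cν ν * B : ℝ) : ℂ) - Complex.I * ((sν ν * A : ℝ) : ℂ)) ≤ A ^ 2 := by
        rw [Complex.normSq_apply]
        simp only [Complex.sub_re, Complex.sub_im, Complex.ofReal_re, Complex.ofReal_im, Complex.mul_re,
          Complex.mul_im, Complex.I_re, Complex.I_im]
        have h6 := Real.cos_sq_add_sin_sq (π / 2 * ν)
        have h7 : cν ν ^ 2 + sν ν ^ 2 = 1 := h6
        have h8 : B ^ 2 ≤ A ^ 2 := sq_le_sq' (by linarith [(abs_le.1 hBA).1]) (abs_le.1 hBA).2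
        have h9 : cν ν ^ 2 * B ^ 2 ≤ cν ν ^ 2 * A ^ 2 := by gcongr
        have h10 : A ^ 2 = cν ν ^ 2 * A ^ 2 + sν ν ^ 2 * A ^ 2 := by rw [← add_mul, h7, one_mul]
        nlinarith
      rw [Complex.normSq_eq_norm_sq] at h5
      exact le_of_sq_le_sq h5 hA0
    have n2 : cν ν * Q ≤ ‖((cν ν * Q : ℝ) : ℂ) - Complex.I * ((sν ν * S : ℝ) : ℂ)‖ := by
      refine le_trans (le_of_eq ?_) (Complex.re_le_norm _)
      simp
    rw [hcomb, norm_mul] at n1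
    have h5 : ‖z‖ * (cν ν * Q) ≤ C * n * Q :=
      (mul_le_mul_of_nonneg_left n2 (norm_nonneg z)).trans (n1.trans hAQ)
    have h6 : ‖z‖ * cν ν ≤ C * n := by
      have : (‖z‖ * cν ν) * Q ≤ (C * n) * Q := by linarith
      exact le_of_mul_le_mul_right this hQ0
    rw [div_mul_eq_mul_div, le_div_iff₀ hc]
    exact h6

lemma mc_ratio (n : ℕ) (z : ℂ) (hz : π * n ≤ ‖z‖) (k : ℕ) (hk : k < n) :
    π * n / 2 * ‖(mc k).eval z‖ ≤ ‖(mc (k + 1)).eval z‖ := by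
  induction k with
  | zero =>
    rw [mc_zero, mc_one]
    simp
    have : 0 ≤ π * n := by positivity
    linarith
  | succ k ih =>
    have h1 := ih (by omega)
    rw [mc_step, Polynomial.eval_sub, Polynomial.eval_mul, Polynomial.eval_mul, Polynomial.eval_X,
      Polynomial.eval_C]
    have h2 := norm_sub_norm_le (z * (mc (k + 1)).eval z)
      ((((π / 2 * ((k : ℝ) + 1)) ^ 2 : ℝ) : ℂ) * (mc k).eval z)
    rw [norm_mul, norm_mul, Complex.norm_real, Real.norm_of_nonneg (by positivity)] at h2
    set a := ‖(mc (k + 1)).eval z‖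
    set b := ‖(mc k).eval z‖
    have ha : 0 ≤ a := norm_nonneg _
    have hb : 0 ≤ b := norm_nonneg _
    have h3 : (π / 2 * ((k : ℝ) + 1)) ^ 2 * b ≤ π * n / 2 * a := by
      have hk2 : (k : ℝ) + 1 ≤ n := by exact_mod_cast (by omega : k + 1 ≤ n)
      calc (π / 2 * ((k : ℝ) + 1)) ^ 2 * b ≤ (π / 2 * n) ^ 2 * b := by gcongr
        _ = π * n / 2 * (π * n / 2 * b) := by ring
        _ ≤ π * n / 2 * a := by gcongr
    have h4 : π * n * a ≤ ‖z‖ * a := by gcongr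
    linarith

lemma mc_ne_zero (n : ℕ) (hn1 : 1 ≤ n) (z : ℂ) (hz : π * n ≤ ‖z‖) (k : ℕ) (hk : k ≤ n) :
    0 < ‖(mc k).eval z‖ := by
  induction k with
  | zero => simp [mc_zero]
  | succ k ih =>
    have hn0 : (0:ℝ) < n := by exact_mod_cast hn1
    have := ih (by omega)
    exact lt_of_lt_of_le (by positivity) (mc_ratio n z hz k (by omega))

lemma mc_mono (n : ℕ) (z : ℂ) (hz : π * n ≤ ‖z‖) (d : ℕ) : ∀ k, k + d ≤ n →
    ‖(mc k).eval z‖ ^ 2 / hn k ≤ ‖(mc (k + d)).eval z‖ ^ 2 / hn (k + d) := by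
  induction d with
  | zero => intro k _; simp
  | succ d ih =>
    intro k hk
    refine (ih k (by omega)).trans ?_
    have h1 := mc_ratio n z hz (k + d) (by omega)
    rw [show k + (d + 1) = k + d + 1 by ring, hn_succ]
    have h2 := hn_pos (k + d)
    rw [div_le_div_iff₀ h2 (by positivity)]
    have h3 : (π / 2 * (((k + d : ℕ) : ℝ) + 1)) ≤ π * n / 2 := by
      have : ((k + d : ℕ) : ℝ) + 1 ≤ n := by exact_mod_cast (by omega : k + d + 1 ≤ n)
      have := mul_le_mul_of_nonneg_left this Real.pi_pos.le
      linarith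
    calc ‖(mc (k + d)).eval z‖ ^ 2 * (hn (k + d) * (π / 2 * (((k + d : ℕ) : ℝ) + 1)) ^ 2)
        = ((π / 2 * (((k + d : ℕ) : ℝ) + 1)) * ‖(mc (k + d)).eval z‖) ^ 2 * hn (k + d) := by ring
      _ ≤ (π * n / 2 * ‖(mc (k + d)).eval z‖) ^ 2 * hn (k + d) := by gcongr
      _ ≤ _ := by gcongr

lemma orth_compare (ν : ℝ) (h0 : 0 < ν) (h1 : ν < 1) : ∃ C : ℝ, 0 < C ∧ ∀ (n : ℕ) (p : Polynomial ℂ),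
    1 ≤ n → IsOrth ν n p → ∀ z : ℂ, π * n ≤ ‖z‖ →
      ‖p.eval z‖ ^ 2 ≤ C * ((n : ℝ) + 1) ^ 3 * ‖(mc n).eval z‖ ^ 2 := by
  obtain ⟨C, hC, h⟩ := orth_nrm_hn ν h0 h1
  refine ⟨C, hC, fun n p hn1 hp z hz => ?_⟩
  have hN := h n p hn1 hp
  obtain ⟨c, hc⟩ := mc_expand n p hp.2.1.le
  have hN2 : nrm wBase p = ∑ k ∈ Finset.range (n + 1), ‖c k‖ ^ 2 * hn k := by
    rw [hc]; exact nrm_sum _ c (fun k => k) (fun _ _ h => h)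
  have h3 : ‖p.eval z‖ ≤ ∑ k ∈ Finset.range (n + 1), (‖c k‖ * Real.sqrt (hn k)) *
      (‖(mc k).eval z‖ / Real.sqrt (hn k)) := by
    conv_lhs => rw [hc]
    rw [Polynomial.eval_finsetSum]
    refine (norm_sum_le _ _).trans (Finset.sum_le_sum fun k _ => le_of_eq ?_)
    rw [Polynomial.eval_mul, Polynomial.eval_C, norm_mul]
    have := Real.sqrt_pos.2 (hn_pos k)
    field_simp
  have h4 : ‖p.eval z‖ ^ 2 ≤ (∑ k ∈ Finset.range (n + 1), ‖c k‖ ^ 2 * hn k) *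
      ∑ k ∈ Finset.range (n + 1), ‖(mc k).eval z‖ ^ 2 / hn k := by
    calc ‖p.eval z‖ ^ 2 ≤ _ := pow_le_pow_left₀ (norm_nonneg _) h3 2
      _ ≤ _ := Finset.sum_mul_sq_le_sq_mul_sq _ _ _
      _ = _ := by
        congr 1
        · refine Finset.sum_congr rfl fun k _ => ?_
          rw [mul_pow, Real.sq_sqrt (hn_pos k).le]
        · refine Finset.sum_congr rfl fun k _ => ?_
          rw [div_pow, Real.sq_sqrt (hn_pos k).le]
  have h5 : ∑ k ∈ Finset.range (n + 1), ‖(mc k).eval z‖ ^ 2 / hn k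
      ≤ ((n : ℝ) + 1) * (‖(mc n).eval z‖ ^ 2 / hn n) := by
    calc _ ≤ ∑ k ∈ Finset.range (n + 1), ‖(mc n).eval z‖ ^ 2 / hn n := by
          refine Finset.sum_le_sum fun k hk => ?_
          have hk' := Finset.mem_range.1 hk
          have := mc_mono n z hz (n - k) k (by omega)
          rwa [show k + (n - k) = n by omega] at this
      _ = _ := by rw [Finset.sum_const, Finset.card_range, nsmul_eq_mul]; push_cast; ring
  rw [← hN2] at h4
  have hh := hn_pos n
  have := nrm_nonneg adm_wBase p
  calc _ ≤ _ := h4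
    _ ≤ (C * ((n : ℝ) + 1) ^ 2 * hn n) * (((n : ℝ) + 1) * (‖(mc n).eval z‖ ^ 2 / hn n)) := by
        refine mul_le_mul hN h5 (Finset.sum_nonneg fun k _ => ?_) (by positivity)
        have := hn_pos k
        positivity
    _ = _ := by field_simp


/-! ### Comparison of power sums of roots -/

/-- Sum of logarithms. -/
noncomputable def lsum (s : Multiset ℂ) (w : ℂ) : ℂ := (s.map fun ζ => Complex.log (1 - ζ * w)).sum

/-- Sums appearing as derivatives. -/
noncomputable def rsum (s : Multiset ℂ) (k : ℕ) (w : ℂ) : ℂ :=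
  (s.map fun ζ => (ζ / (1 - ζ * w)) ^ (k + 1)).sum

lemma small_ne {ζ w : ℂ} (h : ‖ζ * w‖ < 1) : 1 - ζ * w ≠ 0 := by
  intro h0
  have : ζ * w = 1 := (sub_eq_zero.1 h0).symm
  rw [this] at h
  simp at h

lemma lsum_deriv (s : Multiset ℂ) (w : ℂ) (h : ∀ ζ ∈ s, ‖ζ * w‖ < 1) :
    HasDerivAt (lsum s) (-rsum s 0 w) w := by
  induction s using Multiset.induction with
  | empty => 
    have : lsum 0 = fun _ => 0 := by funext w; simp [lsum]
    rw [this]; simpa [rsum] using hasDerivAt_const w (0:ℂ)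
  | cons ζ s ih =>
    have h1 := ih fun z hz => h z (Multiset.mem_cons_of_mem hz)
    have h2 := h ζ (Multiset.mem_cons_self _ _)
    have h3 : HasDerivAt (fun w : ℂ => 1 - ζ * w) (-ζ) w := by
      simpa using ((hasDerivAt_id w).const_mul ζ).const_sub 1
    have h4 := h3.clog (by
      have := Complex.mem_slitPlane_of_norm_lt_one (z := -(ζ * w)) (by simpa using h2)
      simpa [sub_eq_add_neg] using this)
    have h5 := h4.fun_add h1
    have e : lsum (ζ ::ₘ s) = fun w => Complex.log (1 - ζ * w) + lsum s w := by
      funext w; simp [lsum]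
    rw [e]
    refine h5.congr_deriv ?_
    simp [rsum]; ring

lemma rsum_deriv (s : Multiset ℂ) (k : ℕ) (w : ℂ) (h : ∀ ζ ∈ s, ‖ζ * w‖ < 1) :
    HasDerivAt (rsum s k) (((k : ℂ) + 1) * rsum s (k + 1) w) w := by
  induction s using Multiset.induction with
  | empty => 
    have : rsum 0 k = fun _ => 0 := by funext w; simp [rsum]
    rw [this]; simpa [rsum] using hasDerivAt_const w (0:ℂ)
  | cons ζ s ih =>
    have h1 := ih fun z hz => h z (Multiset.mem_cons_of_mem hz)
    have h2 := small_ne (h ζ (Multiset.mem_cons_self _ _))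
    have h3 : HasDerivAt (fun w : ℂ => 1 - ζ * w) (-ζ) w := by
      simpa using ((hasDerivAt_id w).const_mul ζ).const_sub 1
    have h4 := (((hasDerivAt_const w ζ).fun_div h3 h2).fun_pow (k + 1))
    have h5 := h4.fun_add h1
    have e : rsum (ζ ::ₘ s) k = fun w => (ζ / (1 - ζ * w)) ^ (k + 1) + rsum s k w := by
      funext w; simp [rsum]
    rw [e]
    refine h5.congr_deriv ?_
    have e2 : rsum (ζ ::ₘ s) (k + 1) w = (ζ / (1 - ζ * w)) ^ (k + 1 + 1) + rsum s (k + 1) w := by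
      simp [rsum]
    rw [e2, Nat.add_sub_cancel]
    generalize 1 - ζ * w = u
    push_cast
    ring

lemma lsum_exp (s : Multiset ℂ) (w : ℂ) (h : ∀ ζ ∈ s, ‖ζ * w‖ < 1) :
    Complex.exp (lsum s w) = (s.map fun ζ => 1 - ζ * w).prod := by
  unfold lsum
  rw [Complex.exp_multiset_sum, Multiset.map_map]
  congr 1
  refine Multiset.map_congr rfl fun ζ hζ => ?_
  exact Complex.exp_log (small_ne (h ζ hζ))

lemma lsum_exp_poly (p : Polynomial ℂ) (hp : p.Monic) (w : ℂ) (hw : w ≠ 0)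
    (h : ∀ ζ ∈ p.roots, ‖ζ * w‖ < 1) :
    Complex.exp (lsum p.roots w) = w ^ p.natDegree * p.eval (1 / w) := by
  rw [lsum_exp _ _ h]
  have h1 := (IsAlgClosed.splits p).eq_prod_roots_of_monic hp
  have h2 : p.eval (1 / w) = (p.roots.map fun ζ => 1 / w - ζ).prod := by
    conv_lhs => rw [h1]
    rw [Polynomial.eval_multiset_prod, Multiset.map_map]
    congr 1
    refine Multiset.map_congr rfl fun ζ _ => ?_
    simp
  have h3 : p.natDegree = Multiset.card p.roots := (IsAlgClosed.splits p).natDegree_eq_card_roots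
  rw [h2, h3]
  have h4 : ∀ s : Multiset ℂ, (s.map fun ζ => 1 - ζ * w).prod
      = w ^ Multiset.card s * (s.map fun ζ => 1 / w - ζ).prod := by
    intro s
    induction s using Multiset.induction with
    | empty => simp
    | cons ζ s ih =>
      simp only [Multiset.map_cons, Multiset.prod_cons, Multiset.card_cons, ih, pow_succ]
      field_simp
  exact h4 _

lemma roots_pow_diff (p m : Polynomial ℂ) (n : ℕ) (hp : p.Monic) (hm : m.Monic) (hpd : p.natDegree = n)
    (hmd : m.natDegree = n) (ρ K : ℝ) (hρ : 0 < ρ) (hK : 1 ≤ K)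
    (hpr : ∀ z ∈ p.roots, ‖z‖ ≤ ρ) (hmr : ∀ z ∈ m.roots, ‖z‖ ≤ ρ)
    (hcmp : ∀ z : ℂ, ρ ≤ ‖z‖ → ‖p.eval z‖ ^ 2 ≤ K * ‖m.eval z‖ ^ 2) (k : ℕ) :
    ‖(p.roots.map fun z => z ^ (k + 1)).sum - (m.roots.map fun z => z ^ (k + 1)).sum‖
      ≤ ((k : ℝ) + 1) * (2 * (1 + Real.log K)) * (2 * ρ) ^ (k + 1) := by
  set f : ℂ → ℂ := fun w => lsum p.roots w - lsum m.roots w with hf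
  set B := Metric.ball (0 : ℂ) (1 / ρ) with hB
  have hsm : ∀ s : Multiset ℂ, (∀ z ∈ s, ‖z‖ ≤ ρ) → ∀ w ∈ B, ∀ ζ ∈ s, ‖ζ * w‖ < 1 := by
    intro s hs w hw ζ hζ
    have h1 : ‖w‖ < 1 / ρ := by simpa [hB] using hw
    rw [norm_mul]
    calc ‖ζ‖ * ‖w‖ ≤ ρ * ‖w‖ := by gcongr; exact hs ζ hζ
      _ < ρ * (1 / ρ) := by gcongr
      _ = 1 := by field_simp
  have hsp := hsm _ hpr
  have hsmm := hsm _ hmr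
  have hd : ∀ w ∈ B, HasDerivAt f (-(rsum p.roots 0 w - rsum m.roots 0 w)) w := by
    intro w hw
    have := (lsum_deriv _ w (hsp w hw)).fun_sub (lsum_deriv _ w (hsmm w hw))
    exact this.congr_deriv (by ring)
  have hdiff : DifferentiableOn ℂ f B := fun w hw => (hd w hw).differentiableAt.differentiableWithinAt
  have hopen : IsOpen B := Metric.isOpen_ball
  have hit : ∀ k : ℕ, ∀ w ∈ B, iteratedDeriv (k + 1) f w
      = -(k.factorial : ℂ) * (rsum p.roots k w - rsum m.roots k w) := by
    intro k
    induction k with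
    | zero =>
      intro w hw
      rw [zero_add, iteratedDeriv_one, (hd w hw).deriv]; simp
    | succ k ih =>
      intro w hw
      rw [iteratedDeriv_succ]
      have h1 : iteratedDeriv (k + 1) f =ᶠ[nhds w]
          fun w => -(k.factorial : ℂ) * (rsum p.roots k w - rsum m.roots k w) := by
        filter_upwards [hopen.mem_nhds hw] with x hx using ih x hx
      rw [h1.deriv_eq]
      have h2 := ((rsum_deriv _ k w (hsp w hw)).sub (rsum_deriv _ k w (hsmm w hw))).const_mul
        (-(k.factorial : ℂ))
      have h3 := h2.deriv
      refine h3.trans ?_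
      rw [Nat.factorial_succ]; push_cast; ring
  have hM : 0 < 1 + Real.log K := by have := Real.log_nonneg hK; linarith
  have hre : Set.MapsTo f B {z | z.re ≤ 1 + Real.log K} := by
    intro w hw
    simp only [Set.mem_ofPred_eq]
    by_cases hw0 : w = 0
    · subst hw0; simp [hf, lsum]; linarith
    have h1 : ‖w‖ < 1 / ρ := by simpa [hB] using hw
    have hwp : 0 < ‖w‖ := norm_pos_iff.2 hw0
    have h2 : ρ ≤ ‖1 / w‖ := by
      rw [norm_div, norm_one, le_div_iff₀ hwp]
      rw [lt_div_iff₀ hρ] at h1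
      linarith
    have h3 := hcmp _ h2
    have ep := lsum_exp_poly p hp w hw0 (hsp w hw)
    have em := lsum_exp_poly m hm w hw0 (hsmm w hw)
    have np := congrArg norm ep
    have nm := congrArg norm em
    rw [Complex.norm_exp, norm_mul, norm_pow, hpd] at np
    rw [Complex.norm_exp, norm_mul, norm_pow, hmd] at nm
    have h4 : Real.exp (2 * (lsum p.roots w).re) ≤ K * Real.exp (2 * (lsum m.roots w).re) := by
      rw [two_mul, two_mul, Real.exp_add, Real.exp_add, np, nm]
      calc ‖w‖ ^ n * ‖p.eval (1 / w)‖ * (‖w‖ ^ n * ‖p.eval (1 / w)‖)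
          = (‖w‖ ^ n) ^ 2 * ‖p.eval (1 / w)‖ ^ 2 := by ring
        _ ≤ (‖w‖ ^ n) ^ 2 * (K * ‖m.eval (1 / w)‖ ^ 2) := by gcongr
        _ = _ := by ring
    have h5 := Real.log_le_log (Real.exp_pos _) h4
    rw [Real.log_mul (by linarith) (Real.exp_pos _).ne', Real.log_exp, Real.log_exp] at h5
    simp only [hf, Complex.sub_re]
    have := Real.log_nonneg hK
    linarith
  have hρ1 : 0 < 1 / ρ := by positivity
  have hf0 : f 0 = 0 := by simp [hf, lsum]
  have hsub : Metric.closedBall (0 : ℂ) (1 / (2 * ρ)) ⊆ B := by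
    apply Metric.closedBall_subset_ball
    gcongr; linarith
  have hbd : ∀ w ∈ Metric.sphere (0 : ℂ) (1 / (2 * ρ)), ‖f w‖ ≤ 2 * (1 + Real.log K) := by
    intro w hw
    have h1 : ‖w‖ = 1 / (2 * ρ) := by simpa using hw
    have := Complex.borelCaratheodory_zero hM hdiff hre hρ1 (hsub (Metric.sphere_subset_closedBall hw)) hf0
    refine this.trans (le_of_eq ?_)
    rw [h1]; field_simp; norm_num
  have hc := Complex.norm_iteratedDeriv_le_of_forall_mem_sphere_norm_le (k + 1) (by positivity)
    ((hdiff.mono (by rw [closure_ball _ (by positivity)]; exact hsub)).diffContOnCl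
      (s := Metric.ball (0 : ℂ) (1 / (2 * ρ)))) hbd
  rw [hit k 0 (by simp [hB, hρ])] at hc
  have e : ∀ s : Multiset ℂ, rsum s k 0 = (s.map fun z => z ^ (k + 1)).sum := by
    intro s; simp [rsum]
  rw [e, e, norm_mul, norm_neg, Complex.norm_natCast, Nat.factorial_succ] at hc
  have hk0 : (0:ℝ) < k.factorial := by exact_mod_cast k.factorial_pos
  refine le_of_mul_le_mul_left (hc.trans (le_of_eq ?_)) hk0
  rw [one_div, inv_pow, div_inv_eq_mul]; push_cast; ring


/-- The Jacobi matrix (up to the factor `π/2`). -/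
noncomputable def Jm (n : ℕ) : Matrix (Fin n) (Fin n) ℝ :=
  Matrix.of fun i j => (if (j : ℕ) = i + 1 then ((i : ℕ) : ℝ) + 1 else 0)
    + (if (i : ℕ) = j + 1 then ((j : ℕ) : ℝ) + 1 else 0)

lemma Jm_herm (n : ℕ) : (Jm n).IsHermitian := by
  ext i j
  simp [Jm, Matrix.conjTranspose_apply, add_comm]

/-- normalisation -/
noncomputable def gJ (i : ℕ) : ℝ := ((π / 2) ^ i * (i.factorial : ℝ))⁻¹

lemma gJ_succ (i : ℕ) : gJ (i + 1) * (π / 2 * ((i : ℝ) + 1)) = gJ i := by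
  have := Real.pi_pos
  have h : (i.factorial : ℝ) ≠ 0 := by positivity
  simp only [gJ, Nat.factorial_succ]
  push_cast
  field_simp
  ring

lemma gJ_ne (i : ℕ) : gJ i ≠ 0 := by
  have := Real.pi_pos
  simp only [gJ]
  positivity

lemma sumFin_Jm (m : ℕ) (V : ℕ → Polynomial ℝ) (i : Fin (m + 1)) :
    ∑ j : Fin (m + 1), Polynomial.C (((π / 2) • Jm (m + 1)) i j) * V j
      = (if (i : ℕ) < m then Polynomial.C (π / 2 * ((i : ℕ) + 1)) * V (i + 1) else 0)
        + Polynomial.C (π / 2 * (i : ℕ)) * V (i - 1) := by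
  have e : ∀ j : Fin (m + 1), Polynomial.C (((π / 2) • Jm (m + 1)) i j) * V j
      = (fun j : ℕ => (if j = (i : ℕ) + 1 then Polynomial.C (π / 2 * ((i : ℕ) + 1)) * V (i + 1) else 0)
        + (if (i : ℕ) = j + 1 then Polynomial.C (π / 2 * (i : ℕ)) * V (i - 1) else 0)) (j : ℕ) := by
    intro j
    simp only [Matrix.smul_apply, Jm, Matrix.of_apply, smul_eq_mul]
    by_cases h1 : (j : ℕ) = i + 1
    · have h2 : ¬ (i : ℕ) = j + 1 := by omega
      rw [if_pos h1, if_neg h2, if_pos h1, if_neg h2, add_zero, add_zero, h1]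
    · by_cases h2 : (i : ℕ) = j + 1
      · rw [if_neg h1, if_pos h2, if_neg h1, if_pos h2, zero_add, zero_add, h2]
        push_cast; simp
      · simp [h1, h2]
  rw [Finset.sum_congr rfl (fun j _ => e j), Fin.sum_univ_eq_sum_range
    (fun j : ℕ => (if j = (i : ℕ) + 1 then Polynomial.C (π / 2 * ((i : ℕ) + 1)) * V (i + 1) else 0)
        + (if (i : ℕ) = j + 1 then Polynomial.C (π / 2 * (i : ℕ)) * V (i - 1) else 0)) (m + 1),
    Finset.sum_add_distrib, Finset.sum_ite_eq' ]
  congr 1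
  · simp
  · rcases Nat.eq_zero_or_pos (i : ℕ) with h | h
    · simp [h]
    · rw [Finset.sum_eq_single_of_mem ((i : ℕ) - 1)]
      · rw [if_pos (by omega)]
      · have := i.2
        rw [Finset.mem_range]; omega
      · intro b _ hb
        rw [if_neg (by omega)]

lemma charmatrix_V (m : ℕ) : (Matrix.charmatrix ((π / 2) • Jm (m + 1))).mulVec
      (fun i : Fin (m + 1) => Polynomial.C (gJ i) * mp i)
    = Pi.single (Fin.last m) (Polynomial.C (gJ m) * mp (m + 1)) := by
  ext1 i
  have hs : ∀ x : Fin (m + 1), Matrix.charmatrix ((π / 2) • Jm (m + 1)) i x * (Polynomial.C (gJ x) * mp x)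
      = (if x = i then Polynomial.X * (Polynomial.C (gJ x) * mp x) else 0)
        - Polynomial.C (((π / 2) • Jm (m + 1)) i x) * (Polynomial.C (gJ x) * mp x) := by
    intro x
    rw [Matrix.charmatrix_apply, Matrix.diagonal_apply, sub_mul]
    by_cases h : i = x
    · simp [h]
    · simp [h, Ne.symm h]
  rw [Matrix.mulVec, dotProduct, Finset.sum_congr rfl (fun x _ => hs x), Finset.sum_sub_distrib,
    sumFin_Jm m (fun k => Polynomial.C (gJ k) * mp k) i]
  simp only [Finset.sum_ite_eq', Finset.mem_univ, if_true]
  have hrec := mp_rec i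
  have h1 : Polynomial.C (π / 2 * (i : ℕ)) * (Polynomial.C (gJ ((i : ℕ) - 1)) * mp ((i : ℕ) - 1))
      = Polynomial.C (gJ i) * (Polynomial.C ((π / 2 * (i : ℕ)) ^ 2) * mp ((i : ℕ) - 1)) := by
    rcases hi : (i : ℕ) with _ | k
    · simp
    · rw [← mul_assoc, ← mul_assoc, ← Polynomial.C_mul, ← Polynomial.C_mul]
      simp only [Nat.add_sub_cancel]
      rw [← gJ_succ k]; push_cast; ring_nf
  have h2 : Polynomial.C (π / 2 * ((i : ℕ) + 1)) * (Polynomial.C (gJ ((i : ℕ) + 1)) * mp ((i : ℕ) + 1))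
      = Polynomial.C (gJ i) * mp ((i : ℕ) + 1) := by
    rw [← mul_assoc, ← Polynomial.C_mul, ← gJ_succ i, mul_comm (gJ _)]
  rw [h1, h2]
  have h3 : Polynomial.X * (Polynomial.C (gJ i) * mp i) = Polynomial.C (gJ i) * mp ((i : ℕ) + 1)
    + Polynomial.C (gJ i) * (Polynomial.C ((π / 2 * (i : ℕ)) ^ 2) * mp ((i : ℕ) - 1)) := by
    rw [mul_left_comm, hrec, mul_add]
  rw [h3]
  by_cases h : (i : ℕ) < m
  · rw [if_pos h, Pi.single_eq_of_ne (by rintro rfl; simp at h)]; ring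
  · have : i = Fin.last m := by ext; simp; omega
    subst this
    simp

lemma charpoly_Jm (n : ℕ) : ((π / 2) • Jm n).charpoly = mp n := by
  rcases n with _ | m
  · simp [mp, Matrix.charpoly]
  have h := congrArg (fun v => (Matrix.adjugate (Matrix.charmatrix ((π / 2) • Jm (m + 1)))).mulVec v 0)
    (charmatrix_V m)
  simp only [Matrix.mulVec_mulVec, Matrix.adjugate_mul, Matrix.smul_mulVec, Matrix.one_mulVec,
    Matrix.mulVec_single, Pi.smul_apply, smul_eq_mul] at h
  have h0 : mp (m + 1) ∣ ((π / 2) • Jm (m + 1)).charpoly := by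
    refine ⟨Matrix.adjugate (Matrix.charmatrix ((π / 2) • Jm (m + 1))) 0 (Fin.last m) * Polynomial.C (gJ m), ?_⟩
    simp [gJ, mp, Matrix.col] at h
    rw [Matrix.charpoly, h]
    simp [gJ]; ring
  refine Polynomial.eq_of_monic_of_dvd_of_natDegree_le (mp_monic_natDegree _).1
    (Matrix.charpoly_monic _) h0 ?_
  rw [Matrix.charpoly_natDegree_eq_dim, (mp_monic_natDegree _).2]
  simp

lemma trace_pow_herm {n : ℕ} (A : Matrix (Fin n) (Fin n) ℝ) (hA : A.IsHermitian) (k : ℕ) :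
    (A ^ k).trace = ∑ i, (hA.eigenvalues i) ^ k := by
  have hs := hA.spectral_theorem
  conv_lhs => rw [hs, ← map_pow, Unitary.conjStarAlgAut_apply, Matrix.trace_mul_comm, ← mul_assoc]
  simp [Matrix.diagonal_pow, Matrix.trace_diagonal]

lemma mc_roots_pow (n k : ℕ) : ((mc n).roots.map fun z => z ^ k).sum
    = (((π / 2) ^ k * ((Jm n) ^ k).trace : ℝ) : ℂ) := by
  have hA : ((π / 2) • Jm n).IsHermitian := by
    ext i j
    simp [Jm, Matrix.conjTranspose_apply, add_comm]
  have h1 : mc n = ∏ i, (Polynomial.X - Polynomial.C ((hA.eigenvalues i : ℝ) : ℂ)) := by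
    rw [mc, ← charpoly_Jm, hA.charpoly_eq, Polynomial.map_prod]
    simp
  have h2 : (mc n).roots = Multiset.map (fun i => ((hA.eigenvalues i : ℝ) : ℂ)) Finset.univ.val := by
    rw [h1, Polynomial.roots_prod _ _ (by simp [Finset.prod_ne_zero_iff, Polynomial.X_sub_C_ne_zero])]
    simp
  rw [h2, Multiset.map_map]
  have h3 := trace_pow_herm _ hA k
  rw [smul_pow, Matrix.trace_smul, smul_eq_mul] at h3
  rw [h3]
  push_cast
  rfl


lemma Jm_pow_succ (n k : ℕ) (i j : Fin n) : ((Jm n) ^ (k + 1)) i j =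
    (if h : (j : ℕ) + 1 < n then ((Jm n) ^ k) i ⟨j + 1, h⟩ * (((j : ℕ) : ℝ) + 1) else 0)
    + (if 0 < (j : ℕ) then ((Jm n) ^ k) i ⟨j - 1, by omega⟩ * ((j : ℕ) : ℝ) else 0) := by
  rw [pow_succ, Matrix.mul_apply]
  simp only [Jm, Matrix.of_apply, mul_add, Finset.sum_add_distrib]
  rw [add_comm]
  congr 1
  · split_ifs with h
    · rw [Finset.sum_eq_single_of_mem ⟨j + 1, h⟩ (Finset.mem_univ _)]
      · rw [if_pos rfl, mul_add]
      · intro b _ hb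
        rw [if_neg, mul_zero]
        intro h'; apply hb; ext; simp [h']
    · apply Finset.sum_eq_zero
      intro b _
      rw [if_neg (by omega), mul_zero]
  · split_ifs with h
    · rw [Finset.sum_eq_single_of_mem ⟨j - 1, by omega⟩ (Finset.mem_univ _)]
      · rw [if_pos (by simp; omega)]
        congr 1
        simp only []
        rw [Nat.cast_sub (by omega)]; simp
      · intro b _ hb
        rw [if_neg, mul_zero]
        intro h'; apply hb; ext; simp [h']
    · apply Finset.sum_eq_zero
      intro b _
      rw [if_neg (by omega), mul_zero]

/-- weighted walk counts on the half line -/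
noncomputable def wk : ℕ → ℕ → ℕ → ℝ
  | 0, i, j => if i = j then 1 else 0
  | (k + 1), i, j => wk k i (j + 1) * ((j : ℝ) + 1) + wk k i (j - 1) * (j : ℝ)

lemma wk_nonneg (k : ℕ) : ∀ i j, 0 ≤ wk k i j := by
  induction k with
  | zero => intro i j; simp only [wk]; split_ifs <;> norm_num
  | succ k ih =>
    intro i j
    simp only [wk]
    have := ih i (j + 1)
    have := ih i (j - 1)
    positivity

lemma wk_supp (k : ℕ) : ∀ i j, i + k < j → wk k i j = 0 := by
  induction k with
  | zero => intro i j h; simp only [wk]; rw [if_neg (by omega)]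
  | succ k ih =>
    intro i j h
    simp only [wk]
    rw [ih i (j + 1) (by omega), ih i (j - 1) (by omega)]; simp

lemma Jm_pow_bd (n k : ℕ) : ∀ i j : Fin n, 0 ≤ ((Jm n) ^ k) i j ∧ ((Jm n) ^ k) i j ≤ wk k i j := by
  induction k with
  | zero =>
    intro i j
    simp only [pow_zero, Matrix.one_apply, wk, Fin.ext_iff]
    split_ifs <;> simp
  | succ k ih =>
    intro i j
    rw [Jm_pow_succ]
    simp only [wk]
    constructor
    · apply add_nonneg
      · split_ifs with h
        · exact mul_nonneg (ih _ _).1 (by positivity)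
        · exact le_rfl
      · split_ifs with h
        · exact mul_nonneg (ih _ _).1 (by positivity)
        · exact le_rfl
    · apply add_le_add
      · split_ifs with h
        · exact mul_le_mul_of_nonneg_right (ih _ _).2 (by positivity)
        · exact mul_nonneg (wk_nonneg _ _ _) (by positivity)
      · split_ifs with h
        · exact mul_le_mul_of_nonneg_right (ih _ _).2 (by positivity)
        · exact mul_nonneg (wk_nonneg _ _ _) (by positivity)

lemma Jm_pow_eq (n k : ℕ) : ∀ i j : Fin n, (i : ℕ) + k < n → ((Jm n) ^ k) i j = wk k i j := by
  induction k with
  | zero =>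
    intro i j _
    simp only [pow_zero, Matrix.one_apply, wk, Fin.ext_iff]
  | succ k ih =>
    intro i j hi
    rw [Jm_pow_succ]
    simp only [wk]
    congr 1
    · split_ifs with h
      · rw [ih _ _ (by omega)]
      · rw [wk_supp _ _ _ (by omega), zero_mul]
    · split_ifs with h
      · rw [ih _ _ (by omega)]
      · have : (j : ℕ) = 0 := by omega
        simp [this]

lemma trace_bounds (n k : ℕ) : ∑ i ∈ Finset.range (n - k), wk k i i ≤ ((Jm n) ^ k).trace ∧
    ((Jm n) ^ k).trace ≤ ∑ i ∈ Finset.range n, wk k i i := by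
  constructor
  · have h1 : ∑ i ∈ Finset.range (n - k), wk k i i
        ≤ ∑ i ∈ Finset.range n, (if i < n - k then wk k i i else 0) := by
      rw [← Finset.sum_filter]
      apply Finset.sum_le_sum_of_subset_of_nonneg
      · intro i hi
        simp at hi ⊢
        omega
      · intro i _ _; exact wk_nonneg _ _ _
    refine h1.trans ?_
    rw [← Fin.sum_univ_eq_sum_range (fun i => if i < n - k then wk k i i else 0), Matrix.trace]
    apply Finset.sum_le_sum
    intro i _
    simp only [Matrix.diag_apply]
    split_ifs with h
    · rw [Jm_pow_eq n k i i (by omega)]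
    · exact (Jm_pow_bd n k i i).1
  · rw [← Fin.sum_univ_eq_sum_range (fun i => wk k i i), Matrix.trace]
    exact Finset.sum_le_sum fun i _ => (Jm_pow_bd n k i i).2

/-- the arcsine-type moments -/
noncomputable def Bk (k : ℕ) (d : ℤ) : ℝ :=
  (1 / π) * ∫ θ in (0 : ℝ)..π, (2 * Real.cos θ) ^ k * Real.cos (d * θ)

lemma Bk_zero (d : ℤ) : Bk 0 d = if d = 0 then 1 else 0 := by
  have := Real.pi_pos
  simp only [Bk, pow_zero, one_mul]
  split_ifs with h
  · subst h; simp
  · have hd : (d : ℝ) ≠ 0 := by exact_mod_cast h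
    rw [intervalIntegral.integral_comp_mul_left (fun x => Real.cos x) hd, integral_cos]
    simp [Real.sin_int_mul_pi]

lemma Bk_succ (k : ℕ) (d : ℤ) : Bk (k + 1) d = Bk k (d + 1) + Bk k (d - 1) := by
  simp only [Bk]
  rw [← mul_add, ← intervalIntegral.integral_add]
  · congr 1
    apply intervalIntegral.integral_congr
    intro θ _
    simp only
    have h1 : ((d + 1 : ℤ) : ℝ) * θ = d * θ + θ := by push_cast; ring
    have h2 : ((d - 1 : ℤ) : ℝ) * θ = d * θ - θ := by push_cast; ring
    rw [h1, h2, Real.cos_add, Real.cos_sub]; ring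
  · exact (by fun_prop : Continuous _).intervalIntegrable _ _
  · exact (by fun_prop : Continuous _).intervalIntegrable _ _

lemma tendsto_ratio_one (d : ℤ) (c : ℝ) (hc : ∀ᶠ i : ℕ in atTop, (((i : ℤ) + d).toNat : ℝ) + c = (i : ℝ) + (d + c)) :
    Tendsto (fun i : ℕ => ((((i : ℤ) + d).toNat : ℝ) + c) / i) atTop (nhds 1) := by
  have h := (tendsto_const_div_atTop_nhds_zero_nat ((d : ℝ) + c)).const_add 1
  rw [add_zero] at h
  refine h.congr' ?_
  filter_upwards [hc, eventually_gt_atTop 0] with i hi h0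
  have : (i : ℝ) ≠ 0 := by positivity
  rw [hi]; field_simp

lemma wk_tendsto (k : ℕ) : ∀ d : ℤ, Tendsto (fun i : ℕ => wk k i ((i : ℤ) + d).toNat / (i : ℝ) ^ k)
    atTop (nhds (Bk k d)) := by
  have hc : ∀ (d : ℤ) (c : ℝ), ∀ᶠ i : ℕ in atTop,
      (((i : ℤ) + d).toNat : ℝ) + c = (i : ℝ) + (d + c) := by
    intro d c
    filter_upwards [eventually_ge_atTop d.natAbs] with i hi
    have : ((((i : ℤ) + d).toNat : ℤ) : ℝ) = (((i : ℤ) + d : ℤ) : ℝ) := by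
      rw [Int.toNat_of_nonneg (by omega)]
    push_cast at this
    rw [this]; ring
  induction k with
  | zero =>
    intro d
    rw [Bk_zero]
    refine tendsto_const_nhds.congr' ?_
    filter_upwards [eventually_ge_atTop d.natAbs] with i hi
    simp only [wk, pow_zero, div_one]
    by_cases h : d = 0
    · simp [h]
    · rw [if_neg h, if_neg (by omega)]
  | succ k ih =>
    intro d
    have t1 := (ih (d + 1)).mul (tendsto_ratio_one d 1 (hc d 1))
    have t2 := (ih (d - 1)).mul (tendsto_ratio_one d 0 (hc d 0))
    have t := t1.add t2
    rw [mul_one, mul_one, ← Bk_succ] at t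
    refine t.congr' ?_
    filter_upwards [eventually_gt_atTop d.natAbs] with i hi
    have h0 : (i : ℝ) ≠ 0 := by
      have : 0 < i := by omega
      positivity
    have e1 : ((i : ℤ) + (d + 1)).toNat = ((i : ℤ) + d).toNat + 1 := by omega
    have e2 : ((i : ℤ) + (d - 1)).toNat = ((i : ℤ) + d).toNat - 1 := by omega
    simp only [wk]
    rw [e1, e2, pow_succ]
    field_simp
    ring

lemma cesaro_pow (u : ℕ → ℝ) (k : ℕ) (L : ℝ)
    (h : Tendsto (fun i : ℕ => u i / (i : ℝ) ^ k) atTop (nhds L)) :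
    Tendsto (fun n : ℕ => (∑ i ∈ Finset.range n, u i) / (n : ℝ) ^ (k + 1)) atTop
      (nhds (L / (k + 1))) := by
  set g : ℕ → ℝ := fun i => ((i : ℝ) + 1) ^ (k + 1) - (i : ℝ) ^ (k + 1) with hg
  have hg0 : ∀ i, 0 < g i := by
    intro i
    simp only [hg, sub_pos]
    gcongr
    linarith
  have hsum : ∀ n : ℕ, ∑ i ∈ Finset.range n, g i = (n : ℝ) ^ (k + 1) := by
    intro n
    have := Finset.sum_range_sub (fun i : ℕ => (i : ℝ) ^ (k + 1)) n
    simp only [hg]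
    push_cast at this
    rw [this]; simp
  have hgl : Tendsto (fun i : ℕ => g i / (i : ℝ) ^ k) atTop (nhds ((k : ℝ) + 1)) := by
    have hd : HasDerivAt (fun x : ℝ => x ^ (k + 1)) ((k : ℝ) + 1) 1 := by
      simpa using hasDerivAt_pow (k + 1) (1 : ℝ)
    have h2 := hd.tendsto_slope_zero
    have h3 : Tendsto (fun i : ℕ => ((i : ℝ))⁻¹) atTop (nhdsWithin 0 {0}ᶜ) := by
      rw [tendsto_nhdsWithin_iff]
      refine ⟨tendsto_inv_atTop_nhds_zero_nat, ?_⟩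
      filter_upwards [eventually_gt_atTop 0] with i hi
      have : (i : ℝ) ≠ 0 := by positivity
      simpa using this
    refine (h2.comp h3).congr' ?_
    filter_upwards [eventually_gt_atTop 0] with i hi
    have : (i : ℝ) ≠ 0 := by positivity
    simp only [Function.comp, hg, smul_eq_mul, inv_inv, one_pow]
    have e : (1 + (i : ℝ)⁻¹) = ((i : ℝ) + 1) / i := by field_simp
    rw [e, div_pow, pow_succ (i : ℝ) k]
    field_simp
  have hk : ((k : ℝ) + 1) ≠ 0 := by positivity
  have hul : Tendsto (fun i : ℕ => u i / g i) atTop (nhds (L / (k + 1))) := by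
    refine (h.div hgl hk).congr' ?_
    filter_upwards [eventually_gt_atTop 0] with i hi
    have : (i : ℝ) ≠ 0 := by positivity
    simp only [Pi.div_apply]
    field_simp
  have ho : (fun i => u i - L / (k + 1) * g i) =o[atTop] g := by
    rw [Asymptotics.isLittleO_iff_tendsto (fun x hx => absurd hx (hg0 x).ne')]
    have := hul.sub_const (L / (k + 1))
    rw [sub_self] at this
    refine this.congr fun i => ?_
    have := (hg0 i).ne'
    field_simp
  have hs := ho.sum_range (fun i => (hg0 i).le) (by
    simp only [hsum]
    exact (tendsto_pow_atTop (by omega)).comp tendsto_natCast_atTop_atTop)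
  simp only [hsum, Finset.sum_sub_distrib, ← Finset.mul_sum] at hs
  have := hs.tendsto_div_nhds_zero.add_const (L / (k + 1))
  rw [zero_add] at this
  refine this.congr' ?_
  filter_upwards [eventually_gt_atTop 0] with n hn
  have : (n : ℝ) ≠ 0 := by positivity
  field_simp
  ring

/-- Limit moments. -/
noncomputable def Mk (k : ℕ) : ℝ := (1 / ((k : ℝ) + 1)) * ((1 / π) * ∫ θ in (0 : ℝ)..π, (Real.cos θ) ^ k)

lemma Bk_Mk (k : ℕ) : Bk k 0 / (k + 1) = 2 ^ k * Mk k := by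
  simp only [Bk, Mk, mul_pow, Int.cast_zero, zero_mul, Real.cos_zero, mul_one]
  rw [intervalIntegral.integral_const_mul]
  ring

lemma trace_tendsto (k : ℕ) : Tendsto (fun n : ℕ => ((Jm n) ^ k).trace / (n : ℝ) ^ (k + 1)) atTop
    (nhds (2 ^ k * Mk k)) := by
  have h0 := wk_tendsto k 0
  simp only [add_zero, Int.toNat_natCast] at h0
  have h1 := cesaro_pow (fun i => wk k i i) k _ h0
  rw [Bk_Mk] at h1
  have h2 := (h1.comp (tendsto_sub_atTop_nat k))
  have h3 : Tendsto (fun n : ℕ => (((n - k : ℕ) : ℝ) / n) ^ (k + 1)) atTop (nhds 1) := by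
    have : Tendsto (fun n : ℕ => (((n - k : ℕ) : ℝ) / n)) atTop (nhds 1) := by
      have h := (tendsto_const_div_atTop_nhds_zero_nat (k : ℝ)).const_sub 1
      rw [sub_zero] at h
      refine h.congr' ?_
      filter_upwards [eventually_ge_atTop k, eventually_gt_atTop 0] with n hn h0
      have : (n : ℝ) ≠ 0 := by positivity
      rw [Nat.cast_sub hn]; field_simp
    simpa using this.pow (k + 1)
  have h4 := h2.mul h3
  rw [mul_one] at h4
  refine tendsto_of_tendsto_of_tendsto_of_le_of_le' h4 h1 ?_ ?_
  · filter_upwards [eventually_gt_atTop k] with n hn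
    have a : ((n - k : ℕ) : ℝ) ≠ 0 := by
      have : 0 < n - k := by omega
      positivity
    have e : (∑ i ∈ Finset.range (n - k), wk k i i) / ((n - k : ℕ) : ℝ) ^ (k + 1)
        * (((n - k : ℕ) : ℝ) / n) ^ (k + 1) = (∑ i ∈ Finset.range (n - k), wk k i i) / (n : ℝ) ^ (k + 1) := by
      rw [div_pow]; field_simp
    simp only [Function.comp]
    rw [e]
    exact div_le_div_of_nonneg_right (trace_bounds n k).1 (by positivity)
  · exact Eventually.of_forall fun n => div_le_div_of_nonneg_right (trace_bounds n k).2 (by positivity)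

lemma mc_moment (k : ℕ) : Tendsto (fun n : ℕ => ((mc n).roots.map fun z : ℂ => (z / ((π : ℂ) * (n : ℂ))) ^ k).sum / (n : ℂ))
    atTop (nhds ((Mk k : ℝ) : ℂ)) := by
  have h := ((trace_tendsto k).const_mul ((1 / 2 : ℝ) ^ k))
  rw [← mul_assoc, ← mul_pow] at h
  norm_num at h
  have h2 := (Complex.continuous_ofReal.tendsto _).comp h
  refine h2.congr' ?_
  filter_upwards [eventually_gt_atTop 0] with n hn
  have h0 : (n : ℂ) ≠ 0 := by exact_mod_cast hn.ne'
  have hp : (π : ℂ) ≠ 0 := by exact_mod_cast Real.pi_ne_zero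
  have e : ((mc n).roots.map fun z : ℂ => (z / ((π : ℂ) * (n : ℂ))) ^ k).sum
      = ((mc n).roots.map fun z => z ^ k).sum / (π * n) ^ k := by
    simp only [div_pow]
    rw [Multiset.sum_map_div]
  rw [e, mc_roots_pow]
  simp only [Function.comp]
  push_cast
  rw [mul_pow, div_pow, pow_succ, div_pow]
  field_simp
  simp


lemma psi_eq (x : ℝ) (hx : x ≠ 0) (h1 : -1 ≤ x) (h2 : x ≤ 1) :
    psiDens x = (1 / π) * (Real.log (1 + Real.sqrt (1 - x ^ 2)) - Real.log x) := by
  rw [psiDens, Real.log_div (by positivity) (by positivity), Real.log_abs]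

lemma psi_nonneg (x : ℝ) (h1 : -1 ≤ x) (h2 : x ≤ 1) : 0 ≤ psiDens x := by
  have := Real.pi_pos
  rw [psiDens]
  apply mul_nonneg (by positivity)
  by_cases hx : x = 0
  · simp [hx]
  apply Real.log_nonneg
  rw [le_div_iff₀ (by positivity), one_mul]
  have := abs_le.2 ⟨h1, h2⟩
  have := Real.sqrt_nonneg (1 - x ^ 2)
  linarith

lemma psi_int : IntervalIntegrable psiDens volume (-1) 1 := by
  have h : IntervalIntegrable (fun x : ℝ => (1 / π) * (Real.log (1 + Real.sqrt (1 - x ^ 2)) - Real.log x))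
      volume (-1) 1 := by
    apply IntervalIntegrable.const_mul
    apply IntervalIntegrable.sub
    · apply Continuous.intervalIntegrable
      apply Continuous.log
      · fun_prop
      · intro x
        positivity
    · exact intervalIntegral.intervalIntegrable_log'
  refine h.congr_ae ?_
  have h0 : ∀ᵐ x ∂(volume : Measure ℝ), x ≠ 0 := by
    simp [ae_iff]
  rw [Filter.EventuallyEq, ae_restrict_iff' measurableSet_uIoc]
  filter_upwards [h0] with x hx hm
  rw [Set.uIoc_of_le (by norm_num)] at hm
  rw [psi_eq x hx hm.1.le hm.2]

lemma psi_moment (k : ℕ) : ∫ x in (-1 : ℝ)..1, x ^ k * psiDens x = Mk k := by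
  have hpi := Real.pi_pos
  set A : ℝ → ℝ := fun x => ∫ θ in (Real.arccos x)..π, (Real.cos θ) ^ k with hA
  have hAc : Continuous A := by
    have h1 : Continuous (fun u : ℝ => ∫ θ in π..u, (Real.cos θ) ^ k) :=
      intervalIntegral.continuous_primitive (fun a b => (by fun_prop : Continuous fun θ => (Real.cos θ) ^ k).intervalIntegrable _ _) _
    have h2 := (h1.comp Real.continuous_arccos).neg
    refine h2.congr fun x => ?_
    simp only [Function.comp, hA]
    rw [intervalIntegral.integral_symm]; simp
  set G : ℝ → ℝ := fun x => (1 / π) * ((1 / ((k : ℝ) + 1)) * (x ^ (k + 1) * Real.log (1 + Real.sqrt (1 - x ^ 2))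
    - x ^ k * (x * Real.log x) + A x)) with hG
  have hGc : Continuous G := by
    have h1 : Continuous fun x : ℝ => Real.log (1 + Real.sqrt (1 - x ^ 2)) := by
      apply Continuous.log
      · fun_prop
      · intro x
        positivity
    have h2 := Real.continuous_mul_log
    simp only [hG]
    fun_prop
  have hintg : IntervalIntegrable (fun x => x ^ k * psiDens x) volume (-1) 1 :=
    psi_int.continuousOn_mul (by fun_prop)
  have hder : ∀ x ∈ Set.Ioo (-1 : ℝ) 1 \ {0}, HasDerivAt G (x ^ k * psiDens x) x := by
    rintro x ⟨⟨h1, h2⟩, h0⟩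
    have hx0 : x ≠ 0 := by simpa using h0
    have hpos : 0 < 1 - x ^ 2 := by nlinarith
    have hs : 0 < Real.sqrt (1 - x ^ 2) := Real.sqrt_pos.2 hpos
    have hsq : Real.sqrt (1 - x ^ 2) ^ 2 = 1 - x ^ 2 := Real.sq_sqrt hpos.le
    have d0 : HasDerivAt (fun x : ℝ => 1 - x ^ 2) (-(2 * x)) x := by
      simpa using (hasDerivAt_pow 2 x).const_sub 1
    have d1 := (d0.sqrt hpos.ne').const_add 1
    have d2 := d1.log (by positivity)
    have d3 := (hasDerivAt_pow (k + 1) x).mul d2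
    have d4 := (hasDerivAt_pow (k + 1) x).mul (Real.hasDerivAt_log hx0)
    have dA : HasDerivAt A (x ^ k / Real.sqrt (1 - x ^ 2)) x := by
      have hc : Continuous fun θ => (Real.cos θ) ^ k := by fun_prop
      have e1 := intervalIntegral.integral_hasDerivAt_left (a := Real.arccos x) (b := π)
        (hc.intervalIntegrable _ _) (hc.stronglyMeasurableAtFilter _ _) hc.continuousAt
      have e2 := e1.comp x (Real.hasDerivAt_arccos h1.ne' h2.ne)
      rw [Real.cos_arccos h1.le h2.le] at e2
      refine e2.congr_deriv ?_
      ring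
    have d5 := (((d3.sub d4).add dA).const_mul (1 / ((k : ℝ) + 1))).const_mul (1 / π)
    have d6 := d5.congr_of_eventuallyEq (f₁ := G) (Eventually.of_forall fun y => by
      simp only [hG, Pi.mul_apply, Pi.sub_apply, Pi.add_apply]
      ring)
    refine d6.congr_deriv ?_
    rw [psi_eq x hx0 h1.le h2.le]
    set s := Real.sqrt (1 - x ^ 2) with hsdef
    have hk : ((k : ℝ) + 1) ≠ 0 := by positivity
    have hs1 : 1 + s ≠ 0 := by positivity
    have key : x ^ (k + 1) * (-(2 * x) / (2 * s) / (1 + s)) - x ^ (k + 1) * x⁻¹ + x ^ k / s = 0 := by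
      rw [pow_succ]
      field_simp
      linear_combination (-x ^ k) * hsq
    push_cast
    have hkk : 1 / ((k : ℝ) + 1) * ((k : ℝ) + 1) = 1 := by field_simp
    linear_combination (1 / π * (1 / ((k : ℝ) + 1))) * key
      + (1 / π) * x ^ k * (Real.log (1 + s) - Real.log x) * hkk
  have := MeasureTheory.integral_eq_of_hasDerivAt_off_countable_of_le G (fun x => x ^ k * psiDens x)
    (by norm_num : (-1 : ℝ) ≤ 1) (Set.countable_singleton (0 : ℝ)) hGc.continuousOn hder hintg
  rw [this]
  simp [hG, hA, Mk]
  ring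


/-- average over a multiset -/
noncomputable def av (Z : ℕ → Multiset ℂ) (n : ℕ) (g : ℂ → ℝ) : ℝ := ((Z n).map g).sum / (n : ℝ)

lemma av_add (Z : ℕ → Multiset ℂ) (n : ℕ) (g h : ℂ → ℝ) :
    av Z n (fun z => g z + h z) = av Z n g + av Z n h := by
  simp only [av]
  rw [Multiset.sum_map_add, add_div]

lemma av_sub (Z : ℕ → Multiset ℂ) (n : ℕ) (g h : ℂ → ℝ) :
    av Z n (fun z => g z - h z) = av Z n g - av Z n h := by
  simp only [av]
  rw [Multiset.sum_map_sub, sub_div]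

lemma av_mul (Z : ℕ → Multiset ℂ) (n : ℕ) (c : ℝ) (g : ℂ → ℝ) :
    av Z n (fun z => c * g z) = c * av Z n g := by
  simp only [av]
  rw [Multiset.sum_map_mul_left, mul_div_assoc]

lemma av_const (Z : ℕ → Multiset ℂ) (n : ℕ) (c : ℝ) (hn : 0 < n) (hc : (Z n).card = n) :
    av Z n (fun _ => c) = c := by
  have : (n : ℝ) ≠ 0 := by positivity
  simp only [av]
  rw [Multiset.map_const', Multiset.sum_replicate, hc, nsmul_eq_mul]
  field_simp

lemma av_le (Z : ℕ → Multiset ℂ) (n : ℕ) (g h : ℂ → ℝ) (hgh : ∀ z ∈ Z n, g z ≤ h z) :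
    av Z n g ≤ av Z n h := by
  simp only [av]
  exact div_le_div_of_nonneg_right (Multiset.sum_map_le_sum_map _ _ hgh) (by positivity)

lemma av_abs_le (Z : ℕ → Multiset ℂ) (n : ℕ) (g h : ℂ → ℝ) (hgh : ∀ z ∈ Z n, |g z| ≤ h z) :
    |av Z n g| ≤ av Z n h := by
  rw [abs_le]
  constructor
  · have := av_le Z n (fun z => (-1) * h z) g (fun z hz => by
      have := (abs_le.1 (hgh z hz)).1; linarith)
    rw [av_mul] at this; linarith
  · exact av_le Z n g h fun z hz => (abs_le.1 (hgh z hz)).2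

lemma av_re_close (Z : ℕ → Multiset ℂ) (R : ℝ) (hcard : ∀ n, (Z n).card = n)
    (hR : ∀ n, 0 < n → ∀ z ∈ Z n, ‖z‖ ≤ R) (him : ∀ n, 0 < n → ∀ z ∈ Z n, z.im ≤ 0)
    (him0 : Tendsto (fun n => av Z n (fun z => -z.im)) atTop (nhds 0))
    (g : ℂ → ℝ) (hg : Continuous g) :
    Tendsto (fun n => av Z n (fun z => g z - g ((z.re : ℝ) : ℂ))) atTop (nhds 0) := by
  have hK : IsCompact (Metric.closedBall (0 : ℂ) R) := isCompact_closedBall _ _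
  have huc := hK.uniformContinuousOn_of_continuous hg.continuousOn
  obtain ⟨M, hM⟩ := hK.exists_bound_of_continuousOn hg.continuousOn
  rw [Metric.uniformContinuousOn_iff] at huc
  rw [Metric.tendsto_atTop]
  intro ε hε
  obtain ⟨δ, hδ, hd⟩ := huc (ε / 2) (by positivity)
  have hM' : 0 ≤ |M| := abs_nonneg M
  have hC : 0 ≤ 2 * |M| / δ := by positivity
  obtain ⟨N, hN⟩ := Metric.tendsto_atTop.1 him0 (ε / 2 / (2 * |M| / δ + 1)) (by positivity)
  refine ⟨N + 1, fun n hn => ?_⟩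
  have hn0 : 0 < n := by omega
  have hb := hN n (by omega)
  rw [Real.dist_eq, sub_zero] at hb ⊢
  have hb2 := (le_abs_self _).trans_lt hb
  have hpt : ∀ z ∈ Z n, |g z - g ((z.re : ℝ) : ℂ)| ≤ ε / 2 + (2 * |M| / δ) * (-z.im) := by
    intro z hz
    have h1 : z ∈ Metric.closedBall (0 : ℂ) R := by simpa using hR n hn0 z hz
    have h2 : ((z.re : ℝ) : ℂ) ∈ Metric.closedBall (0 : ℂ) R := by
      have := (Complex.abs_re_le_norm z).trans (hR n hn0 z hz)
      simpa using this
    have hi := him n hn0 z hz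
    have hdist : dist z ((z.re : ℝ) : ℂ) = -z.im := by
      have e : z - ((z.re : ℝ) : ℂ) = ((z.im : ℝ) : ℂ) * Complex.I := by
        apply Complex.ext <;> simp
      rw [dist_eq_norm, e, norm_mul, Complex.norm_I, mul_one, Complex.norm_real, Real.norm_eq_abs,
        abs_of_nonpos hi]
    by_cases hlt : -z.im < δ
    · have := hd z h1 _ h2 (by rw [hdist]; exact hlt)
      rw [Real.dist_eq] at this
      have : 0 ≤ (2 * |M| / δ) * (-z.im) := mul_nonneg hC (by linarith)
      linarith
    · push Not at hlt
      have a1 := (hM z h1).trans (le_abs_self M)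
      have a2 := (hM _ h2).trans (le_abs_self M)
      rw [Real.norm_eq_abs] at a1 a2
      have a3 := abs_sub (g z) (g ((z.re : ℝ) : ℂ))
      have a4 : 2 * |M| ≤ (2 * |M| / δ) * (-z.im) := by
        rw [div_mul_eq_mul_div, le_div_iff₀ hδ]
        exact mul_le_mul_of_nonneg_left hlt (by positivity)
      linarith
  have h := av_abs_le Z n _ _ hpt
  rw [av_add, av_const Z n _ hn0 (hcard n), av_mul] at h
  have hnn : 0 ≤ av Z n (fun z => -z.im) := by
    have := av_le Z n (fun _ => 0) (fun z => -z.im) (fun z hz => by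
      have := him n hn0 z hz; linarith)
    rwa [av_const Z n _ hn0 (hcard n)] at this
  rw [lt_div_iff₀ (by positivity)] at hb2
  by_cases h0 : av Z n (fun z => -z.im) = 0
  · rw [h0] at h; linarith
  · have := lt_of_le_of_ne hnn (Ne.symm h0)
    nlinarith

lemma weak_of_moments (Z : ℕ → Multiset ℂ) (R : ℝ) (hR1 : 1 ≤ R) (hcard : ∀ n, (Z n).card = n)
    (hR : ∀ n, 0 < n → ∀ z ∈ Z n, ‖z‖ ≤ R) (him : ∀ n, 0 < n → ∀ z ∈ Z n, z.im ≤ 0)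
    (hmom : ∀ k : ℕ, Tendsto (fun n : ℕ => ((Z n).map fun z => z ^ k).sum / (n : ℂ)) atTop
      (nhds ((Mk k : ℝ) : ℂ)))
    (f : ℂ → ℝ) (hf : Continuous f) :
    Tendsto (fun n => av Z n f) atTop (nhds (∫ x in (-1 : ℝ)..1, f (x : ℂ) * psiDens x)) := by
  have hre : ∀ k : ℕ, Tendsto (fun n => av Z n (fun z => (z ^ k).re)) atTop (nhds (Mk k)) := by
    intro k
    have := (Complex.continuous_re.tendsto _).comp (hmom k)
    rw [Complex.ofReal_re] at this
    refine this.congr fun n => ?_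
    simp only [Function.comp, av]
    have e := map_multiset_sum Complex.reAddGroupHom ((Z n).map fun z => z ^ k)
    simp only [Complex.coe_reAddGroupHom, Multiset.map_map, Function.comp_def] at e
    rw [Complex.div_natCast_re, e]
  have him0 : Tendsto (fun n => av Z n (fun z => -z.im)) atTop (nhds 0) := by
    have := ((Complex.continuous_im.tendsto _).comp (hmom 1)).neg
    rw [Complex.ofReal_im, neg_zero] at this
    refine this.congr fun n => ?_
    simp only [Function.comp, av, pow_one]
    have e := map_multiset_sum Complex.imAddGroupHom ((Z n).map fun z => z)
    simp only [Complex.coe_imAddGroupHom, Multiset.map_map, Function.comp_def] at e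
    rw [Complex.div_natCast_im, e, Multiset.sum_map_neg, neg_div]
  have hclose := av_re_close Z R hcard hR him him0
  have hrek : ∀ k : ℕ, Tendsto (fun n => av Z n (fun z => z.re ^ k)) atTop (nhds (Mk k)) := by
    intro k
    have := (hre k).sub (hclose (fun z => (z ^ k).re) (by fun_prop))
    rw [sub_zero] at this
    refine this.congr fun n => ?_
    rw [av_sub]
    simp only [← Complex.ofReal_pow, Complex.ofReal_re]
    ring
  have hpsi := psi_int
  have hpoly : ∀ q : Polynomial ℝ, Tendsto (fun n => av Z n (fun z => q.eval z.re)) atTop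
      (nhds (∫ x in (-1 : ℝ)..1, q.eval x * psiDens x)) := by
    intro q
    induction q using Polynomial.induction_on' with
    | add p q hp hq =>
      have := hp.add hq
      rw [← intervalIntegral.integral_add (hpsi.continuousOn_mul (by fun_prop))
        (hpsi.continuousOn_mul (by fun_prop))] at this
      simp only [Polynomial.eval_add, av_add, add_mul]
      exact this
    | monomial k a =>
      have := (hrek k).const_mul a
      simp only [Polynomial.eval_monomial, av_mul, mul_assoc, intervalIntegral.integral_const_mul,
        psi_moment]
      exact this
  have hmain : Tendsto (fun n => av Z n (fun z => f ((z.re : ℝ) : ℂ))) atTop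
      (nhds (∫ x in (-1 : ℝ)..1, f (x : ℂ) * psiDens x)) := by
    rw [Metric.tendsto_atTop]
    intro ε hε
    have hfc : Continuous fun x : ℝ => f (x : ℂ) := by fun_prop
    obtain ⟨q, hq⟩ := exists_polynomial_near_of_continuousOn (-R) R (fun x : ℝ => f (x : ℂ))
      hfc.continuousOn (ε / 4) (by positivity)
    obtain ⟨N, hN⟩ := Metric.tendsto_atTop.1 (hpoly q) (ε / 4) (by positivity)
    have hintg : |(∫ x in (-1 : ℝ)..1, q.eval x * psiDens x) - ∫ x in (-1 : ℝ)..1, f (x : ℂ) * psiDens x| ≤ ε / 4 := by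
      rw [← intervalIntegral.integral_sub (hpsi.continuousOn_mul (by fun_prop))
        (hpsi.continuousOn_mul (by fun_prop))]
      have hb := intervalIntegral.norm_integral_le_of_norm_le (μ := volume) (a := (-1 : ℝ)) (b := 1)
        (f := fun x : ℝ => q.eval x * psiDens x - f (x : ℂ) * psiDens x)
        (g := fun x => ε / 4 * psiDens x) (by norm_num) (Eventually.of_forall fun x hx => by
          have h1 := hq x ⟨by linarith [hx.1], by linarith [hx.2]⟩
          have h2 := psi_nonneg x hx.1.le hx.2
          rw [← sub_mul, norm_mul, Real.norm_eq_abs, Real.norm_eq_abs, abs_of_nonneg h2]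
          exact mul_le_mul_of_nonneg_right h1.le h2) (hpsi.const_mul _)
      rw [intervalIntegral.integral_const_mul] at hb
      have h0 := psi_moment 0
      have hm : Mk 0 = 1 := by
        have := Real.pi_pos
        simp [Mk]
      simp only [pow_zero, one_mul, hm] at h0
      rw [h0, mul_one] at hb
      exact hb
    refine ⟨N + 1, fun n hn => ?_⟩
    have hn0 : 0 < n := by omega
    have h1 := hN n (by omega)
    rw [Real.dist_eq] at h1 ⊢
    have h2 := av_abs_le Z n (fun z => f ((z.re : ℝ) : ℂ) - q.eval z.re) (fun _ => ε / 4) (fun z hz => by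
      have a := (Complex.abs_re_le_norm z).trans (hR n hn0 z hz)
      have := hq z.re (abs_le.1 a)
      rw [abs_sub_comm]
      exact this.le)
    rw [av_const Z n _ hn0 (hcard n), av_sub] at h2
    have h3 := abs_lt.1 h1
    have h4 := abs_le.1 h2
    have h5 := abs_le.1 hintg
    rw [abs_lt]
    constructor <;> linarith [h3.1, h3.2, h4.1, h4.2, h5.1, h5.2]
  have := hmain.add (hclose f hf)
  rw [add_zero] at this
  refine this.congr fun n => ?_
  rw [av_sub]; ring


lemma card_roots_c (p : Polynomial ℂ) : p.roots.card = p.natDegree :=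
  IsAlgClosed.card_roots_eq_natDegree

lemma log_small (C : ℝ) (hC : 0 < C) :
    Tendsto (fun n : ℕ => (1 + Real.log ((1 + C) * ((n : ℝ) + 1) ^ 3)) / (n : ℝ)) atTop (nhds 0) := by
  have h1 : Tendsto (fun x : ℝ => Real.log x / x) atTop (nhds 0) := by
    have := Real.isLittleO_log_id_atTop.tendsto_div_nhds_zero
    exact this
  have h2 : Tendsto (fun n : ℕ => ((n + 1 : ℕ) : ℝ)) atTop atTop :=
    tendsto_natCast_atTop_atTop.comp (tendsto_add_atTop_nat 1)
  have h3 := h1.comp h2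
  have h4 : Tendsto (fun n : ℕ => 1 + 1 / (n : ℝ)) atTop (nhds 1) := by
    have := (tendsto_const_div_atTop_nhds_zero_nat (1 : ℝ)).const_add 1
    rwa [add_zero] at this
  have h5 := ((h3.mul h4).const_mul 3).add
    (tendsto_const_div_atTop_nhds_zero_nat (1 + Real.log (1 + C)))
  simp only [zero_mul, mul_zero, add_zero] at h5
  refine h5.congr' ?_
  filter_upwards [eventually_gt_atTop 0] with n hn
  have hn0 : (n : ℝ) ≠ 0 := by positivity
  have hn1 : (n : ℝ) + 1 ≠ 0 := by positivity
  rw [Real.log_mul (by positivity) (by positivity), Real.log_pow]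
  simp only [Function.comp]
  push_cast
  field_simp
  ring

lemma orth_moment (ν : ℝ) (h0 : 0 < ν) (h1 : ν < 1) (p : ℕ → Polynomial ℂ)
    (hp : ∀ n, IsOrth ν n (p n)) (k : ℕ) :
    Tendsto (fun n : ℕ => ((p n).roots.map fun z : ℂ => (z / ((π : ℂ) * (n : ℂ))) ^ k).sum / (n : ℂ))
      atTop (nhds ((Mk k : ℝ) : ℂ)) := by
  have hm := mc_moment k
  have hpi := Real.pi_pos
  rcases k with _ | j
  · refine hm.congr fun n => ?_
    simp [card_roots_c, mc_natDegree, (hp n).2.1]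
  obtain ⟨R, hR, hz⟩ := orth_zero ν h0 h1
  obtain ⟨C, hC, hcmp⟩ := orth_compare ν h0 h1
  set D : ℝ := ((j : ℝ) + 1) * 2 * (2 * max R π / π) ^ (j + 1) with hD
  have hlim := (log_small C hC).const_mul D
  rw [mul_zero] at hlim
  have hdiff : Tendsto (fun n : ℕ => ((p n).roots.map fun z : ℂ => (z / ((π : ℂ) * (n : ℂ))) ^ (j + 1)).sum / (n : ℂ)
      - ((mc n).roots.map fun z : ℂ => (z / ((π : ℂ) * (n : ℂ))) ^ (j + 1)).sum / (n : ℂ)) atTop (nhds 0) := by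
    refine squeeze_zero_norm' ?_ hlim
    filter_upwards [eventually_gt_atTop 0] with n hn
    have hn0 : (0 : ℝ) < n := by exact_mod_cast hn
    have hρ : 0 < max R π * n := mul_pos (lt_max_of_lt_left hR) hn0
    have hK : 1 ≤ (1 + C) * ((n : ℝ) + 1) ^ 3 := by
      have : 1 ≤ ((n : ℝ) + 1) ^ 3 := one_le_pow₀ (by linarith)
      nlinarith
    have hb := roots_pow_diff (p n) (mc n) n (hp n).1 (mc_monic n) (hp n).2.1 (mc_natDegree n)
      (max R π * n) ((1 + C) * ((n : ℝ) + 1) ^ 3) hρ hK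
      (fun z hzr => ((hz n (p n) (hp n) z (Polynomial.isRoot_of_mem_roots hzr)).2).trans
        (mul_le_mul_of_nonneg_right (le_max_left _ _) hn0.le))
      (fun z hzr => by
        by_contra hcon
        push Not at hcon
        have hge : π * n ≤ ‖z‖ :=
          (mul_le_mul_of_nonneg_right (le_max_right R π) hn0.le).trans hcon.le
        have h2 := mc_ne_zero n hn z hge n le_rfl
        have h3 : (mc n).eval z = 0 := Polynomial.isRoot_of_mem_roots hzr
        rw [h3] at h2
        simp at h2)
      (fun z hzn => by
        have hge : π * n ≤ ‖z‖ :=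
          (mul_le_mul_of_nonneg_right (le_max_right R π) hn0.le).trans hzn
        refine (hcmp n (p n) hn (hp n) z hge).trans ?_
        apply mul_le_mul_of_nonneg_right _ (by positivity)
        apply mul_le_mul_of_nonneg_right _ (by positivity)
        linarith) j
    have e : ∀ q : Polynomial ℂ, (q.roots.map fun z : ℂ => (z / ((π : ℂ) * (n : ℂ))) ^ (j + 1)).sum
        = (q.roots.map fun z => z ^ (j + 1)).sum / ((π : ℂ) * (n : ℂ)) ^ (j + 1) := by
      intro q
      simp only [div_pow]
      rw [Multiset.sum_map_div]
    rw [e, e, ← sub_div, ← sub_div, norm_div, norm_div, norm_pow, norm_mul, Complex.norm_natCast,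
      Complex.norm_real, Real.norm_eq_abs, abs_of_pos hpi]
    have e2 : D * ((1 + Real.log ((1 + C) * ((n : ℝ) + 1) ^ 3)) / n)
        = (((j : ℝ) + 1) * (2 * (1 + Real.log ((1 + C) * ((n : ℝ) + 1) ^ 3))) * (2 * (max R π * n)) ^ (j + 1))
          / (π * n) ^ (j + 1) / n := by
      rw [hD, div_pow, mul_pow π, ← mul_assoc 2 (max R π) (n : ℝ), mul_pow (2 * max R π)]
      field_simp
    rw [e2]
    gcongr
  have := hdiff.add hm
  rw [zero_add] at this
  refine this.congr fun n => ?_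
  ring

/-- **Theorem (weak convergence of zeros).**
Let `0 < ν ≤ 1/2`. Then for all sufficiently large `n` the Hankel determinant `Δ_n`
is nonzero (so `P_n` exists), and for every bounded continuous `f : ℂ → ℝ`,
`(1/n) ∑ f(z/(iπn)) → ∫_{-1}^1 f(x) ψ(x) dx`, where the sum is over the roots of `P_n`
counted with multiplicity. -/
theorem zeros_weak_convergence (ν : ℝ) (hν0 : 0 < ν) (hν : ν ≤ 1 / 2) :
    ∃ n₀ : ℕ, (∀ n ≥ n₀, hankelDet ν n ≠ 0) ∧
      ∀ P : ℕ → Polynomial ℂ, (∀ n ≥ n₀, IsBesselOP ν n (P n)) →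
        ∀ f : BoundedContinuousFunction ℂ ℝ,
          Tendsto
            (fun n : ℕ =>
              (((P n).roots.map fun z => f (z / (Complex.I * π * n))).sum) / n)
            atTop (nhds (∫ x in (-1 : ℝ)..1, f (x : ℂ) * psiDens x)) := by
  have h1 : ν < 1 := by linarith
  have hpi := Real.pi_pos
  refine ⟨0, fun n _ => hankel_ne ν hν0 h1 n, fun P hP f => ?_⟩
  set p : ℕ → Polynomial ℂ := fun n => (P n).scaleRoots (-Complex.I) with hpdef
  have hp : ∀ n, IsOrth ν n (p n) := fun n =>
    isOrth_of_bessel ν hν0 h1 n (P n) (hP n (Nat.zero_le n))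
  obtain ⟨R, hR, hz⟩ := orth_zero ν hν0 h1
  have hroots : ∀ n, (p n).roots = (P n).roots.map (fun z => -Complex.I * z) := by
    intro n
    simp only [hpdef]
    exact Polynomial.roots_scaleRoots (P n) (isUnit_iff_ne_zero.2 (neg_ne_zero.2 Complex.I_ne_zero))
  have key := weak_of_moments
    (fun n => (p n).roots.map fun z : ℂ => z / ((π : ℂ) * (n : ℂ))) (max 1 (R / π)) (le_max_left _ _)
    (fun n => by
      rw [Multiset.card_map, card_roots_c]
      exact (hp n).2.1)
    (fun n hn z hzm => by
      obtain ⟨w, hw, rfl⟩ := Multiset.mem_map.1 hzm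
      have h := (hz n (p n) (hp n) w (Polynomial.isRoot_of_mem_roots hw)).2
      have hn0 : (0 : ℝ) < n := by exact_mod_cast hn
      refine le_trans ?_ (le_max_right _ _)
      rw [norm_div, norm_mul, Complex.norm_natCast, Complex.norm_real, Real.norm_eq_abs,
        abs_of_pos hpi, div_le_div_iff₀ (by positivity) hpi]
      nlinarith)
    (fun n hn z hzm => by
      obtain ⟨w, hw, rfl⟩ := Multiset.mem_map.1 hzm
      have h := (hz n (p n) (hp n) w (Polynomial.isRoot_of_mem_roots hw)).1
      have e : w / ((π : ℂ) * (n : ℂ)) = w / (((π * n : ℝ)) : ℂ) := by push_cast; rfl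
      rw [e, Complex.div_ofReal_im]
      exact div_nonpos_of_nonpos_of_nonneg h (by positivity))
    (fun k => by
      have := orth_moment ν hν0 h1 p hp k
      simpa only [Multiset.map_map, Function.comp_def] using this)
    f f.continuous
  refine key.congr fun n => ?_
  simp only [av, hroots, Multiset.map_map, Function.comp_def]
  have e : ∀ z : ℂ, -Complex.I * z / ((π : ℂ) * (n : ℂ)) = z / (Complex.I * π * n) := by
    intro z
    rw [mul_assoc, ← div_div z, div_eq_mul_inv z Complex.I, Complex.inv_I]
    ring
  simp only [e]
end

section
/- Let 0 < ν < 1 and let n ∈ ℕ be such that Δ_n ≠ 0. Then the rescaled polynomial P̃_n(z) = (inπ)^{−n} P_n(inπz) is orthogonal on the real line with respect to the complex weight e^{−sgn(x)·νπi/2} K_ν(nπ|x|): for every j = 0,1,…,n−1, ∫_{−∞}^{∞} P̃_n(x) x^j e^{−sgn(x)·νπi/2} K_ν(nπ|x|) dx = 0, the integral being absolutely convergent. -/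
open MeasureTheory Filter Real

/-- The modified Bessel function of the second kind,
`K_ν(x) = ∫_0^∞ e^{-x cosh t} cosh(νt) dt` for `x > 0`. -/
noncomputable def besselK (ν x : ℝ) : ℝ :=
  ∫ t in Set.Ioi (0 : ℝ), Real.exp (-x * Real.cosh t) * Real.cosh (ν * t)


lemma sig_key (ν : ℝ) (m : ℕ) (t : ℝ) :
    |2 * (Real.sigmoid (2*t) * (1 - Real.sigmoid (2*t)))| •
      (((Real.sigmoid (2*t) : ℝ) : ℂ) ^ ((((m+1+ν)/2 : ℝ) : ℂ) - 1) *
        (1 - ((Real.sigmoid (2*t) : ℝ) : ℂ)) ^ ((((m+1-ν)/2 : ℝ) : ℂ) - 1))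
    = ((2 * (Real.exp (ν * t) / (2 * Real.cosh t) ^ (m+1)) : ℝ) : ℂ) := by
  have hc : 0 < 2 * Real.cosh t := by have := Real.cosh_pos t; positivity
  set c := 2 * Real.cosh t with hcdef
  have hc2 : c = Real.exp t + Real.exp (-t) := by rw [hcdef, Real.cosh_eq]; ring
  have hs : Real.sigmoid (2*t) = Real.exp t / c := by
    rw [Real.sigmoid_def, hc2, show -(2*t) = -t + -t by ring, Real.exp_add, Real.exp_neg]
    have := Real.exp_pos t
    field_simp
  have hs' : 1 - Real.sigmoid (2*t) = Real.exp (-t) / c := by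
    rw [hs]; field_simp; rw [hc2]; ring
  have hp : 0 < Real.exp t / c := by positivity
  have hq : 0 < Real.exp (-t) / c := by positivity
  have e1 : (1 - ((Real.sigmoid (2*t) : ℝ) : ℂ)) = ((Real.exp (-t) / c : ℝ) : ℂ) := by
    rw [← hs']; push_cast; ring
  rw [e1, hs', hs]
  rw [show ((((m+1+ν)/2 : ℝ) : ℂ) - 1) = (((m+1+ν)/2 - 1 : ℝ) : ℂ) by push_cast; ring,
    show ((((m+1-ν)/2 : ℝ) : ℂ) - 1) = (((m+1-ν)/2 - 1 : ℝ) : ℂ) by push_cast; ring,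
    ← Complex.ofReal_cpow hp.le, ← Complex.ofReal_cpow hq.le, abs_of_pos (by positivity),
    Complex.real_smul, ← Complex.ofReal_mul, ← Complex.ofReal_mul]
  congr 1
  rw [Real.rpow_sub_one hp.ne', Real.rpow_sub_one hq.ne']
  rw [show 2 * (Real.exp t / c * (Real.exp (-t) / c)) *
    ((Real.exp t / c) ^ ((m+1+ν)/2) / (Real.exp t / c) * 
     ((Real.exp (-t) / c) ^ ((m+1-ν)/2) / (Real.exp (-t) / c))) = 
     2 * ((Real.exp t / c) ^ ((m+1+ν)/2) * (Real.exp (-t) / c) ^ ((m+1-ν)/2)) by field_simp]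
  rw [Real.div_rpow (Real.exp_pos _).le hc.le, Real.div_rpow (Real.exp_pos _).le hc.le,
    ← Real.exp_mul, ← Real.exp_mul, div_mul_div_comm, ← Real.exp_add, ← Real.rpow_add hc,
    ← Real.rpow_natCast]
  congr 3 
  · ring_nf
  · push_cast; ring

lemma exp_cosh_int (ν : ℝ) (hν0 : -1 < ν) (hν : ν < 1) (m : ℕ) :
    Integrable (fun t : ℝ => Real.exp (ν * t) / (Real.cosh t) ^ (m+1)) ∧
    ∫ t : ℝ, Real.exp (ν * t) / (Real.cosh t) ^ (m+1) =
      2 ^ m * (Real.Gamma ((m+1+ν)/2) * Real.Gamma ((m+1-ν)/2) / m.factorial) := by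
  have ha : 0 < (m+1+ν)/2 := by have : (0:ℝ) ≤ m := m.cast_nonneg
                                linarith
  have hb : 0 < (m+1-ν)/2 := by have : (0:ℝ) ≤ m := m.cast_nonneg
                                linarith
  have himg : (fun t : ℝ => Real.sigmoid (2*t)) '' Set.univ = Set.Ioo 0 1 := by
    rw [← Real.range_sigmoid, Set.image_univ]
    exact (mul_left_surjective₀ (two_ne_zero' ℝ)).range_comp Real.sigmoid
  have hd : ∀ t ∈ (Set.univ : Set ℝ), HasDerivWithinAt (fun t : ℝ => Real.sigmoid (2*t))
      (2 * (Real.sigmoid (2*t) * (1 - Real.sigmoid (2*t)))) Set.univ t := by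
    intro t _
    have := (Real.hasDerivAt_sigmoid (2*t)).comp t ((hasDerivAt_id t).const_mul 2)
    refine HasDerivAt.hasDerivWithinAt ?_
    exact this.congr_deriv (by ring)
  have hinj : Set.InjOn (fun t : ℝ => Real.sigmoid (2*t)) Set.univ := by
    intro a _ b _ h
    have := Real.sigmoid_injective h
    linarith
  have hconv := Complex.betaIntegral_convergent (u := (((m+1+ν)/2 : ℝ) : ℂ))
    (v := (((m+1-ν)/2 : ℝ) : ℂ)) (by simpa using ha) (by simpa using hb)
  have hval := Complex.betaIntegral_eq_Gamma_mul_div (((m+1+ν)/2 : ℝ) : ℂ)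
    (((m+1-ν)/2 : ℝ) : ℂ) (by simpa using ha) (by simpa using hb)
  rw [intervalIntegrable_iff_integrableOn_Ioo_of_le zero_le_one, ← himg,
    integrableOn_image_iff_integrableOn_abs_deriv_smul MeasurableSet.univ hd hinj] at hconv
  rw [Complex.betaIntegral, intervalIntegral.integral_of_le zero_le_one,
    integral_Ioc_eq_integral_Ioo, ← himg,
    integral_image_eq_integral_abs_deriv_smul MeasurableSet.univ hd hinj] at hval
  simp only [sig_key, setIntegral_univ, integrableOn_univ] at hconv hval
  rw [integral_complex_ofReal, ← Complex.ofReal_add, Complex.Gamma_ofReal, Complex.Gamma_ofReal,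
    Complex.Gamma_ofReal, show (m+1+ν)/2 + (m+1-ν)/2 = (m:ℝ)+1 by ring,
    Real.Gamma_nat_eq_factorial] at hval
  have hfun : (fun t : ℝ => Real.exp (ν * t) / (Real.cosh t) ^ (m+1)) =
    fun t => 2^m * (2 * (Real.exp (ν * t) / (2 * Real.cosh t) ^ (m+1))) := by
    ext t
    have := Real.cosh_pos t
    rw [mul_pow]
    field_simp
    ring
  rw [hfun]
  refine ⟨?_, ?_⟩
  · have := hconv.re
    simp only [RCLike.re_to_complex, Complex.ofReal_re] at this
    exact this.const_mul _
  · rw [integral_const_mul]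
    congr 1
    exact_mod_cast hval

lemma cosh_cosh_int (ν : ℝ) (hν0 : -1 < ν) (hν : ν < 1) (m : ℕ) :
    Integrable (fun t : ℝ => Real.cosh (ν * t) / (Real.cosh t) ^ (m+1)) ∧
    ∫ t in Set.Ioi (0:ℝ), Real.cosh (ν * t) / (Real.cosh t) ^ (m+1) =
      2 ^ m * (Real.Gamma ((m+1+ν)/2) * Real.Gamma ((m+1-ν)/2) / m.factorial) / 2 := by
  obtain ⟨h1, e1⟩ := exp_cosh_int ν hν0 hν m
  obtain ⟨h2, e2⟩ := exp_cosh_int (-ν) (by linarith) (by linarith) m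
  have hfun : (fun t : ℝ => Real.cosh (ν * t) / (Real.cosh t) ^ (m+1)) =
    fun t => (Real.exp (ν * t) / (Real.cosh t) ^ (m+1) + 
      Real.exp (-ν * t) / (Real.cosh t) ^ (m+1)) / 2 := by
    ext t
    rw [Real.cosh_eq (ν * t)]
    ring_nf
  have hi : ∫ t : ℝ, Real.cosh (ν * t) / (Real.cosh t) ^ (m+1) = 
     2 ^ m * (Real.Gamma ((m+1+ν)/2) * Real.Gamma ((m+1-ν)/2) / m.factorial) := by
    rw [hfun, integral_div, integral_add h1 h2, e1, e2, sub_neg_eq_add, ← sub_eq_add_neg]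
    ring
  refine ⟨?_, ?_⟩
  · rw [hfun]; exact (h1.add h2).div_const 2
  · have := integral_comp_abs (f := fun t : ℝ => Real.cosh (ν * t) / (Real.cosh t) ^ (m+1))
    have h3 : (fun x : ℝ => Real.cosh (ν * |x|) / Real.cosh |x| ^ (m + 1)) = 
       fun t : ℝ => Real.cosh (ν * t) / (Real.cosh t) ^ (m+1) := by
      ext x
      rw [Real.cosh_abs, ← Real.cosh_abs (ν * |x|), abs_mul, abs_abs, ← abs_mul, Real.cosh_abs]
    simp only [h3] at this
    rw [hi] at this
    linarith

lemma pow_exp_int (m : ℕ) (c : ℝ) (hc : 0 < c) :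
    IntegrableOn (fun x : ℝ => x ^ m * Real.exp (-x * c)) (Set.Ioi 0) ∧
    ∫ x in Set.Ioi (0:ℝ), x ^ m * Real.exp (-x * c) = m.factorial / c ^ (m+1) := by
  have h := Real.integral_rpow_mul_exp_neg_mul_Ioi (a := m+1) (r := c) (by positivity) hc
  simp only [add_sub_cancel_right, Real.rpow_natCast, Real.Gamma_nat_eq_factorial] at h
  have e : (fun x : ℝ => x ^ m * Real.exp (-x * c)) = 
     fun x : ℝ => x ^ m * Real.exp (-(c*x)) := by ext x; ring_nf
  rw [e]
  have hv : ∫ x in Set.Ioi (0:ℝ), x ^ m * Real.exp (-(c*x)) = m.factorial / c ^ (m+1) := by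
    rw [h, show (m:ℝ)+1 = ((m+1 : ℕ):ℝ) by push_cast; ring, Real.rpow_natCast]
    rw [one_div, inv_pow]
    field_simp
  refine ⟨?_, hv⟩
  by_contra hn
  have h0 := integral_undef hn
  rw [hv] at h0
  have : (0:ℝ) < m.factorial / c ^ (m+1) := by positivity
  linarith

/-- Mellin transform of `K_ν`. -/
lemma mellin_K (ν : ℝ) (hν0 : -1 < ν) (hν : ν < 1) (m : ℕ) :
    IntegrableOn (fun x : ℝ => x ^ m * besselK ν x) (Set.Ioi 0) ∧
    ∫ x in Set.Ioi (0:ℝ), x ^ m * besselK ν x =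
      2 ^ m * (Real.Gamma ((m+1+ν)/2) * Real.Gamma ((m+1-ν)/2)) / 2 := by
  obtain ⟨h1, e1⟩ := cosh_cosh_int ν hν0 hν m
  set F : ℝ × ℝ → ℝ := fun p => p.1 ^ m * (Real.exp (-p.1 * Real.cosh p.2) * Real.cosh (ν * p.2))
    with hF
  set μ := (volume.restrict (Set.Ioi (0:ℝ)))
  have hsec : ∀ t : ℝ, (fun x : ℝ => F (x, t)) = fun x => 
      (x ^ m * Real.exp (-x * Real.cosh t)) * Real.cosh (ν * t) := by
    intro t; ext x; simp only [hF]; ring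
  have hint : ∀ t : ℝ, ∫ x, F (x, t) ∂μ = 
      m.factorial * (Real.cosh (ν * t) / (Real.cosh t) ^ (m+1)) := by
    intro t
    rw [hsec, integral_mul_const, (pow_exp_int m _ (Real.cosh_pos t)).2]; ring
  have hFi : Integrable F (μ.prod μ) := by
    rw [integrable_prod_iff']
    · refine ⟨Eventually.of_forall fun t => ?_, ?_⟩
      · rw [hsec]
        exact (pow_exp_int m _ (Real.cosh_pos t)).1.mul_const _
      · have : (fun t => ∫ x, ‖F (x, t)‖ ∂μ) = 
            fun t => m.factorial * (Real.cosh (ν * t) / (Real.cosh t) ^ (m+1)) := by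
          ext t
          rw [← hint]
          refine setIntegral_congr_fun measurableSet_Ioi fun x hx => ?_
          have hx : 0 < x := hx
          have := Real.cosh_pos (ν * t)
          simp only [hF]
          rw [Real.norm_of_nonneg (by positivity)]
        rw [this]
        exact (h1.const_mul _).integrableOn
    · refine Continuous.aestronglyMeasurable ?_
      fun_prop
  have hK : (fun x : ℝ => x ^ m * besselK ν x) = fun x => ∫ t, F (x, t) ∂μ := by
    ext x
    simp only [hF, besselK]
    rw [integral_const_mul]
  refine ⟨?_, ?_⟩
  · rw [hK]; exact hFi.integral_prod_left
  · rw [hK, integral_integral_swap hFi]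
    simp only [hint]
    rw [integral_const_mul, e1]
    field_simp

lemma moment_eq (ν : ℝ) (hν : ν < 1) (m : ℕ) :
    2 ^ m * (Real.Gamma ((m+1+ν)/2) * Real.Gamma ((m+1-ν)/2)) / 2 *
      (2 * Real.cos (π * (ν - m) / 2)) = π * besselMoment ν m := by
  have h := Real.Gamma_mul_Gamma_one_sub ((1 + ν - m) / 2)
  rw [show π * ((1 + ν - m) / 2) = π * (ν - m) / 2 + π / 2 by ring, Real.sin_add_pi_div_two,
    show 1 - (1 + ν - m) / 2 = (m+1-ν)/2 by ring] at h
  have hg : 0 < Real.Gamma ((m+1-ν)/2) := by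
    apply Real.Gamma_pos_of_pos
    have : (0:ℝ) ≤ m := m.cast_nonneg
    linarith
  rw [besselMoment, show (1 + ν + m) / 2 = (m+1+ν)/2 by ring]
  by_cases hc : Real.cos (π * (ν - m) / 2) = 0
  · rw [hc, div_zero] at h
    rcases mul_eq_zero.mp h with h | h
    · rw [hc, h]; simp
    · exact absurd h hg.ne'
  · have hpi := Real.pi_pos
    have hG : Real.Gamma ((1 + ν - m) / 2) ≠ 0 := by
      intro h0
      rw [h0, zero_mul] at h
      exact absurd h.symm (by positivity)
    rw [eq_div_iff hc] at h
    field_simp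
    linear_combination Real.Gamma ((m+1+ν)/2) * h

lemma phase_eq (ν : ℝ) (m : ℕ) :
    Complex.I ^ m * Complex.exp (-1 * ν * π * Complex.I / 2) +
      (-Complex.I) ^ m * Complex.exp (-(-1) * ν * π * Complex.I / 2) =
      ((2 * Real.cos (π * (ν - m) / 2) : ℝ) : ℂ) := by
  have hI : Complex.I ^ m = Complex.exp (m * (π / 2 * Complex.I)) := by
    rw [Complex.exp_nat_mul, Complex.exp_pi_div_two_mul_I]
  have hI' : (-Complex.I) ^ m = Complex.exp (m * (-π / 2 * Complex.I)) := by
    rw [Complex.exp_nat_mul, Complex.exp_neg_pi_div_two_mul_I]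
  rw [hI, hI', ← Complex.exp_add, ← Complex.exp_add]
  push_cast
  rw [Complex.cos]
  ring_nf

lemma weight_int (ν : ℝ) (hν0 : 0 < ν) (hν : ν < 1) (m : ℕ) :
    Integrable (fun x : ℝ => (Complex.I * x) ^ m *
      Complex.exp (-(Real.sign x : ℂ) * ν * π * Complex.I / 2) * (besselK ν |x| : ℂ)) ∧
    ∫ x : ℝ, (Complex.I * x) ^ m *
      Complex.exp (-(Real.sign x : ℂ) * ν * π * Complex.I / 2) * (besselK ν |x| : ℂ)
      = π * besselMoment ν m := by
  obtain ⟨h1, e1⟩ := mellin_K ν (by linarith) hν m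
  set W : ℝ → ℂ := fun x : ℝ => (Complex.I * x) ^ m *
      Complex.exp (-(Real.sign x : ℂ) * ν * π * Complex.I / 2) * (besselK ν |x| : ℂ) with hW
  set A := Complex.I ^ m * Complex.exp (-1 * ν * π * Complex.I / 2) with hA
  set B := (-Complex.I) ^ m * Complex.exp (-(-1) * ν * π * Complex.I / 2) with hB
  have hp : Set.EqOn W (fun x => A * ((x ^ m * besselK ν x : ℝ) : ℂ)) (Set.Ioi 0) := by
    intro x hx
    have hx : 0 < x := hx
    simp only [hW, hA, Real.sign_of_pos hx, abs_of_pos hx, mul_pow]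
    push_cast
    ring
  have hm : Set.EqOn (fun x => W (-x)) (fun x => B * ((x ^ m * besselK ν x : ℝ) : ℂ))
      (Set.Ioi 0) := by
    intro x hx
    have hx : 0 < x := hx
    simp only [hW, hB, Real.sign_of_neg (neg_neg_of_pos hx), abs_neg, abs_of_pos hx]
    push_cast
    rw [show Complex.I * -(x:ℂ) = -Complex.I * x by ring, mul_pow]
    ring
  have hc : IntegrableOn (fun x : ℝ => ((x ^ m * besselK ν x : ℝ) : ℂ)) (Set.Ioi 0) := h1.ofReal
  have hWp : IntegrableOn W (Set.Ioi 0) :=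
    (integrableOn_congr_fun hp measurableSet_Ioi).2 (hc.const_mul A)
  have hWm' : IntegrableOn (fun x => W (-x)) (Set.Ioi 0) :=
    (integrableOn_congr_fun hm measurableSet_Ioi).2 (hc.const_mul B)
  have hWm : IntegrableOn W (Set.Iic 0) := by
    rw [integrableOn_Iic_iff_integrableOn_Iio]
    have := (Measure.measurePreserving_neg (volume : Measure ℝ)).integrableOn_comp_preimage
      (Homeomorph.neg ℝ).isClosedEmbedding.measurableEmbedding (f := W) (s := Set.Iio 0)
    rw [← this]
    simpa [Function.comp_def] using hWm'
  refine ⟨?_, ?_⟩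
  · rw [← integrableOn_univ, ← Set.Iic_union_Ioi (a := (0:ℝ))]
    exact hWm.union hWp
  · have i1 : ∫ x in Set.Ioi (0:ℝ), W x = A * ((∫ x in Set.Ioi (0:ℝ), x ^ m * besselK ν x : ℝ) : ℂ) := by
      rw [setIntegral_congr_fun measurableSet_Ioi hp, integral_const_mul, integral_complex_ofReal]
    have i2 : ∫ x in Set.Iic (0:ℝ), W x = B * ((∫ x in Set.Ioi (0:ℝ), x ^ m * besselK ν x : ℝ) : ℂ) := by
      have := integral_comp_neg_Ioi 0 W
      rw [neg_zero] at this
      rw [← this, setIntegral_congr_fun measurableSet_Ioi hm, integral_const_mul,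
        integral_complex_ofReal]
    rw [← intervalIntegral.integral_Iic_add_Ioi hWm hWp, i1, i2, e1, ← add_mul, add_comm B A,
      hA, hB, phase_eq, ← Complex.ofReal_mul, ← Complex.ofReal_mul, ← moment_eq ν hν, mul_comm]

/-- **Proposition (orthogonality of the rescaled polynomials).**
For `0 < ν < 1` and `Δ_n ≠ 0`, the rescaled polynomial `P̃_n(z) = (inπ)^{-n} P_n(inπ z)`
satisfies `∫_{-∞}^∞ P̃_n(x) x^j e^{-sgn(x) νπi/2} K_ν(nπ|x|) dx = 0` for `j = 0, …, n-1`,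
the integral being absolutely convergent. -/
theorem rescaled_orthogonality (ν : ℝ) (hν0 : 0 < ν) (hν : ν < 1) (n : ℕ)
    (hΔ : hankelDet ν n ≠ 0) (P : Polynomial ℂ) (hP : IsBesselOP ν n P) :
    ∀ j < n,
      Integrable (fun x : ℝ =>
        ((Complex.I * n * π) ^ n)⁻¹ * P.eval (Complex.I * n * π * x) * (x : ℂ) ^ j *
          Complex.exp (-(Real.sign x : ℂ) * ν * π * Complex.I / 2) *
          (besselK ν (n * π * |x|) : ℂ)) ∧
      ∫ x : ℝ,
        ((Complex.I * n * π) ^ n)⁻¹ * P.eval (Complex.I * n * π * x) * (x : ℂ) ^ j *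
          Complex.exp (-(Real.sign x : ℂ) * ν * π * Complex.I / 2) *
          (besselK ν (n * π * |x|) : ℂ) = 0 := by
  obtain ⟨-, hdeg, horth⟩ := hP
  intro j hj
  have hn : 0 < n := by omega
  have ha : (0:ℝ) < n * π := by have := Real.pi_pos; positivity
  set W : ℕ → ℝ → ℂ := fun m x => (Complex.I * x) ^ m *
      Complex.exp (-(Real.sign x : ℂ) * ν * π * Complex.I / 2) * (besselK ν |x| : ℂ) with hW
  have hWi : ∀ m, Integrable (fun x => W m (n * π * x)) := fun m =>
    (weight_int ν hν0 hν m).1.comp_mul_left' ha.ne'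
  have hWe : ∀ m, ∫ x, W m (n * π * x) = ((n * π)⁻¹ * π : ℝ) * besselMoment ν m := by
    intro m
    rw [Measure.integral_comp_mul_left (W m), (weight_int ν hν0 hν m).2, abs_of_pos (by positivity),
      Complex.real_smul]
    push_cast
    ring
  have hI : (Complex.I * n * π : ℂ) ≠ 0 := by
    simp [Complex.I_ne_zero, hn.ne', Real.pi_ne_zero]
  have hfun : (fun x : ℝ =>
        ((Complex.I * n * π) ^ n)⁻¹ * P.eval (Complex.I * n * π * x) * (x : ℂ) ^ j *
          Complex.exp (-(Real.sign x : ℂ) * ν * π * Complex.I / 2) *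
          (besselK ν (n * π * |x|) : ℂ)) = fun x : ℝ =>
      (((Complex.I * n * π) ^ n)⁻¹ * ((Complex.I * n * π) ^ j)⁻¹) *
        ∑ k ∈ Finset.range (n + 1), P.coeff k * W (j + k) (n * π * x) := by
    ext x
    have hs : Real.sign (n * π * x) = Real.sign x := by
      rcases lt_trichotomy x 0 with h | h | h
      · rw [Real.sign_of_neg h, Real.sign_of_neg (mul_neg_of_pos_of_neg ha h)]
      · simp [h]
      · rw [Real.sign_of_pos h, Real.sign_of_pos (mul_pos ha h)]
    have hx : (x:ℂ) ^ j = ((Complex.I * n * π) ^ j)⁻¹ * (Complex.I * n * π * x) ^ j := by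
      rw [mul_pow _ (x:ℂ), inv_mul_cancel_left₀ (pow_ne_zero _ hI)]
    rw [Polynomial.eval_eq_sum_range, hdeg, hx]
    simp only [hW, hs, abs_mul, abs_of_pos ha]
    simp only [Finset.mul_sum, Finset.sum_mul]
    refine Finset.sum_congr rfl fun k _ => ?_
    push_cast
    rw [show Complex.I * (n * π * x) = Complex.I * n * π * (x:ℂ) by ring, pow_add]
    ring
  rw [hfun]
  have hki : ∀ k ∈ Finset.range (n+1), Integrable (fun x => P.coeff k * W (j + k) (n * π * x)) :=
    fun k _ => (hWi _).const_mul _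
  refine ⟨(integrable_finsetSum _ hki).const_mul _, ?_⟩
  rw [integral_const_mul, integral_finsetSum _ hki]
  simp only [integral_const_mul, hWe]
  have : ∑ k ∈ Finset.range (n + 1), P.coeff k * (((n * π)⁻¹ * π : ℝ) * (besselMoment ν (j + k) : ℂ))
     = ((n * π)⁻¹ * π : ℝ) * ∑ k ∈ Finset.range (n + 1), P.coeff k * (besselMoment ν (j + k) : ℂ) := by
    rw [Finset.mul_sum]
    exact Finset.sum_congr rfl fun k _ => by ring
  rw [this, horth j hj]
  simp
end

section
/- Let ν > 0. For every z ∈ ℂ with Re z > 0 and Im z > 0: (ν/4)·Log(((z²−1)^{1/2}−i)/((z²−1)^{1/2}+i)) = −(νπ/2)·ψ(z) − νπi/4, and for every z with Re z > 0 and Im z < 0: (ν/4)·Log(((z²−1)^{1/2}−i)/((z²−1)^{1/2}+i)) = (νπ/2)·ψ(z) − νπi/4, where Log is the principal logarithm. -/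
open Real

/-- `(z²-1)^{1/2} = z √(1 - z⁻²)`, the branch analytic on `ℂ∖[-1,1]` which is positive
for real `z > 1`. -/
noncomputable def sqBranch (z : ℂ) : ℂ := z * (1 - z⁻¹ ^ 2) ^ ((1 : ℂ) / 2)

/-- The analytic continuation `ψ(z) = (1/π) Log((1+(1-z²)^{1/2})/z)` of the equilibrium
density, with principal branches. -/
noncomputable def psiC (z : ℂ) : ℂ :=
  (1 / (π : ℂ)) * Complex.log ((1 + (1 - z ^ 2) ^ ((1 : ℂ) / 2)) / z)

theorem sqrt_facts (u : ℂ) (hu : u.im ≠ 0) :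
    (u ^ ((1 : ℂ) / 2)) ^ 2 = u ∧ 0 < (u ^ ((1 : ℂ) / 2)).re := by
  have hu0 : u ≠ 0 := by rintro rfl; simp at hu
  constructor
  · rw [← Complex.cpow_nat_mul]; norm_num
  · rw [Complex.cpow_def_of_ne_zero hu0, Complex.exp_re]
    apply mul_pos (Real.exp_pos _)
    have h : (Complex.log u * (1 / 2)).im = u.arg / 2 := by
      have : Complex.log u * (1 / 2) = Complex.log u * ((1 / 2 : ℝ) : ℂ) := by norm_num
      rw [this, Complex.im_mul_ofReal, Complex.log_im]; ring
    rw [h]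
    have h1 := Complex.neg_pi_lt_arg u
    have h2 := Complex.arg_le_pi u
    have h3 : u.arg ≠ π := by
      intro h; rw [Complex.arg_eq_pi_iff] at h; exact hu h.2
    have h4 := lt_of_le_of_ne h2 h3
    apply Real.cos_pos_of_mem_Ioo
    constructor <;> linarith

theorem sq_im' (c : ℂ) : (c ^ 2).im = 2 * c.re * c.im := by
  rw [pow_two, Complex.mul_im]; ring

theorem log_aux (y p : ℂ) (hy : Complex.exp y = p) (h1 : -π < y.im) (h2 : y.im ≤ π) :
    Complex.log p = y := by
  rw [← hy, Complex.log_exp h1 h2]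

theorem exp_neg_pi : Complex.exp (-(π * Complex.I)) = -1 := by
  rw [Complex.exp_neg, Complex.exp_pi_mul_I]; norm_num

theorem inv_sq_im (z : ℂ) (hz : z ≠ 0) :
    ∃ k : ℝ, 0 < k ∧ (1 - z⁻¹ ^ 2).im = k * (z.re * z.im) := by
  have hn : 0 < Complex.normSq z := Complex.normSq_pos.mpr hz
  refine ⟨2 / (Complex.normSq z) ^ 2, by positivity, ?_⟩
  rw [Complex.sub_im, sq_im', Complex.inv_re, Complex.inv_im, Complex.one_im]
  field_simp
  ring

theorem q_im (s z : ℂ) (hz : z ≠ 0) :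
    ∃ k : ℝ, 0 < k ∧ ((1 + s) / z).im = k * (s.im * z.re - (1 + s.re) * z.im) := by
  have hn : 0 < Complex.normSq z := Complex.normSq_pos.mpr hz
  refine ⟨1 / (Complex.normSq z), by positivity, ?_⟩
  rw [Complex.div_im]
  simp
  field_simp

/-- **Lemma (the second Szegő function and `ψ`).**
For `ν > 0` and `Re z > 0`:
`(ν/4) Log(((z²-1)^{1/2}-i)/((z²-1)^{1/2}+i)) = ∓(νπ/2) ψ(z) - νπi/4` according to
whether `Im z > 0` or `Im z < 0`. -/
theorem logD2_eq_psi (ν : ℝ) (hν : 0 < ν) (z : ℂ) (hre : 0 < z.re) :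
    (0 < z.im →
      ((ν : ℂ) / 4) * Complex.log ((sqBranch z - Complex.I) / (sqBranch z + Complex.I)) =
        -(((ν : ℂ) * π / 2) * psiC z) - (ν : ℂ) * π * Complex.I / 4) ∧
    (z.im < 0 →
      ((ν : ℂ) / 4) * Complex.log ((sqBranch z - Complex.I) / (sqBranch z + Complex.I)) =
        ((ν : ℂ) * π / 2) * psiC z - (ν : ℂ) * π * Complex.I / 4) := by
  have hz : z ≠ 0 := by rintro rfl; simp at hre
  have hpi : (π : ℂ) ≠ 0 := by exact_mod_cast Real.pi_ne_zero
  obtain ⟨k, hk, hki⟩ := inv_sq_im z hz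
  have him1 : (1 - z ^ 2).im = -(2 * z.re * z.im) := by
    rw [Complex.sub_im, sq_im', Complex.one_im]; ring
  have main : z.im ≠ 0 → ∃ s t : ℂ, (1 - z ^ 2) ^ ((1 : ℂ) / 2) = s ∧ sqBranch z = z * t ∧
      s ^ 2 = 1 - z ^ 2 ∧ 0 < s.re ∧ 0 < t.re ∧ (z * t) ^ 2 = z ^ 2 - 1 ∧
      2 * s.re * s.im = -(2 * z.re * z.im) ∧ 2 * t.re * t.im = k * (z.re * z.im) := by
    intro hzi
    have a1 : (1 - z ^ 2).im ≠ 0 := by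
      rw [him1]; have := mul_ne_zero hre.ne' hzi; intro h; apply this; linarith
    have a2 : (1 - z⁻¹ ^ 2).im ≠ 0 := by
      rw [hki]; exact mul_ne_zero hk.ne' (mul_ne_zero hre.ne' hzi)
    obtain ⟨b1, b2⟩ := sqrt_facts _ a1
    obtain ⟨c1, c2⟩ := sqrt_facts _ a2
    refine ⟨_, _, rfl, rfl, b1, b2, c2, ?_, ?_, ?_⟩
    · rw [mul_pow, c1]; field_simp
    · rw [← sq_im', b1, him1]
    · rw [← sq_im', c1, hki]
  constructor
  · intro hzi
    obtain ⟨s, t, hs, ht, hs2, hsr, htr, hw, hsi, hti⟩ := main hzi.ne'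
    have hp := mul_pos hre hzi
    have hsi' : s.im < 0 := by
      by_contra! h; nlinarith [mul_nonneg hsr.le h]
    have hti' : 0 < t.im := by
      by_contra! h; nlinarith [mul_nonneg htr.le (neg_nonneg.mpr h), mul_pos hk hp]
    have hwi : z * t = Complex.I * s := by
      have : (z * t) ^ 2 = (Complex.I * s) ^ 2 := by
        rw [hw, mul_pow, Complex.I_sq, hs2]; ring
      rcases sq_eq_sq_iff_eq_or_eq_neg.mp this with h | h
      · exact h
      · have h' := congrArg Complex.im h
        simp at h'
        nlinarith [mul_pos hre hti', mul_pos hzi htr]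
    have hs1 : s + 1 ≠ 0 := by
      intro h; have := congrArg Complex.re h; simp at this; linarith
    have hq0 : (1 + s) / z ≠ 0 := div_ne_zero (by rwa [add_comm]) hz
    obtain ⟨m, hm, hqi⟩ := q_im s z hz
    have hqneg : ((1 + s) / z).im < 0 := by
      rw [hqi]
      apply mul_neg_of_pos_of_neg hm
      nlinarith [mul_pos hsr hzi, mul_pos (neg_pos.mpr hsi') hre]
    have harg := Complex.arg_neg_iff.mpr hqneg
    have harg' := Complex.neg_pi_lt_arg ((1 + s) / z)
    have hfrac : (z * t - Complex.I) / (z * t + Complex.I) = (s - 1) / (s + 1) := by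
      rw [hwi, show Complex.I * s - Complex.I = Complex.I * (s - 1) by ring,
        show Complex.I * s + Complex.I = Complex.I * (s + 1) by ring,
        mul_div_mul_left _ _ Complex.I_ne_zero]
    have hlog : Complex.log ((s - 1) / (s + 1)) =
        -(2 * Complex.log ((1 + s) / z)) + -(π * Complex.I) := by
      apply log_aux
      · rw [Complex.exp_add, exp_neg_pi, Complex.exp_neg, two_mul, Complex.exp_add,
          Complex.exp_log hq0]
        have : 1 + s ≠ 0 := by rwa [add_comm]
        field_simp
        linear_combination (-1 : ℂ) * (1 + s) * hs2
      · simp [Complex.log_im]; linarith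
      · simp [Complex.log_im]; linarith
    rw [psiC, hs, ht, hfrac, hlog]
    field_simp
    ring
  · intro hzi
    obtain ⟨s, t, hs, ht, hs2, hsr, htr, hw, hsi, hti⟩ := main hzi.ne
    have hp := mul_pos hre (neg_pos.mpr hzi)
    have hsi' : 0 < s.im := by
      by_contra! h; nlinarith [mul_nonneg hsr.le (neg_nonneg.mpr h)]
    have hti' : t.im < 0 := by
      by_contra! h; nlinarith [mul_nonneg htr.le h, mul_pos hk hp]
    have hwi : z * t = -(Complex.I * s) := by
      have : (z * t) ^ 2 = (Complex.I * s) ^ 2 := by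
        rw [hw, mul_pow, Complex.I_sq, hs2]; ring
      rcases sq_eq_sq_iff_eq_or_eq_neg.mp this with h | h
      · have h' := congrArg Complex.im h
        simp at h'
        nlinarith [mul_pos hre (neg_pos.mpr hti'), mul_pos (neg_pos.mpr hzi) htr]
      · exact h
    have hs1 : 1 + s ≠ 0 := by
      intro h; have := congrArg Complex.re h; simp at this; linarith
    have hs1' : s - 1 ≠ 0 := by
      intro h; have := congrArg Complex.im h; simp at this; linarith
    have hq0 : (1 + s) / z ≠ 0 := div_ne_zero hs1 hz
    obtain ⟨m, hm, hqi⟩ := q_im s z hz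
    have hqpos : 0 < ((1 + s) / z).im := by
      rw [hqi]
      apply mul_pos hm
      nlinarith [mul_pos hsr (neg_pos.mpr hzi), mul_pos hsi' hre]
    have harg : 0 < ((1 + s) / z).arg := by
      refine lt_of_le_of_ne (Complex.arg_nonneg_iff.mpr hqpos.le) ?_
      intro h
      have := Complex.arg_eq_zero_iff.mp h.symm
      linarith [this.2]
    have harg' := Complex.arg_le_pi ((1 + s) / z)
    have hfrac : (z * t - Complex.I) / (z * t + Complex.I) = (s + 1) / (s - 1) := by
      rw [hwi, show -(Complex.I * s) - Complex.I = (-Complex.I) * (s + 1) by ring,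
        show -(Complex.I * s) + Complex.I = (-Complex.I) * (s - 1) by ring,
        mul_div_mul_left _ _ (neg_ne_zero.mpr Complex.I_ne_zero)]
    have hlog : Complex.log ((s + 1) / (s - 1)) =
        2 * Complex.log ((1 + s) / z) + -(π * Complex.I) := by
      apply log_aux
      · rw [Complex.exp_add, exp_neg_pi, two_mul, Complex.exp_add,
          Complex.exp_log hq0]
        field_simp
        linear_combination (-1 : ℂ) * (1 + s) * hs2
      · simp [Complex.log_im]; linarith
      · simp [Complex.log_im]; linarith
    rw [psiC, hs, ht, hfrac, hlog]
    field_simp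
    ring
end
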